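/- Let F be a field of characteristic not p and A a set of central division F-algebras of degree p. Then there exists a field extension F_A/F such that: (1) the restriction Br(F)[p] → Br(F_A)[p] is injective; and (2) for any two algebras D, D' ∈ A, the central division F_A-algebras underlying D ⊗_F F_A and D' ⊗_F F_A have exactly the same maximal subfields, i.e., the same genus. -/

import Mathlib

open scoped TensorProduct
universe u

/-- A finite-dimensional `F`-algebra is *split* if it is a matrix algebra over `F`. -/
def IsSplit (F : Type u) [Field F] (A : Type u) [Ring A] [Algebra F A] : Prop :=
  ∃ n : ℕ, 0 < n ∧ Nonempty (A ≃ₐ[F] Matrix (Fin n) (Fin n) F)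

/-- Brauer equivalence of two `F`-algebras. -/
def BrauerEquiv (F : Type u) [Field F] (A B : Type u) [Ring A] [Algebra F A]
    [Ring B] [Algebra F B] : Prop :=
  ∃ n m : ℕ, 0 < n ∧ 0 < m ∧ Nonempty (Matrix (Fin n) (Fin n) A ≃ₐ[F] Matrix (Fin m) (Fin m) B)

/-- `A` is a finite-dimensional central simple `F`-algebra. -/
def IsCSA (F A : Type u) [Field F] [Ring A] [Algebra F A] : Prop :=
  Algebra.IsCentral F A ∧ IsSimpleRing A ∧ FiniteDimensional F A

/-- The `n`-fold tensor power of an `F`-algebra. -/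
abbrev tpow (F : Type u) [Field F] (A : Type u) [Ring A] [Algebra F A] (n : ℕ) : Type u :=
  ⨂[F] _ : Fin n, A

/-- The Brauer class of `A` is killed by `p`: its `p`-th tensor power is split. -/
def IsPTorsion (F : Type u) [Field F] (A : Type u) [Ring A] [Algebra F A] (p : ℕ) : Prop :=
  IsSplit F (tpow F A p)

/-- The restriction map `Br(F)[p] → Br(E)[p]` along `f : F →+* E` is injective:
two `p`-torsion Brauer classes that agree after scalar extension agree already over `F`. -/
def ResInjP (p : ℕ) (F E : Type u) [Field F] [Field E] (f : F →+* E) : Prop :=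
  letI : Algebra F E := f.toAlgebra
  ∀ (A B : Type u) [Ring A] [Algebra F A] [Ring B] [Algebra F B],
    IsCSA F A → IsCSA F B → IsPTorsion F A p → IsPTorsion F B p →
    BrauerEquiv E (E ⊗[F] A) (E ⊗[F] B) → BrauerEquiv F A B

/-- The restriction map `Br(F) → Br(E)` along `f : F →+* E` is injective. -/
def ResInj (F E : Type u) [Field F] [Field E] (f : F →+* E) : Prop :=
  letI : Algebra F E := f.toAlgebra
  ∀ (A B : Type u) [Ring A] [Algebra F A] [Ring B] [Algebra F B],
    IsCSA F A → IsCSA F B →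
    BrauerEquiv E (E ⊗[F] A) (E ⊗[F] B) → BrauerEquiv F A B

/-- `D` is a central division algebra of degree `p` over `K`. -/
def IsCentralDivisionOfDeg (K D : Type u) [Field K] [DivisionRing D] [Algebra K D]
    (p : ℕ) : Prop :=
  Algebra.IsCentral K D ∧ FiniteDimensional K D ∧ Module.finrank K D = p ^ 2

/-- Witness for STATEMENT 10: a field extension `E = F_A` of `F` with injective restriction
on `p`-torsion Brauer classes such that all the base-changed algebras `(D i) ⊗_F E` have the
same maximal subfields: a degree-`p` extension of `E` embeds into one iff into any other. -/
structure GenusMergingExtension (p : ℕ) (F : Type u) [Field F] {ι : Type u}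
    (D : ι → Type u) [∀ i, DivisionRing (D i)] [∀ i, Algebra F (D i)] : Type (u + 1) where
  E : Type u
  [fieldE : Field E]
  [algFE : Algebra F E]
  resInj : ResInjP p F E (algebraMap F E)
  sameMaxSubfields : ∀ i i' : ι, ∀ (L : Type u) [Field L] [Algebra E L],
    Module.finrank E L = p →
    (Nonempty (L →ₐ[E] (E ⊗[F] D i)) ↔ Nonempty (L →ₐ[E] (E ⊗[F] D i')))

namespace GM

section simple
variable {F A B : Type*} [Field F] [Ring A] [Algebra F A] [Ring B] [Algebra F B]

/-- The tensor product of a simple algebra and a central simple algebra is simple. -/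
theorem isSimpleRing_tensor [IsSimpleRing A] [IsSimpleRing B] [Algebra.IsCentral F B] :
    IsSimpleRing (A ⊗[F] B) := by
  classical
  let ba := Module.Free.chooseBasis F A
  let φ := TensorProduct.equivFinsuppOfBasisLeft (N := B) ba
  have φL : ∀ (w : A ⊗[F] B) (x : B) i, φ ((1 ⊗ₜ x) * w) i = x * φ w i := by
    intro w x i
    induction w with
    | zero => simp
    | add y z hy hz => simp [mul_add, hy, hz]
    | tmul a b => simp [φ, TensorProduct.equivFinsuppOfBasisLeft_apply_tmul]
  have φR : ∀ (w : A ⊗[F] B) (x : B) i, φ (w * (1 ⊗ₜ x)) i = φ w i * x := by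
    intro w x i
    induction w with
    | zero => simp
    | add y z hy hz => simp [add_mul, hy, hz]
    | tmul a b => simp [φ, TensorProduct.equivFinsuppOfBasisLeft_apply_tmul]
  have key : ∀ I : TwoSidedIdeal (A ⊗[F] B), I ≠ ⊥ → I = ⊤ := by
    intro I hI
    have hne : ∃ w, w ∈ I ∧ w ≠ 0 := by
      by_contra! h
      apply hI
      rw [eq_bot_iff]
      intro x hx
      simpa using h x hx
    obtain ⟨w, ⟨hwI, hw0⟩, hmin⟩ := WellFounded.has_min
      (measure (fun w : A ⊗[F] B => (φ w).support.card)).wf {w | w ∈ I ∧ w ≠ 0} hne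
    have hφw : φ w ≠ 0 := by simpa using hw0
    obtain ⟨i0, hi0⟩ : ∃ i, φ w i ≠ 0 := by
      by_contra! h; exact hφw (Finsupp.ext h)
    let J : TwoSidedIdeal B := TwoSidedIdeal.mk'
      {b | ∃ v ∈ I, (φ v).support ⊆ (φ w).support ∧ φ v i0 = b}
      ⟨0, I.zero_mem, by simp, by simp⟩
      (by
        rintro x y ⟨v, hv, hs, rfl⟩ ⟨v', hv', hs', rfl⟩
        refine ⟨v + v', I.add_mem hv hv', ?_, by simp⟩
        rw [map_add]
        exact Finsupp.support_add.trans (Finset.union_subset hs hs'))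
      (by
        rintro x ⟨v, hv, hs, rfl⟩
        exact ⟨-v, I.neg_mem hv, by simpa using hs, by simp⟩)
      (by
        rintro x y ⟨v, hv, hs, rfl⟩
        refine ⟨(1 ⊗ₜ x) * v, I.mul_mem_left _ _ hv, ?_, by rw [φL]⟩
        intro i hi
        apply hs
        simp only [Finsupp.mem_support_iff, φL] at hi ⊢
        exact right_ne_zero_of_mul hi)
      (by
        rintro x y ⟨v, hv, hs, rfl⟩
        refine ⟨v * (1 ⊗ₜ y), I.mul_mem_right _ _ hv, ?_, by rw [φR]⟩
        intro i hi
        apply hs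
        simp only [Finsupp.mem_support_iff, φR] at hi ⊢
        exact left_ne_zero_of_mul hi)
    have hJ : J = ⊤ := by
      rcases eq_bot_or_eq_top J with h | h
      · exfalso
        have : φ w i0 ∈ J := by
          rw [TwoSidedIdeal.mem_mk']
          exact ⟨w, hwI, subset_rfl, rfl⟩
        rw [h] at this
        exact hi0 (by simpa using this)
      · exact h
    have h1 : (1 : B) ∈ J := by rw [hJ]; trivial
    rw [TwoSidedIdeal.mem_mk'] at h1
    obtain ⟨v, hv, hs, h1⟩ := h1
    have hcomm : ∀ y : B, (1 ⊗ₜ y) * v - v * (1 ⊗ₜ y) = 0 := by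
      intro y
      by_contra hne
      refine hmin ((1 ⊗ₜ y) * v - v * (1 ⊗ₜ y))
        ⟨I.sub_mem (I.mul_mem_left _ _ hv) (I.mul_mem_right _ _ hv), hne⟩ ?_
      apply Finset.card_lt_card
      rw [Finset.ssubset_iff_of_subset]
      · refine ⟨i0, by simpa using hi0, ?_⟩
        simp [φL, φR, h1]
      · intro i hi
        apply hs
        simp only [Finsupp.mem_support_iff, φL, φR, map_sub, Finsupp.sub_apply] at hi ⊢
        intro h0
        simp [h0] at hi
    have hcen : ∀ i, ∃ r : F, algebraMap F B r = φ v i := by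
      intro i
      have : φ v i ∈ Subalgebra.center F B := by
        rw [Subalgebra.mem_center_iff]
        intro y
        have := congrArg (fun t => φ t i) (hcomm y)
        simpa [φL, φR, sub_eq_zero] using this
      exact (Algebra.IsCentral.mem_center_iff F).1 this |>.imp fun _ h => h.symm
    choose r hr using hcen
    have hv0 : v ≠ 0 := by
      rintro rfl
      simp at h1
    have hva : ∃ a : A, v = a ⊗ₜ 1 := by
      refine ⟨∑ i ∈ (φ v).support, r i • ba i, ?_⟩
      apply φ.injective
      ext i
      have : ∀ (a : A) (b : B), φ (a ⊗ₜ b) i = ba.repr a i • b := by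
        intro a b
        simp [φ, TensorProduct.equivFinsuppOfBasisLeft_apply_tmul]
      rw [this]
      simp only [map_sum, map_smul, Module.Basis.repr_self, Finsupp.finsetSum_apply,
        Finsupp.smul_apply, Finsupp.single_apply, smul_eq_mul, mul_ite, mul_one, mul_zero,
        Finset.sum_ite_eq', Finsupp.mem_support_iff]
      split_ifs with h
      · rw [← hr, Algebra.algebraMap_eq_smul_one]
      · simpa using h
    obtain ⟨a, rfl⟩ := hva
    let J' : TwoSidedIdeal A := I.comap (Algebra.TensorProduct.includeLeft : A →ₐ[F] A ⊗[F] B)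
    have hJ' : J' = ⊤ := by
      rcases eq_bot_or_eq_top J' with h | h
      · exfalso
        have : a ∈ J' := by
          rw [TwoSidedIdeal.mem_comap]
          exact hv
        rw [h] at this
        have : a = 0 := by simpa using this
        simp [this] at hv0
      · exact h
    have : (1 : A) ∈ J' := by rw [hJ']; trivial
    rw [TwoSidedIdeal.mem_comap] at this
    rw [eq_top_iff]
    intro x _
    have h2 := I.mul_mem_left x _ this
    simpa [← Algebra.TensorProduct.one_def] using h2
  have hnt : Nontrivial (A ⊗[F] B) := by
    have : Function.Injective (Algebra.TensorProduct.includeLeft : A →ₐ[F] A ⊗[F] B) :=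
      Algebra.TensorProduct.includeLeft_injective (FaithfulSMul.algebraMap_injective F B)
    exact this.nontrivial
  refine ⟨⟨fun I => ?_⟩⟩
  by_cases h : I = ⊥
  · exact Or.inl h
  · exact Or.inr (key I h)
end simple
end GM

namespace GM

section rep
variable {F C K : Type*} [Field F] [Ring C] [Algebra F C] [Field K] [Algebra F K]
  {m : Type*} [Fintype m] [DecidableEq m]

/-- The `K`-linear extension of a matrix representation. -/
noncomputable def extRep (ρ : C →ₐ[F] Matrix m m K) : K ⊗[F] C →ₐ[K] Matrix m m K :=
  Algebra.TensorProduct.lift (Algebra.ofId K _) ρ (fun k c => Algebra.commutes k (ρ c))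

@[simp] theorem extRep_tmul (ρ : C →ₐ[F] Matrix m m K) (k : K) (c : C) :
    extRep ρ (k ⊗ₜ c) = k • ρ c := by
  rw [Algebra.smul_def]
  exact Algebra.TensorProduct.lift_tmul _ _ _ k c

variable [IsSimpleRing C] [Algebra.IsCentral F C] [FiniteDimensional F C]

theorem extRep_bijective [Nonempty m] (hC : Module.finrank F C = Fintype.card m ^ 2)
    (ρ : C →ₐ[F] Matrix m m K) : Function.Bijective (extRep ρ) := by
  have := isSimpleRing_tensor (F := F) (A := K) (B := C)
  have hinj : Function.Injective (extRep ρ) := (extRep ρ).toRingHom.injective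
  refine ⟨hinj, ?_⟩
  have hd : Module.finrank K (K ⊗[F] C) = Module.finrank K (Matrix m m K) := by
    rw [Module.finrank_baseChange, hC, Module.finrank_matrix]
    simp [sq]
  exact (LinearMap.injective_iff_surjective_of_finrank_eq_finrank hd
    (f := (extRep ρ).toLinearMap)).1 hinj

theorem rep_commutant [Nonempty m] (hC : Module.finrank F C = Fintype.card m ^ 2)
    (ρ : C →ₐ[F] Matrix m m K) (x : Matrix m m K) (hx : ∀ c, ρ c * x = x * ρ c) :
    ∃ k : K, x = algebraMap K _ k := by
  have hall : ∀ y : Matrix m m K, y * x = x * y := by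
    intro y
    obtain ⟨z, rfl⟩ := (extRep_bijective hC ρ).2 y
    induction z with
    | zero => simp
    | add a b ha hb => simp [add_mul, mul_add, ha, hb]
    | tmul k c => simp [hx c]
  have : x ∈ Subalgebra.center K (Matrix m m K) := by
    rw [Subalgebra.mem_center_iff]; exact hall
  exact (Algebra.IsCentral.mem_center_iff K).1 this

theorem matrix_inner (f : Matrix m m K ≃ₐ[K] Matrix m m K) :
    ∃ g : GL m K, ∀ x, f x = g.1 * x * g⁻¹.1 := by
  let e := Matrix.toLinAlgEquiv' (R := K) (n := m)
  obtain ⟨T, hT⟩ := ((e.symm.trans f).trans e).eq_linearEquivConjAlgEquiv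
  have h1 : LinearMap.toMatrixAlgEquiv' T.toLinearMap *
      LinearMap.toMatrixAlgEquiv' T.symm.toLinearMap = (1 : Matrix m m K) := by
    rw [← map_mul, ← map_one LinearMap.toMatrixAlgEquiv']
    congr 1; ext; simp
  have h2 : LinearMap.toMatrixAlgEquiv' T.symm.toLinearMap *
      LinearMap.toMatrixAlgEquiv' T.toLinearMap = (1 : Matrix m m K) := by
    rw [← map_mul, ← map_one LinearMap.toMatrixAlgEquiv']
    congr 1; ext; simp
  refine ⟨⟨_, _, h1, h2⟩, fun x => ?_⟩
  apply e.injective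
  have := congrArg (fun t => t (e x)) hT
  simp only [AlgEquiv.trans_apply, AlgEquiv.symm_apply_apply] at this
  rw [this]
  simp only [map_mul, e, Matrix.toLinAlgEquiv'_toMatrixAlgEquiv', Units.inv_mk]
  ext; simp

theorem rep_conj [Nonempty m] (hC : Module.finrank F C = Fintype.card m ^ 2)
    (ρ ρ' : C →ₐ[F] Matrix m m K) : ∃ g : GL m K, ∀ c, ρ c * g.1 = g.1 * ρ' c := by
  let e := AlgEquiv.ofBijective _ (extRep_bijective hC ρ)
  let e' := AlgEquiv.ofBijective _ (extRep_bijective hC ρ')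
  obtain ⟨g, hg⟩ := matrix_inner (e'.symm.trans e)
  refine ⟨g, fun c => ?_⟩
  have h := hg (ρ' c)
  have h1 : e'.symm (ρ' c) = 1 ⊗ₜ c := by
    rw [AlgEquiv.symm_apply_eq]
    simp [e']
  have h2 : e (1 ⊗ₜ c) = ρ c := by simp [e]
  rw [AlgEquiv.trans_apply, h1, h2] at h
  rw [h, mul_assoc, mul_assoc, ← Units.val_mul]
  simp
end rep
end GM

namespace GM

section cn
variable {R : Type*} [Monoid R]

/-- The twisted norm `g * τ g * τ² g * ⋯` (with `i` factors). -/
def cn (τ : R →* R) (g : R) : ℕ → R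
  | 0 => 1
  | i + 1 => g * τ (cn τ g i)

@[simp] theorem cn_zero (τ : R →* R) (g : R) : cn τ g 0 = 1 := rfl
theorem cn_succ (τ : R →* R) (g : R) (i : ℕ) : cn τ g (i + 1) = g * τ (cn τ g i) := rfl

theorem cn_succ' (τ : R →* R) (g : R) (i : ℕ) : cn τ g (i + 1) = cn τ g i * τ^[i] g := by
  induction i with
  | zero => simp [cn_succ]
  | succ i ih =>
    calc cn τ g (i + 1 + 1) = g * τ (cn τ g (i + 1)) := rfl
      _ = g * τ (cn τ g i * τ^[i] g) := by rw [← ih]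
      _ = cn τ g (i + 1) * τ^[i + 1] g := by
        rw [map_mul, Function.iterate_succ_apply', cn_succ, mul_assoc]

theorem cn_map {S : Type*} [Monoid S] (τ : R →* R) (τ' : S →* S) (φ : R →* S)
    (h : ∀ x, φ (τ x) = τ' (φ x)) (g : R) (i : ℕ) : φ (cn τ g i) = cn τ' (φ g) i := by
  induction i with
  | zero => simp
  | succ i ih => rw [cn_succ, cn_succ, map_mul, h, ih]

theorem cn_intertwine (τ : R →* R) (g h Q : R) (hq : g * τ Q = Q * h) (i : ℕ) :
    cn τ g i * τ^[i] Q = Q * cn τ h i := by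
  induction i with
  | zero => simp
  | succ i ih =>
    rw [cn_succ, cn_succ, Function.iterate_succ_apply', mul_assoc, ← map_mul, ih, map_mul,
      ← mul_assoc, hq, mul_assoc]

theorem cn_mul_of_central (τ : R →* R) (a g : R) (hz : ∀ j r, Commute (τ (cn τ a j)) r)
    (i : ℕ) : cn τ (a * g) i = cn τ a i * cn τ g i := by
  induction i with
  | zero => simp
  | succ i ih =>
    have h1 : g * τ (cn τ a i) = τ (cn τ a i) * g := (hz i g).eq.symm
    rw [cn_succ, cn_succ, cn_succ, ih, map_mul, mul_assoc, ← mul_assoc g, h1]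
    simp only [mul_assoc]

theorem cn_mul {R : Type*} [CommMonoid R] (τ : R →* R) (a g : R) (i : ℕ) :
    cn τ (a * g) i = cn τ a i * cn τ g i := by
  induction i with
  | zero => simp
  | succ i ih =>
    rw [cn_succ, cn_succ, cn_succ, ih, map_mul]
    exact mul_mul_mul_comm _ _ _ _

theorem cn_fixed {R : Type*} [CommMonoid R] (τ : R →* R) (a : R) (ha : τ a = a) (i : ℕ) :
    cn τ a i = a ^ i := by
  induction i with
  | zero => simp
  | succ i ih => rw [cn_succ, ih, map_pow, ha, pow_succ']

end cn

section tw
variable {F M : Type*} [Field F] [Field M] [Algebra F M] {m : Type*} [Fintype m] [DecidableEq m]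

/-- entrywise action of an automorphism on matrices -/
def tw (σ : M ≃ₐ[F] M) : Matrix m m M →* Matrix m m M :=
  ((σ : M →+* M).mapMatrix : Matrix m m M →+* Matrix m m M)

theorem tw_apply (σ : M ≃ₐ[F] M) (X : Matrix m m M) : tw σ X = X.map σ := rfl
@[simp] theorem tw_app (σ : M ≃ₐ[F] M) (X : Matrix m m M) (i j : m) : tw σ X i j = σ (X i j) := rfl

theorem tw_iter (σ : M ≃ₐ[F] M) (X : Matrix m m M) (n : ℕ) :
    (tw σ)^[n] X = X.map (σ ^ n : M ≃ₐ[F] M) := by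
  induction n with
  | zero => ext; simp
  | succ n ih => 
    rw [Function.iterate_succ_apply', ih]
    ext i j; simp [pow_succ']

theorem tw_algebraMap (σ : M ≃ₐ[F] M) (a : M) :
    tw σ (algebraMap M (Matrix m m M) a) = algebraMap M (Matrix m m M) (σ a) := by
  ext i j
  simp only [tw_app, Matrix.algebraMap_matrix_apply]
  split_ifs <;> simp

theorem cn_algebraMap (σ : M ≃ₐ[F] M) (a : M) (i : ℕ) :
    cn (tw σ) (algebraMap M (Matrix m m M) a) i
      = algebraMap M (Matrix m m M) (cn (σ : M →* M) a i) := by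
  induction i with
  | zero => simp
  | succ i ih => rw [cn_succ, cn_succ, ih, tw_algebraMap, map_mul]; rfl

theorem h90 (σ : M ≃ₐ[F] M) (q : ℕ) (hq : 0 < q) (hσ : σ ^ q = 1)
    (hd : ∀ i < q, ∀ j < q, σ ^ i = σ ^ j → i = j) (g : Matrix m m M)
    (hg : cn (tw σ) g q = 1) : ∃ P : GL m M, g * tw σ P.1 = P.1 := by
  classical
  let N : ℕ → Matrix m m M := cn (tw σ) g
  let E : M → (m → M) → (m → M) := fun l v =>
    ∑ i ∈ Finset.range q, (N i).mulVec (fun k => (σ ^ i) (l * v k))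
  have hmv : ∀ (X : Matrix m m M) (v : m → M) k, σ (X.mulVec v k) = (tw σ X).mulVec (fun k => σ (v k)) k := by
    intro X v k
    simp [Matrix.mulVec, dotProduct]
  have hE : ∀ l v, g.mulVec (fun k => σ (E l v k)) = E l v := by
    intro l v
    have h1 : (fun k => σ (E l v k)) =
        ∑ i ∈ Finset.range q, (tw σ (N i)).mulVec (fun k => (σ ^ (i+1)) (l * v k)) := by
      ext k
      simp only [E, Finset.sum_apply, map_sum, hmv]
      simp [pow_succ']
    rw [h1, Matrix.mulVec_sum]
    simp only [Matrix.mulVec_mulVec]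
    have h2 : ∀ i, g * tw σ (N i) = N (i+1) := fun i => rfl
    simp only [h2, E]
    have h3 := Finset.sum_range_succ (fun i => (N i).mulVec (fun k => (σ ^ i) (l * v k))) q
    rw [Finset.sum_range_succ'] at h3
    have h4 : N q = N 0 := hg
    rw [h4, hσ, pow_zero] at h3
    exact add_right_cancel h3
  let V0 : Set (m → M) := {w | g.mulVec (fun k => σ (w k)) = w}
  have hspan : Submodule.span M V0 = ⊤ := by
    by_contra hne
    obtain ⟨f, hf0, hf⟩ := Submodule.exists_le_ker_of_lt_top _ (lt_top_iff_ne_top.2 hne)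
    apply hf0
    have hfE : ∀ l v, f (E l v) = 0 := fun l v => hf (Submodule.subset_span (hE l v))
    refine LinearMap.ext fun v => ?_
    have hli := (linearIndependent_monoidHom M M).comp
      (fun i : Fin q => ((σ ^ i.1 : M ≃ₐ[F] M) : M →* M)) (by
        intro i j hij
        refine Fin.ext (hd i i.2 j j.2 (AlgEquiv.ext fun x => ?_))
        exact DFunLike.congr_fun hij x)
    rw [Fintype.linearIndependent_iff] at hli
    have h5 := hli (fun i => f ((N i.1).mulVec (fun k => (σ ^ i.1) (v k)))) (by
      ext l
      rw [Pi.zero_apply, ← hfE l v]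
      simp only [E, map_sum, ← Fin.sum_univ_eq_sum_range
        (fun i => f ((N i).mulVec (fun k => (σ ^ i) (l * v k))))]
      simp only [Finset.sum_apply, Pi.smul_apply, Function.comp]
      refine Finset.sum_congr rfl fun i _ => ?_
      have : (fun k => (σ ^ i.1) (l * v k)) = (σ ^ i.1) l • (fun k => (σ ^ i.1) (v k)) := by
        ext k; simp
      rw [this, Matrix.mulVec_smul, map_smul, smul_eq_mul, smul_eq_mul, mul_comm]
      rfl) ⟨0, hq⟩
    simpa [N] using h5
  obtain ⟨b, hb, hspanb, hli⟩ := exists_linearIndependent M V0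
  rw [hspan] at hspanb
  let B : Module.Basis b M (m → M) := Module.Basis.mk hli (by
    rw [Subtype.range_coe, hspanb])
  let e : b ≃ m := B.indexEquiv (Pi.basisFun M m)
  let P : Matrix m m M := Matrix.of fun i j => (e.symm j).1 i
  have hP : IsUnit P := by
    rw [← Matrix.linearIndependent_cols_iff_isUnit]
    exact hli.comp e.symm e.symm.injective
  obtain ⟨U, hU⟩ := hP
  refine ⟨U, ?_⟩
  rw [hU]
  ext i j
  have h6 := hb (e.symm j).2
  exact congrFun h6 i

end tw
end GM

namespace GM

section desc
variable {F M C : Type*} [Field F] [Field M] [Algebra F M] {m : Type*} [Fintype m] [DecidableEq m]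
  [Ring C] [Algebra F C]

theorem cn_isUnit {R : Type*} [Monoid R] (τ : R →* R) (g : R) (hg : IsUnit g) (i : ℕ) :
    IsUnit (cn τ g i) := by
  induction i with
  | zero => simp
  | succ i ih => rw [cn_succ]; exact hg.mul (ih.map τ)

theorem tw_iter_one (σ : M ≃ₐ[F] M) (q : ℕ) (hσ : σ ^ q = 1) (X : Matrix m m M) :
    (tw σ)^[q] X = X := by
  rw [tw_iter, hσ]; ext; simp

theorem desc_data [IsSimpleRing C] [Algebra.IsCentral F C] [FiniteDimensional F C] [Nonempty m]
    (hC : Module.finrank F C = Fintype.card m ^ 2)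
    (ρ : C →ₐ[F] Matrix m m M) (σ : M ≃ₐ[F] M) :
    ∃ g : GL m M, ∀ c, g.1 * tw σ (ρ c) = ρ c * g.1 := by
  obtain ⟨g, hg⟩ := rep_conj hC ρ ((AlgHom.mapMatrix (σ : M →ₐ[F] M)).comp ρ)
  exact ⟨g, fun c => (hg c).symm⟩

theorem desc_scalar [IsSimpleRing C] [Algebra.IsCentral F C] [FiniteDimensional F C] [Nonempty m]
    (hC : Module.finrank F C = Fintype.card m ^ 2)
    (ρ : C →ₐ[F] Matrix m m M) (σ : M ≃ₐ[F] M) (q : ℕ) (hσ : σ ^ q = 1)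
    (g : GL m M) (hg : ∀ c, g.1 * tw σ (ρ c) = ρ c * g.1) :
    ∃ e : M, e ≠ 0 ∧ σ e = e ∧ cn (tw σ) g.1 q = algebraMap M _ e := by
  obtain ⟨e, he⟩ := rep_commutant hC ρ (cn (tw σ) g.1 q) (fun c => by
    rw [← cn_intertwine (tw σ) g.1 g.1 (ρ c) (hg c) q, tw_iter_one σ q hσ])
  refine ⟨e, ?_, ?_, he⟩
  · rintro rfl
    have := cn_isUnit (tw σ) g.1 g.isUnit q
    rw [he, map_zero] at this
    exact not_isUnit_zero this
  · have h1 := cn_succ (tw σ) g.1 q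
    rw [cn_succ', tw_iter_one σ q hσ, he, tw_algebraMap, ← Algebra.commutes] at h1
    have h2 := g.isUnit.mul_right_cancel h1
    exact (FaithfulSMul.algebraMap_injective M (Matrix m m M) h2).symm

theorem desc_descend (ρ : C →ₐ[F] Matrix m m M) (σ : M ≃ₐ[F] M) (q : ℕ) (hq : 0 < q)
    (hσ : σ ^ q = 1) (hd : ∀ i < q, ∀ j < q, σ ^ i = σ ^ j → i = j)
    (g : GL m M) (hg : ∀ c, g.1 * tw σ (ρ c) = ρ c * g.1) (e h : M) (he0 : e ≠ 0)
    (he : cn (tw σ) g.1 q = algebraMap M _ e) (hh : cn (σ : M →* M) h q = e) :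
    ∃ ρ' : C →ₐ[F] Matrix m m M, ∀ c, tw σ (ρ' c) = ρ' c := by
  have hh0 : h ≠ 0 := by
    rintro rfl
    obtain ⟨k, rfl⟩ := Nat.exists_eq_succ_of_ne_zero hq.ne'
    rw [Nat.succ_eq_add_one, cn_succ, zero_mul] at hh
    exact he0 hh.symm
  let g' : Matrix m m M := algebraMap M _ h⁻¹ * g.1
  have hg'u : IsUnit g' := ((IsUnit.mk0 _ (inv_ne_zero hh0)).map (algebraMap M _)).mul g.isUnit
  have hg' : ∀ c, g' * tw σ (ρ c) = ρ c * g' := by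
    intro c
    simp only [g']
    rw [mul_assoc, hg, ← mul_assoc, Algebra.commutes, mul_assoc]
  have hn : cn (tw σ) g' q = 1 := by
    rw [cn_mul_of_central, he, cn_algebraMap, ← map_mul, ← hh, ← cn_mul, inv_mul_cancel₀ hh0]
    · rw [cn_fixed _ _ (map_one _), one_pow, map_one]
    · intro j r
      rw [cn_algebraMap, tw_algebraMap]
      exact Algebra.commutes _ _
  obtain ⟨P, hP⟩ := h90 σ q hq hσ hd g' hn
  let ρ' : C →ₐ[F] Matrix m m M := AlgHom.ofLinearMap
    { toFun := fun c => P⁻¹.1 * ρ c * P.1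
      map_add' := fun x y => by simp [mul_add, add_mul]
      map_smul' := fun r x => by simp } (by simp) (fun x y => by
        simp only [LinearMap.coe_mk, AddHom.coe_mk, map_mul]
        simp only [mul_assoc, Units.mul_inv_cancel_left])
  refine ⟨ρ', fun c => ?_⟩
  have h1 : ∀ c, P.1 * ρ' c = ρ c * P.1 := fun c => by
    change P.1 * (P⁻¹.1 * ρ c * P.1) = _
    simp only [mul_assoc, Units.mul_inv_cancel_left]
  have h2 := congrArg (fun z => g' * tw σ z) (h1 c)
  simp only [map_mul] at h2
  rw [← mul_assoc, hP, ← mul_assoc, hg', mul_assoc, hP, ← h1] at h2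
  exact P.isUnit.mul_left_cancel h2

theorem desc_norm [IsSimpleRing C] [Algebra.IsCentral F C] [FiniteDimensional F C] [Nonempty m]
    (hC : Module.finrank F C = Fintype.card m ^ 2)
    (ρ ρ' : C →ₐ[F] Matrix m m M) (σ : M ≃ₐ[F] M) (q : ℕ) (hσ : σ ^ q = 1)
    (g : GL m M) (hg : ∀ c, g.1 * tw σ (ρ c) = ρ c * g.1) 
    (hρ' : ∀ c, tw σ (ρ' c) = ρ' c) (e : M) (he : cn (tw σ) g.1 q = algebraMap M _ e) :
    ∃ k : M, cn (σ : M →* M) k q = e := by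
  obtain ⟨Q, hQ⟩ := rep_conj hC ρ ρ'
  obtain ⟨k, hk⟩ := rep_commutant hC ρ' (Q⁻¹.1 * (g.1 * tw σ Q.1)) (fun c => by
    have h3 : ρ' c * Q⁻¹.1 = Q⁻¹.1 * ρ c := by
      have := congrArg (fun z => Q⁻¹.1 * z * Q⁻¹.1) (hQ c)
      simp only [mul_assoc, Units.mul_inv, Units.inv_mul_cancel_left, mul_one] at this
      exact this.symm
    rw [← mul_assoc, h3, mul_assoc, ← mul_assoc (ρ c), ← hg, mul_assoc, ← map_mul, hQ, map_mul, hρ']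
    simp only [mul_assoc])
  have h4 : g.1 * tw σ Q.1 = Q.1 * algebraMap M _ k := by
    rw [← hk]; simp only [Units.mul_inv_cancel_left]
  have h5 := cn_intertwine _ _ _ _ h4 q
  rw [tw_iter_one σ q hσ, he, cn_algebraMap, Algebra.commutes] at h5
  have h6 := Q.isUnit.mul_left_cancel h5
  exact ⟨k, (FaithfulSMul.algebraMap_injective M (Matrix m m M) h6).symm⟩

/-- Kronecker power of a matrix -/
def kp (p : ℕ) : Matrix m m M →* Matrix (Fin p → m) (Fin p → m) M where
  toFun g := Matrix.of fun i j => ∏ k, g (i k) (j k)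
  map_one' := by
    ext i j
    simp only [Matrix.of_apply, Matrix.one_apply, Finset.prod_ite_zero, Finset.prod_const_one,
      funext_iff, Finset.mem_univ, true_imp_iff]
  map_mul' g h := by
    ext i j
    simp only [Matrix.of_apply, Matrix.mul_apply, ← Finset.prod_mul_distrib]
    exact (Finset.prod_univ_sum (fun _ => Finset.univ) _).trans (by simp)

theorem kp_apply (p : ℕ) (g : Matrix m m M) (i j) : kp p g i j = ∏ k, g (i k) (j k) := rfl

theorem kp_tw (p : ℕ) (σ : M ≃ₐ[F] M) (g : Matrix m m M) : kp p (tw σ g) = tw σ (kp p g) := by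
  ext i j
  simp [kp_apply]

theorem kp_algebraMap (p : ℕ) (e : M) :
    kp p (algebraMap M (Matrix m m M) e) = algebraMap M _ (e ^ p) := by
  ext i j
  simp only [kp_apply, Matrix.algebraMap_matrix_apply, Finset.prod_ite_zero, Finset.prod_const,
      funext_iff, Finset.mem_univ, true_imp_iff]
  simp

end desc

/-- The class of central simple algebras to which our descent arguments apply. -/
structure Nice (F C : Type u) [Field F] [Ring C] [Algebra F C] (p n : ℕ) : Prop where
  csa : IsCSA F C
  npos : 0 < n
  fr : Module.finrank F C = n ^ 2
  pt : ∀ (M : Type u) [Field M] [Algebra F M] (ρ : C →ₐ[F] Matrix (Fin n) (Fin n) M),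
    ∃ Φ : Matrix (Fin p → Fin n) (Fin p → Fin n) F →ₐ[F] Matrix (Fin p → Fin n) (Fin p → Fin n) M,
      ∀ (σ : M ≃ₐ[F] M) (g : Matrix (Fin n) (Fin n) M), (∀ c, g * tw σ (ρ c) = ρ c * g) →
        ∀ x, kp p g * tw σ (Φ x) = Φ x * kp p g

/-- `C` becomes split over `K` (of degree `n`). -/
def Spl (F C K : Type*) [Field F] [Ring C] [Algebra F C] [Field K] [Algebra F K] (n : ℕ) : Prop :=
  Nonempty (C →ₐ[F] Matrix (Fin n) (Fin n) K)

theorem nice_desc {F C : Type u} [Field F] [Ring C] [Algebra F C] {p n : ℕ} (hN : Nice F C p n)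
    (hp : p.Prime) {M : Type u} [Field M] [Algebra F M] (σ : M ≃ₐ[F] M) (q : ℕ) (hq : q.Prime)
    (hpq : p ≠ q) (hσ : σ ^ q = 1) (ρ : C →ₐ[F] Matrix (Fin n) (Fin n) M) :
    ∃ ρ' : C →ₐ[F] Matrix (Fin n) (Fin n) M, ∀ c, tw σ (ρ' c) = ρ' c := by
  by_cases h1 : σ = 1
  · refine ⟨ρ, fun c => ?_⟩
    subst h1; ext i j; simp
  have hord : orderOf σ = q := by
    have := Fact.mk hq
    exact orderOf_eq_prime hσ h1
  have hd : ∀ i < q, ∀ j < q, σ ^ i = σ ^ j → i = j := by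
    intro i hi j hj hij
    exact pow_injOn_Iio_orderOf (by simpa [hord] using hi) (by simpa [hord] using hj) hij
  have := hN.csa.1
  have := hN.csa.2.1
  have := hN.csa.2.2
  have : Nonempty (Fin n) := ⟨⟨0, hN.npos⟩⟩
  have hC : Module.finrank F C = Fintype.card (Fin n) ^ 2 := by simpa using hN.fr
  obtain ⟨g, hg⟩ := desc_data hC ρ σ
  obtain ⟨e, he0, hσe, he⟩ := desc_scalar hC ρ σ q hσ g hg
  obtain ⟨Φ, hΦ⟩ := hN.pt M ρ
  have hkp : cn (tw σ) (kp p g.1) q = algebraMap M _ (e ^ p) := by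
    rw [← kp_algebraMap, ← he]
    exact (cn_map (R := Matrix (Fin n) (Fin n) M)
      (S := Matrix (Fin p → Fin n) (Fin p → Fin n) M) (tw σ) (tw σ)
      (kp p : Matrix (Fin n) (Fin n) M →* _) (kp_tw p σ) g.1 q).symm
  obtain ⟨k, hk⟩ := desc_norm (C := Matrix (Fin p → Fin n) (Fin p → Fin n) F)
    (m := Fin p → Fin n) (by rw [Module.finrank_matrix]; simp [sq]) Φ
    (AlgHom.mapMatrix (Algebra.ofId F M)) σ q hσ (Units.map (kp p : Matrix (Fin n) (Fin n) M →* _) g)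
    (hΦ σ g.1 hg) (fun c => by ext i j; simp [Algebra.ofId_apply]) (e ^ p) hkp
  have hcop : p.Coprime q := (Nat.coprime_primes hp hq).2 hpq
  obtain ⟨a, -, ha⟩ := Nat.exists_mul_mod_eq_one_of_coprime hcop hq.one_lt
  have hdiv := Nat.div_add_mod (p * a) q
  rw [ha] at hdiv
  set b := p * a / q
  have hpow : ∀ (x : M) (i : ℕ), cn (σ : M →* M) (x ^ i) q = cn (σ : M →* M) x q ^ i := by
    intro x i
    induction i with
    | zero => rw [pow_zero, pow_zero, cn_fixed _ _ (map_one _), one_pow]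
    | succ i ih => rw [pow_succ, cn_mul, ih, pow_succ]
  have heb : cn (σ : M →* M) (e ^ b) q = e ^ (q * b) := by
    rw [hpow, cn_fixed _ _ hσe, pow_mul]
  have hinv : cn (σ : M →* M) ((e ^ b)⁻¹) q = (e ^ (q * b))⁻¹ := by
    apply eq_inv_of_mul_eq_one_left
    rw [← heb, ← cn_mul, inv_mul_cancel₀ (pow_ne_zero _ he0), cn_fixed _ _ (map_one _), one_pow]
  refine desc_descend ρ σ q hq.pos hσ hd g hg e (k ^ a * (e ^ b)⁻¹) he0 he ?_
  rw [cn_mul, hpow, hk, hinv, ← pow_mul, ← hdiv, pow_succ]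
  field_simp
end GM

namespace GM

section factor
theorem rep_factor {F C R Q m : Type*} [Field F] [Ring C] [Algebra F C] [CommRing R] [Algebra F R]
    [CommRing Q] [Algebra F Q] [Fintype m] [DecidableEq m] (j : R →ₐ[F] Q)
    (hj : Function.Injective j) (ρ : C →ₐ[F] Matrix m m Q)
    (h : ∀ c i k, ∃ r, j r = ρ c i k) :
    ∃ ρ0 : C →ₐ[F] Matrix m m R, ∀ c, (ρ0 c).map j = ρ c := by
  have hinj : Function.Injective (j.mapMatrix : Matrix m m R →ₐ[F] Matrix m m Q) := by
    intro x y hxy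
    ext a b
    exact hj (congrFun (congrFun hxy a) b)
  have hr : ∀ c, ρ c ∈ (j.mapMatrix : Matrix m m R →ₐ[F] Matrix m m Q).range := by
    intro c
    choose r hr using h c
    exact ⟨Matrix.of r, by ext a b; exact hr a b⟩
  refine ⟨((AlgEquiv.ofInjective _ hinj).symm : _ →ₐ[F] _).comp (ρ.codRestrict _ hr), fun c => ?_⟩
  have := (AlgEquiv.ofInjective _ hinj).apply_symm_apply (ρ.codRestrict _ hr c)
  exact congrArg Subtype.val this

end factor

section iso
variable {K A : Type*} [Field K] [Ring A] [Algebra K A] [FiniteDimensional K A] [IsSimpleRing A]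

theorem exists_equiv_pow [IsArtinianRing A] (S W : Type*) [AddCommGroup S] [Module A S] [IsSimpleModule A S]
    [AddCommGroup W] [Module A W] [Module.Finite A W] :
    ∃ k : ℕ, Nonempty (W ≃ₗ[A] (Fin k → S)) := by
  have h := IsSimpleRing.isIsotypic A (W × S)
  let S' : Submodule A (W × S) := LinearMap.range (LinearMap.inr A W S)
  let e : S ≃ₗ[A] S' := LinearEquiv.ofInjective _ LinearMap.inr_injective
  have : IsSimpleModule A S' := IsSimpleModule.congr e.symm
  have h1 := ((h S').of_linearEquiv_type e.symm).of_injective (LinearMap.inl A W S) LinearMap.inl_injective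
  exact h1.linearEquiv_fun

theorem exists_simple [IsArtinianRing A] : ∃ S : Submodule A A, IsSimpleModule A S := by
  exact IsSemisimpleModule.exists_simple_submodule A A
  
theorem equiv_of_finrank_eq (V W : Type*) [AddCommGroup V] [Module A V] [Module K V]
    [IsScalarTower K A V] [AddCommGroup W] [Module A W] [Module K W]
    [IsScalarTower K A W] [FiniteDimensional K V] [FiniteDimensional K W]
    (h : Module.finrank K V = Module.finrank K W) : Nonempty (V ≃ₗ[A] W) := by
  have : IsArtinianRing A := IsArtinianRing.of_finite K A
  obtain ⟨S, hS⟩ := exists_simple (A := A)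
  have : Module.Finite A V := Module.Finite.of_restrictScalars_finite K A V
  have : Module.Finite A W := Module.Finite.of_restrictScalars_finite K A W
  obtain ⟨k, ⟨e⟩⟩ := exists_equiv_pow (A := A) S V
  obtain ⟨l, ⟨f⟩⟩ := exists_equiv_pow (A := A) S W
  have : FiniteDimensional K S := FiniteDimensional.finiteDimensional_submodule (S.restrictScalars K)
  have h1 := (e.restrictScalars K).finrank_eq
  have h2 := (f.restrictScalars K).finrank_eq
  rw [Module.finrank_pi_fintype] at h1 h2
  simp only [Finset.sum_const, Finset.card_univ, Fintype.card_fin, smul_eq_mul] at h1 h2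
  have hpos : 0 < Module.finrank K S := by
    have := hS.nontrivial
    exact Module.finrank_pos
  have hkl : k = l := by
    rw [h1, h2] at h
    exact Nat.eq_of_mul_eq_mul_right hpos h
  subst hkl
  exact ⟨e.trans f.symm⟩

theorem exists_delta : ∃ δ : ℕ, (∀ (W : Type u) [AddCommGroup W] [Module K W] [FiniteDimensional K W],
    Nonempty (A →ₐ[K] Module.End K W) → δ ∣ Module.finrank K W) ∧
    ∀ n, δ ∣ n → Nonempty (A →ₐ[K] Matrix (Fin n) (Fin n) K) := by
  have : IsArtinianRing A := IsArtinianRing.of_finite K A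
  obtain ⟨S, hS⟩ := exists_simple (A := A)
  have : FiniteDimensional K S := FiniteDimensional.finiteDimensional_submodule (S.restrictScalars K)
  refine ⟨Module.finrank K S, ?_, ?_⟩
  · rintro W _ _ _ ⟨φ⟩
    let _ : Module A W := Module.compHom W φ.toRingHom
    have hsm : ∀ (a : A) (w : W), a • w = φ a w := fun _ _ => rfl
    have : IsScalarTower K A W := ⟨fun k a w => by rw [hsm, hsm, map_smul]; rfl⟩
    have : Module.Finite A W := Module.Finite.of_restrictScalars_finite K A W
    obtain ⟨k, ⟨e⟩⟩ := exists_equiv_pow (A := A) S W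
    have h1 := (e.restrictScalars K).finrank_eq
    rw [Module.finrank_pi_fintype] at h1
    simp only [Finset.sum_const, Finset.card_univ, Fintype.card_fin, smul_eq_mul] at h1
    exact ⟨k, by rw [h1, mul_comm]⟩
  · rintro n ⟨k, rfl⟩
    let V := Fin k → S
    have h1 : Module.finrank K V = Module.finrank K S * k := by
      rw [Module.finrank_pi_fintype]
      simp [mul_comm]
    let b : Module.Basis (Fin (Module.finrank K S * k)) K V := Module.finBasisOfFinrankEq K V h1
    exact ⟨(LinearMap.toMatrixAlgEquiv b : _ →ₐ[K] _).comp (Algebra.lsmul K K V)⟩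
end iso

section I2
variable {F C K : Type u} [Field F] [Ring C] [Algebra F C] [Field K] [Algebra F K]
  [IsSimpleRing C] [Algebra.IsCentral F C] [FiniteDimensional F C]

/-- a `C`-module structure over `F` on a `K`-space commuting with `K` -/
theorem lift_end {W : Type*} [AddCommGroup W] [Module K W] [Module F W] [IsScalarTower F K W]
    (φ : C →ₐ[F] Module.End K W) : Nonempty (K ⊗[F] C →ₐ[K] Module.End K W) :=
  ⟨Algebra.TensorProduct.lift (Algebra.ofId K _) φ (fun k c => Algebra.commutes k (φ c))⟩

theorem spl_of_coprime (n : ℕ) : ∃ δ : ℕ,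
    (∀ (L : Type u) [Field L] [Algebra F L] [Algebra K L] [IsScalarTower F K L]
      [FiniteDimensional K L], Spl F C L n → δ ∣ n * Module.finrank K L) ∧
    (δ ∣ n → Spl F C K n) := by
  have := isSimpleRing_tensor (F := F) (A := K) (B := C)
  obtain ⟨δ, h1, h2⟩ := exists_delta.{u} (K := K) (A := K ⊗[F] C)
  refine ⟨δ, ?_, ?_⟩
  · rintro L _ _ _ _ _ ⟨ρ⟩
    have h3 : Module.finrank K (Fin n → L) = n * Module.finrank K L := by
      rw [Module.finrank_pi_fintype]; simp
    rw [← h3]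
    apply h1
    apply lift_end (F := F)
    let f : Matrix (Fin n) (Fin n) L →ₐ[F] Module.End K (Fin n → L) := AlgHom.ofLinearMap
      { toFun := fun X => (Matrix.toLin' X).restrictScalars K
        map_add' := fun x y => by ext; simp
        map_smul' := fun r x => by
          ext; simp [mul_comm] } (by ext; simp) (fun x y => by ext; simp)
    exact f.comp ρ
  · intro h
    obtain ⟨f⟩ := h2 n h
    exact ⟨(f.restrictScalars F).comp Algebra.TensorProduct.includeRight⟩
end I2
end GM

namespace GM

section qg
variable {F C N : Type u} [Field F] [Ring C] [Algebra F C] {p n : ℕ} [Field N] [Algebra F N]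

theorem step_fix (hN : Nice F C p n) (hp : p.Prime) (q : ℕ) (hq : q.Prime) (hpq : p ≠ q)
    (H : Subgroup (N ≃ₐ[F] N)) (τ : N ≃ₐ[F] N) (hτ : ∀ h ∈ H, τ⁻¹ * h * τ ∈ H)
    (hτ' : ∀ h ∈ H, τ * h * τ⁻¹ ∈ H)
    (hτq : τ ^ q ∈ H) (ρ : C →ₐ[F] Matrix (Fin n) (Fin n) N) (hρ : ∀ h ∈ H, ∀ c, tw h (ρ c) = ρ c) :
    ∃ ρ' : C →ₐ[F] Matrix (Fin n) (Fin n) N, (∀ h ∈ H, ∀ c, tw h (ρ' c) = ρ' c) ∧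
      ∀ c, tw τ (ρ' c) = ρ' c := by
  let L : IntermediateField F N := IntermediateField.fixedField H
  have hmem : ∀ x, x ∈ L ↔ ∀ f ∈ H, f x = x := fun x => IntermediateField.mem_fixedField_iff H x
  have h1 : ∀ x : L, τ x.1 ∈ L := fun x => by
    rw [hmem]
    intro f hf
    have := (hmem _).1 x.2 _ (hτ f hf)
    rw [AlgEquiv.mul_apply, AlgEquiv.mul_apply] at this
    have h2 := congrArg τ this
    rwa [← AlgEquiv.mul_apply τ τ⁻¹, mul_inv_cancel, AlgEquiv.one_apply] at h2
  have h1' : ∀ x : L, τ⁻¹ x.1 ∈ L := fun x => by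
    rw [hmem]
    intro f hf
    have := (hmem _).1 x.2 _ (hτ' f hf)
    rw [AlgEquiv.mul_apply, AlgEquiv.mul_apply] at this
    have h2 := congrArg (fun z => (τ⁻¹ : N ≃ₐ[F] N) z) this
    rwa [← AlgEquiv.mul_apply τ⁻¹ τ, inv_mul_cancel, AlgEquiv.one_apply] at h2
  let a : L →ₐ[F] L := ((τ : N →ₐ[F] N).comp L.val).codRestrict L.toSubalgebra h1
  let b : L →ₐ[F] L := (((τ⁻¹ : N ≃ₐ[F] N) : N →ₐ[F] N).comp L.val).codRestrict L.toSubalgebra h1'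
  let σ : L ≃ₐ[F] L := AlgEquiv.ofAlgHom a b
    (by 
      ext x
      change τ (τ⁻¹ x.1) = x.1
      rw [← AlgEquiv.mul_apply τ τ⁻¹, mul_inv_cancel, AlgEquiv.one_apply])
    (by 
      ext x
      change τ⁻¹ (τ x.1) = x.1
      rw [← AlgEquiv.mul_apply τ⁻¹ τ, inv_mul_cancel, AlgEquiv.one_apply])
  have hσ : ∀ x : L, (σ x).1 = τ x.1 := fun x => rfl
  have hσq : σ ^ q = 1 := by
    have h3 : ∀ (i : ℕ) (x : L), ((σ ^ i) x).1 = (τ ^ i) x.1 := by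
      intro i
      induction i with
      | zero => intro x; simp
      | succ i ih => intro x; rw [pow_succ, pow_succ, AlgEquiv.mul_apply, AlgEquiv.mul_apply, ih, hσ]
    ext x
    rw [h3, (hmem _).1 x.2 _ hτq]; rfl
  obtain ⟨ρ0, h0⟩ := rep_factor L.val Subtype.val_injective ρ (fun c i k => by
    refine ⟨⟨ρ c i k, (hmem _).2 fun f hf => ?_⟩, rfl⟩
    exact congrFun (congrFun (hρ f hf c) i) k)
  obtain ⟨ρ1, hρ1⟩ := nice_desc hN hp σ q hq hpq hσq ρ0
  refine ⟨L.val.mapMatrix.comp ρ1, fun h hh c => ?_, fun c => ?_⟩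
  · ext i j
    exact (hmem _).1 (ρ1 c i j).2 h hh
  · ext i j
    have := congrFun (congrFun (hρ1 c) i) j
    exact congrArg Subtype.val this

theorem qgroup_fix (hN : Nice F C p n) (hp : p.Prime) (q : ℕ) (hq : q.Prime) (hpq : p ≠ q)
    (k : ℕ) : ∀ (H : Subgroup (N ≃ₐ[F] N)), Nat.card H = q ^ k → Spl F C N n →
    ∃ ρ : C →ₐ[F] Matrix (Fin n) (Fin n) N, ∀ h ∈ H, ∀ c, tw h (ρ c) = ρ c := by
  induction k with
  | zero =>
    rintro H hH ⟨ρ⟩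
    refine ⟨ρ, fun h hh c => ?_⟩
    rw [pow_zero, Subgroup.card_eq_one] at hH
    subst hH
    rw [Subgroup.mem_bot] at hh
    subst hh
    ext i j; simp
  | succ k ih =>
    intro H hH hS
    have : Fact q.Prime := ⟨hq⟩
    have hfin : Finite H := Nat.finite_of_card_ne_zero (by rw [hH]; exact pow_ne_zero _ hq.ne_zero)
    obtain ⟨K, hK⟩ := Sylow.exists_subgroup_card_pow_prime (G := H) q (n := k)
      (by rw [hH]; exact pow_dvd_pow _ (Nat.le_succ k))
    have hidx : K.index = q := by
      have := K.card_mul_index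
      rw [hK, hH, pow_succ] at this
      exact Nat.eq_of_mul_eq_mul_left (pow_pos hq.pos _) this
    have hKn : K.Normal := by
      apply Subgroup.normal_of_index_eq_minFac_card
      rw [hidx, hH, Nat.pow_minFac (Nat.succ_ne_zero k), hq.minFac_eq]
    obtain ⟨ρ, hρ⟩ := ih (K.map H.subtype) (by
      rw [Subgroup.card_map_of_injective H.subtype_injective, hK]) hS
    obtain ⟨t, ht⟩ : ∃ t : H, t ∉ K := by
      by_contra! hc
      have : K = ⊤ := by ext; simp [hc]
      rw [this, Subgroup.index_top] at hidx
      exact hq.one_lt.ne hidx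
    obtain ⟨ρ', h1, h2⟩ := step_fix hN hp q hq hpq (K.map H.subtype) t.1
      (by
        rintro _ ⟨x, hx, rfl⟩
        exact ⟨t⁻¹ * x * t, by simpa using hKn.conj_mem x hx t⁻¹, rfl⟩)
      (by
        rintro _ ⟨x, hx, rfl⟩
        exact ⟨t * x * t⁻¹, hKn.conj_mem x hx t, rfl⟩)
      ⟨t ^ q, by rw [← hidx]; exact K.pow_index_mem t, rfl⟩ ρ hρ
    refine ⟨ρ', ?_⟩
    let T : Subgroup H :=
      { carrier := {h | ∀ c, tw h.1 (ρ' c) = ρ' c}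
        one_mem' := fun c => by ext i j; simp
        mul_mem' := fun {a b} ha hb c => by
          conv_rhs => rw [← ha c, ← hb c]
          ext i j; simp
        inv_mem' := fun {a} ha c => by
          conv_lhs => rw [← ha c]
          ext i j
          simp only [tw_app, Subgroup.coe_inv]
          rw [← AlgEquiv.mul_apply, inv_mul_cancel, AlgEquiv.one_apply] }
    have hKT : K ≤ T := fun x hx => h1 x.1 ⟨x, hx, rfl⟩
    have htT : t ∈ T := h2
    have hT : T = ⊤ := by
      have h3 := Subgroup.relIndex_mul_index hKT
      rw [hidx] at h3
      rcases (Nat.dvd_prime hq).1 (Dvd.intro_left _ h3) with h4 | h4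
      · exact Subgroup.index_eq_one.1 h4
      · rw [h4] at h3
        have h5 : K.relIndex T = 1 := by
          have := hq.pos
          nlinarith
        exact absurd (Subgroup.relIndex_eq_one.1 h5 htT) ht
    intro h hh c
    have : (⟨h, hh⟩ : H) ∈ T := hT ▸ Subgroup.mem_top _
    exact this c
end qg

section ptp
variable {F K N : Type u} [Field F] [Field K] [Algebra F K] [Field N] [Algebra F N] [Algebra K N]
  [IsScalarTower F K N] [FiniteDimensional K N] [IsGalois K N]

theorem prime_to_p {C : Type u} [Ring C] [Algebra F C] {p n : ℕ} (hN : Nice F C p n) (hp : p.Prime)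
    [Fact p.Prime] (P : Sylow p (N ≃ₐ[K] N)) (hS : Spl F C (IntermediateField.fixedField P.1) n) :
    Spl F C K n := by
  have := hN.csa.1
  have := hN.csa.2.1
  have := hN.csa.2.2
  obtain ⟨δ, h1, h2⟩ := spl_of_coprime (F := F) (C := C) (K := K) n
  apply h2
  have hSN : Spl F C N n := by
    obtain ⟨ρ⟩ := hS
    exact ⟨(AlgHom.mapMatrix ((IntermediateField.fixedField P.1).val.restrictScalars F)).comp ρ⟩
  have hind : ∀ H : Subgroup (N ≃ₐ[K] N),
      Module.finrank K (IntermediateField.fixedField H) = H.index := by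
    intro H
    have h3 := Module.finrank_mul_finrank K (IntermediateField.fixedField H) N
    rw [IntermediateField.finrank_fixedField_eq_card, ← IsGalois.card_aut_eq_finrank K N,
      ← H.index_mul_card] at h3
    exact Nat.eq_of_mul_eq_mul_right Nat.card_pos h3
  have hkey : ∀ q : ℕ, q.Prime → ∃ d, ¬ q ∣ d ∧ δ ∣ n * d := by
    intro q hq
    have : Fact q.Prime := ⟨hq⟩
    by_cases hpq : p = q
    · subst hpq
      refine ⟨P.1.index, P.not_dvd_index, ?_⟩
      rw [← hind]
      exact h1 _ hS
    · let Q : Sylow q (N ≃ₐ[K] N) := default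
      refine ⟨Q.1.index, Q.not_dvd_index, ?_⟩
      rw [← hind]
      apply h1
      let r : (N ≃ₐ[K] N) →* (N ≃ₐ[F] N) := 
        { toFun := fun f => f.restrictScalars F
          map_one' := rfl
          map_mul' := fun _ _ => rfl }
      have hr : Function.Injective r := fun a b hab => by
        ext x; exact DFunLike.congr_fun hab x
      obtain ⟨k, hk⟩ := IsPGroup.iff_card.1 Q.isPGroup'
      obtain ⟨ρ, hρ⟩ := qgroup_fix hN hp q hq hpq k (Q.1.map r) (by
        rw [Subgroup.card_map_of_injective hr]; exact hk) hSN
      obtain ⟨ρ0, -⟩ := rep_factor ((IntermediateField.fixedField Q.1).val.restrictScalars F)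
        Subtype.val_injective ρ (fun c i k => by
          refine ⟨⟨ρ c i k, (IntermediateField.mem_fixedField_iff _ _).2 fun f hf => ?_⟩, rfl⟩
          exact congrFun (congrFun (hρ (r f) ⟨f, hf, rfl⟩ c) i) k)
      exact ⟨ρ0⟩
  -- number theory
  have hn0 : n ≠ 0 := hN.npos.ne'
  have hδ0 : δ ≠ 0 := by
    rintro rfl
    obtain ⟨d, hd, hd2⟩ := hkey 2 Nat.prime_two
    rw [zero_dvd_iff, mul_eq_zero] at hd2
    rcases hd2 with h | h
    · exact hn0 h
    · rw [h] at hd; exact hd (dvd_zero 2)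
  have hg : δ / Nat.gcd δ n = 1 := by
    by_contra hne
    obtain ⟨q, hq, hqd⟩ := Nat.exists_prime_and_dvd hne
    obtain ⟨d, hd, hd2⟩ := hkey q hq
    have h5 : δ / Nat.gcd δ n ∣ d := by
      apply (Nat.coprime_div_gcd_div_gcd (Nat.gcd_pos_of_pos_left n (Nat.pos_of_ne_zero hδ0))).dvd_of_dvd_mul_left
      have h6 : Nat.gcd δ n ∣ δ := Nat.gcd_dvd_left _ _
      have h7 : Nat.gcd δ n ∣ n := Nat.gcd_dvd_right _ _
      rw [Nat.div_mul_right_comm h7]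
      exact Nat.div_dvd_div h6 hd2
    exact hd (hqd.trans h5)
  have := Nat.eq_of_dvd_of_div_eq_one (Nat.gcd_dvd_left δ n) hg
  rw [← this]
  exact Nat.gcd_dvd_right _ _
end ptp
end GM

namespace GM

section I3
variable {F C M : Type*} [Field F] [Ring C] [Algebra F C] [Field M] [Algebra F M]
  [FiniteDimensional F C]

theorem specialize {R Q : Type*} [CommRing R] [IsDomain R] [Algebra F R] [Field Q] [Algebra F Q]
    [Algebra R Q] [IsScalarTower F R Q] [IsFractionRing R Q]
    (hθ : ∀ r : R, r ≠ 0 → ∃ θ : R →ₐ[F] M, θ r ≠ 0) (n : ℕ) (h : Spl F C Q n) : Spl F C M n := by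
  classical
  obtain ⟨ρ⟩ := h
  let bs := Module.finBasis F C
  let T : Finset Q := Finset.univ.image
    (fun x : Fin (Module.finrank F C) × Fin n × Fin n => ρ (bs x.1) x.2.1 x.2.2)
  obtain ⟨r, hr⟩ := IsLocalization.exist_integer_multiples_of_finset (nonZeroDivisors R) T
  have hr0 : r.1 ≠ 0 := nonZeroDivisors.ne_zero r.2
  let R0 := Localization.Away r.1
  have hle : Submonoid.powers r.1 ≤ nonZeroDivisors R := powers_le_nonZeroDivisors_of_noZeroDivisors hr0
  let j : R0 →ₐ[F] Q := IsLocalization.liftAlgHom (M := Submonoid.powers r.1)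
    (f := (Algebra.ofId R Q).restrictScalars F) (fun y => by
      have : IsUnit (algebraMap R Q y.1) := IsLocalization.map_units Q (⟨y.1, hle y.2⟩ : nonZeroDivisors R)
      exact this)
  have hj0 : ∀ x : R, j (algebraMap R R0 x) = algebraMap R Q x := fun x =>
    IsLocalization.lift_eq (M := Submonoid.powers r.1) (S := R0) (g := algebraMap R Q) _ x
  have hj : Function.Injective j := by
    have := IsLocalization.lift_injective_iff (M := Submonoid.powers r.1) (S := R0)
      (g := algebraMap R Q) (fun y => IsLocalization.map_units Q (⟨y.1, hle y.2⟩ : nonZeroDivisors R))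
    have h2 := this.2 (fun x y => by
      rw [(IsFractionRing.injective R Q).eq_iff, 
        (IsLocalization.injective R0 hle).eq_iff])
    exact h2
  have hent : ∀ c i k, ∃ x, j x = ρ c i k := by
    intro c i k
    let W : Submodule F C := 
      { carrier := {c | ∃ x, j x = ρ c i k}
        zero_mem' := ⟨0, by simp⟩
        add_mem' := by
          rintro c d ⟨x, hx⟩ ⟨y, hy⟩
          exact ⟨x + y, by simp [hx, hy]⟩
        smul_mem' := by
          rintro t c ⟨x, hx⟩
          exact ⟨t • x, by simp [hx]⟩ }
    have hW : (⊤ : Submodule F C) ≤ W := by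
      rw [← bs.span_eq, Submodule.span_le]
      rintro _ ⟨l, rfl⟩
      obtain ⟨y, hy⟩ := hr (ρ (bs l) i k) (Finset.mem_image.2 ⟨(l, i, k), Finset.mem_univ _, rfl⟩)
      refine ⟨IsLocalization.mk' R0 y ⟨r.1, Submonoid.mem_powers _⟩, ?_⟩
      have h3 : algebraMap R Q r.1 ≠ 0 := by
        rwa [Ne, IsFractionRing.to_map_eq_zero_iff]
      apply mul_left_cancel₀ h3
      rw [← hj0, ← map_mul, IsLocalization.mk'_spec'_mk, hj0, hy, Algebra.smul_def]
      rw [hj0]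
    exact hW (Submodule.mem_top (x := c))
  obtain ⟨ρ0, -⟩ := rep_factor j hj ρ hent
  obtain ⟨θ, hθ⟩ := hθ r.1 hr0
  let θ' : R0 →ₐ[F] M := IsLocalization.liftAlgHom (M := Submonoid.powers r.1) (f := θ) (by
    rintro ⟨y, k, rfl⟩
    simp only [map_pow]
    exact (IsUnit.mk0 _ hθ).pow _)
  exact ⟨θ'.mapMatrix.comp ρ0⟩
end I3

section U
theorem cn_eq_prod {R : Type*} [CommMonoid R] (τ : R →* R) (x : R) (i : ℕ) :
    cn τ x i = ∏ j ∈ Finset.range i, τ^[j] x := by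
  induction i with
  | zero => simp
  | succ i ih => rw [cn_succ', ih, Finset.prod_range_succ]

variable {S R : Type*} [CommRing S] [IsDomain S] [UniqueFactorizationMonoid S] [CommRing R]
  [IsDomain R]

theorem cn_sigma (τ : R →* R) (p : ℕ) (hp : 0 < p) (hτ : ∀ x, τ^[p] x = x) (x : R) :
    cn τ (τ x) p = cn τ x p := by
  have h1 : τ (cn τ x p) = cn τ (τ x) p := cn_map τ τ τ (fun _ => rfl) x p
  have h2 : x * cn τ (τ x) p = x * cn τ x p := by
    rw [← h1, ← cn_succ, cn_succ', hτ, mul_comm]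
  by_cases hx : x = 0
  · subst hx
    have h0 : τ^[p] (τ 0) = τ 0 := hτ _
    obtain ⟨k, rfl⟩ := Nat.exists_eq_succ_of_ne_zero hp.ne'
    rw [← h1]
    simp only [Nat.succ_eq_add_one, cn_succ']
    rw [map_mul]
    have hz : τ 0 = 0 := by
      have h3 : ∀ y, τ 0 * τ y = τ 0 := fun y => by rw [← map_mul, zero_mul]
      have h4 := h3 (τ^[k] 0)
      rw [← Function.iterate_succ_apply' τ k, hτ, mul_zero] at h4
      exact h4.symm
    have hzi : τ^[k] 0 = 0 := Function.iterate_fixed hz k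
    rw [hzi, hz]; simp
  · exact mul_left_cancel₀ hx h2

theorem lemmaU (φ : S →+* R) (hφ : Function.Injective φ)
    (hpr : ∀ π, Prime π → IsUnit (φ π) ∨ Prime (φ π)) (τ : R →+* R) (p : ℕ) (hp : 0 < p)
    (hτ : ∀ x, τ^[p] x = x) (ε : R) (hε : IsUnit ε) (s : S) (hs : s ≠ 0) :
    ∀ a : R, cn (τ : R →* R) a p = ε * cn (τ : R →* R) (φ s) p →
      ∃ w, IsUnit w ∧ cn (τ : R →* R) w p = ε := by
  have hτ' : ∀ x, (τ : R →* R)^[p] x = x := hτ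
  have hne : ∀ x, x ≠ 0 → cn (τ : R →* R) x p ≠ 0 := by
    intro x hx
    rw [cn_eq_prod, Finset.prod_ne_zero_iff]
    intro i hi h0
    apply hx
    rw [Finset.mem_range] at hi
    have := hτ' x
    rw [← Nat.sub_add_cancel hi.le, Function.iterate_add_apply, h0] at this
    rw [← this]
    exact Function.iterate_fixed (map_zero τ) _
  have hmulu : ∀ x, IsUnit (cn (τ : R →* R) x p) → IsUnit x := by
    intro x hx
    obtain ⟨k, rfl⟩ := Nat.exists_eq_succ_of_ne_zero hp.ne'
    rw [Nat.succ_eq_add_one, cn_succ] at hx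
    exact isUnit_of_mul_isUnit_left hx
  induction s using UniqueFactorizationMonoid.induction_on_prime with
  | h₁ => exact absurd rfl hs
  | h₂ x hx =>
    intro a ha
    have h1 : IsUnit (φ x) := hx.map φ
    obtain ⟨v, hv⟩ := h1
    refine ⟨a * v⁻¹.1, ?_, ?_⟩
    · refine IsUnit.mul ?_ (Units.isUnit _)
      apply hmulu
      rw [ha]
      exact hε.mul (cn_isUnit _ _ (hx.map φ) _)
    · rw [cn_mul, ha, ← hv, mul_assoc, ← cn_mul, Units.mul_inv, cn_fixed _ _ (map_one _), one_pow, mul_one]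
  | h₃ x π hx hπ ih =>
    intro a ha
    rw [map_mul, cn_mul] at ha
    have hπ0 : cn (τ : R →* R) (φ π) p ≠ 0 := hne _ (by
      rw [Ne, map_eq_zero_iff φ hφ]; exact hπ.ne_zero)
    rcases hpr π hπ with h | h
    · obtain ⟨v, hv⟩ := h
      apply ih hx (a * v⁻¹.1)
      rw [cn_mul, ha, ← hv]
      have : cn (τ : R →* R) v.1 p * cn (τ : R →* R) v⁻¹.1 p = 1 := by
        rw [← cn_mul, Units.mul_inv, cn_fixed _ _ (map_one _), one_pow]
      calc _ = ε * cn (τ : R →* R) (φ x) p * (cn (τ : R →* R) v.1 p * cn (τ : R →* R) v⁻¹.1 p) := by ring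
        _ = _ := by rw [this, mul_one]
    · have hd : φ π ∣ cn (τ : R →* R) a p := by
        rw [ha]
        refine Dvd.dvd.mul_left (Dvd.dvd.mul_right ?_ _) _
        obtain ⟨k, rfl⟩ := Nat.exists_eq_succ_of_ne_zero hp.ne'
        rw [Nat.succ_eq_add_one, cn_succ]
        exact dvd_mul_right _ _
      rw [cn_eq_prod, h.dvd_finsetProd_iff] at hd
      obtain ⟨j, hj, y, hy⟩ := hd
      rw [Finset.mem_range] at hj
      have hit : ∀ m x y, (τ : R →* R)^[m] (x * y) = (τ : R →* R)^[m] x * (τ : R →* R)^[m] y := by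
        intro m
        induction m with
        | zero => intros; rfl
        | succ m ih => intros; simp only [Function.iterate_succ_apply', ih, map_mul]
      have hcit : ∀ m x, cn (τ : R →* R) ((τ : R →* R)^[m] x) p = cn (τ : R →* R) x p := by
        intro m
        induction m with
        | zero => intros; rfl
        | succ m ih => intro x; rw [Function.iterate_succ_apply', cn_sigma _ p hp hτ', ih]
      have h2 : a = (τ : R →* R)^[p - j] (φ π) * (τ : R →* R)^[p - j] y := by
        rw [← hit, ← hy, ← Function.iterate_add_apply, Nat.sub_add_cancel hj.le, hτ']
      apply ih hx ((τ : R →* R)^[p - j] y)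
      rw [h2, cn_mul, hcit] at ha
      apply mul_left_cancel₀ hπ0
      rw [ha]; ring
end U
end GM

namespace GM

section gen
open Polynomial
variable {F M : Type u} [Field F] [Field M] [Algebra F M] {N : ℕ}

abbrev gS (M : Type u) [Field M] (N : ℕ) := MvPolynomial (Fin N) (Polynomial M)

/-- the element we localize at -/
noncomputable def gs0 (N : ℕ) (f : M[X]) : gS M N := MvPolynomial.C f * ∏ i, MvPolynomial.X i

abbrev gR (N : ℕ) (f : M[X]) := Localization.Away (gs0 N f)

noncomputable def gφ (N : ℕ) (f : M[X]) : gS M N →+* gR N f := algebraMap _ _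

noncomputable def gy (N : ℕ) (f : M[X]) (b : M) : Fin (N + 1) → gR N f :=
  Fin.lastCases (gφ N f (MvPolynomial.C (f ^ 2 * C b⁻¹)) * IsLocalization.Away.invSelf (gs0 N f))
    (fun i => gφ N f (MvPolynomial.X i))

theorem gy_castSucc (f : M[X]) (b : M) (i : Fin N) :
    gy N f b i.castSucc = gφ N f (MvPolynomial.X i) := by simp [gy]

theorem gy_last (f : M[X]) (b : M) :
    gy N f b (Fin.last N) = gφ N f (MvPolynomial.C (f ^ 2 * C b⁻¹)) *
      IsLocalization.Away.invSelf (gs0 N f) := by simp [gy]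

theorem gφ_s0 (f : M[X]) : gφ N f (MvPolynomial.C f) * (∏ i, gφ N f (MvPolynomial.X i)) *
    IsLocalization.Away.invSelf (gs0 N f) = 1 := by
  rw [← map_prod, ← map_mul]
  exact IsLocalization.Away.mul_invSelf (gs0 N f)

theorem gφ_f_unit (f : M[X]) : IsUnit (gφ N f (MvPolynomial.C f)) := by
  have := gφ_s0 (N := N) f
  rw [mul_assoc] at this
  exact IsUnit.of_mul_eq_one _ this

theorem gy_prod (f : M[X]) (b : M) :
    ∏ i, gy N f b i = gφ N f (MvPolynomial.C (f * C b⁻¹)) := by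
  rw [Fin.prod_univ_castSucc]
  simp only [gy_castSucc, gy_last]
  have := gφ_s0 (N := N) f
  rw [show f ^ 2 * C b⁻¹ = f * (f * C b⁻¹) by ring, map_mul, map_mul]
  calc _ = gφ N f (MvPolynomial.C (f * C b⁻¹)) * (gφ N f (MvPolynomial.C f) * (∏ i, gφ N f (MvPolynomial.X i)) *
    IsLocalization.Away.invSelf (gs0 N f)) := by ring
    _ = _ := by rw [this, mul_one]

theorem gφ_unit (f : M[X]) (b : M) (hb : b ≠ 0) : IsUnit (gφ N f (MvPolynomial.C (f * C b⁻¹))) := by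
  rw [map_mul, map_mul]
  refine (gφ_f_unit f).mul ?_
  apply IsUnit.map
  apply IsUnit.map
  apply IsUnit.map
  exact IsUnit.mk0 _ (inv_ne_zero hb)

theorem gy_unit (f : M[X]) (b : M) (hb : b ≠ 0) (i) : IsUnit (gy N f b i) := by
  have h := gφ_unit (N := N) f b hb
  rw [← gy_prod] at h
  exact isUnit_of_dvd_unit (Finset.dvd_prod_of_mem _ (Finset.mem_univ i)) h

noncomputable def gσS (N : ℕ) (f : M[X]) (b : M) (σ : M ≃ₐ[F] M) : gS M N →+* gR N f :=
  MvPolynomial.eval₂Hom ((gφ N f).comp (MvPolynomial.C.comp (Polynomial.mapRingHom (σ : M →+* M))))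
    (fun i => gy N f b i.succ)

theorem gσS_C (f : M[X]) (b : M) (σ : M ≃ₐ[F] M) (g : M[X]) :
    gσS N f b σ (MvPolynomial.C g) = gφ N f (MvPolynomial.C (g.map (σ : M →+* M))) := by
  simp [gσS]

theorem gσS_X (f : M[X]) (b : M) (σ : M ≃ₐ[F] M) (i : Fin N) :
    gσS N f b σ (MvPolynomial.X i) = gy N f b i.succ := by
  simp [gσS]

theorem gσS_unit (f : M[X]) (b : M) (hb : b ≠ 0) (σ : M ≃ₐ[F] M) (hf : f.map (σ : M →+* M) = f) :
    IsUnit (gσS N f b σ (gs0 N f)) := by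
  change IsUnit (gσS N f b σ (MvPolynomial.C f * ∏ i, MvPolynomial.X i))
  rw [map_mul, gσS_C, hf, map_prod]
  refine (gφ_f_unit f).mul ?_
  simp only [gσS_X]
  rw [IsUnit.prod_univ_iff]
  intro i
  exact gy_unit f b hb _

noncomputable def gσ (N : ℕ) (f : M[X]) (b : M) (hb : b ≠ 0) (σ : M ≃ₐ[F] M)
    (hf : f.map (σ : M →+* M) = f) : gR N f →+* gR N f :=
  IsLocalization.Away.lift (gs0 N f) (gσS_unit f b hb σ hf)

theorem gσ_φ (f : M[X]) (b : M) (hb : b ≠ 0) (σ : M ≃ₐ[F] M)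
    (hf : f.map (σ : M →+* M) = f) (s : gS M N) : gσ N f b hb σ hf (gφ N f s) = gσS N f b σ s :=
  IsLocalization.Away.lift_eq _ _ _

theorem gσ_y (f : M[X]) (b : M) (hb : b ≠ 0) (σ : M ≃ₐ[F] M) (hσb : σ b = b)
    (hf : f.map (σ : M →+* M) = f) (i) : gσ N f b hb σ hf (gy N f b i) = gy N f b (i + 1) := by
  cases i using Fin.lastCases with
  | cast i => rw [gy_castSucc, gσ_φ, gσS_X, Fin.coeSucc_eq_succ]
  | last =>
    rw [Fin.last_add_one]
    have h1 := congrArg (gσ N f b hb σ hf) (gy_prod (N := N) f b)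
    rw [gσ_φ, gσS_C, Polynomial.map_mul, hf, Polynomial.map_C] at h1
    simp only [RingHom.coe_coe, map_inv₀, hσb] at h1
    rw [← gy_prod, map_prod, Fin.prod_univ_castSucc, Fin.prod_univ_succ] at h1
    simp only [gy_castSucc, gσ_φ, gσS_X] at h1
    rw [mul_comm] at h1
    refine IsUnit.mul_right_cancel ?_ h1
    rw [IsUnit.prod_univ_iff]
    intro i
    exact gy_unit f b hb _

theorem gσ_iter (f : M[X]) (b : M) (hb : b ≠ 0) (σ : M ≃ₐ[F] M) (hσb : σ b = b)
    (hf : f.map (σ : M →+* M) = f) (hσ : σ ^ (N + 1) = 1) (x : gR N f) :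
    (gσ N f b hb σ hf)^[N + 1] x = x := by
  set τ := gσ N f b hb σ hf with hτ
  have h1 : ∀ k i, τ^[k] (gy N f b i) = gy N f b (i + k • (1 : Fin (N + 1))) := by
    intro k
    induction k with
    | zero => intro i; simp
    | succ k ih => intro i; rw [Function.iterate_succ_apply', ih, gσ_y f b hb σ hσb hf]; congr 1; rw [succ_nsmul, add_assoc]
  have h2 : ∀ k m, τ^[k] (gφ N f (MvPolynomial.C (C m))) = gφ N f (MvPolynomial.C (C ((σ ^ k) m))) := by
    intro k
    induction k with
    | zero => intro i; simp
    | succ k ih => 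
      intro i; rw [Function.iterate_succ_apply', ih, gσ_φ, gσS_C, Polynomial.map_C, pow_succ']; rfl
  have h3 : ∀ k, τ^[k] (gφ N f (MvPolynomial.C X)) = gφ N f (MvPolynomial.C X) := by
    intro k
    exact Function.iterate_fixed (by rw [gσ_φ, gσS_C, Polynomial.map_X]) k
  have h4 : ∀ k (x : gR N f), τ^[k] x = (τ ^ k) x := by
    intro k x; rw [RingHom.coe_pow]
  have h5 : τ ^ (N + 1) = RingHom.id _ := by
    apply IsLocalization.ringHom_ext (Submonoid.powers (gs0 N f))
    apply MvPolynomial.ringHom_ext'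
    · apply Polynomial.ringHom_ext
      · intro m
        have := h2 (N + 1) m
        rw [hσ, h4] at this
        exact this
      · have := h3 (N + 1)
        rw [h4] at this
        exact this
    · intro i
      have := h1 (N + 1) i.castSucc
      rw [gy_castSucc, h4] at this
      have h6 : (N + 1) • (1 : Fin (N + 1)) = 0 := by
        have := card_nsmul_eq_zero' (G := Fin (N + 1)) (x := 1)
        rwa [Nat.card_fin] at this
      rw [h6, add_zero, gy_castSucc] at this
      exact this
  rw [h4, h5]; rfl
end gen
end GM

namespace GM

section gen2
open Polynomial
variable {F M : Type u} [Field F] [Field M] [Algebra F M] {N : ℕ}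

theorem gs0_ne (f : M[X]) (hf0 : f ≠ 0) : gs0 N f ≠ 0 := by
  change MvPolynomial.C f * ∏ i, MvPolynomial.X i ≠ 0
  refine mul_ne_zero ?_ ?_
  · rwa [Ne, MvPolynomial.C_eq_zero]
  · rw [Finset.prod_ne_zero_iff]
    intro i _
    exact MvPolynomial.X_ne_zero i

theorem gs0_le (f : M[X]) (hf0 : f ≠ 0) : Submonoid.powers (gs0 N f) ≤ nonZeroDivisors _ :=
  powers_le_nonZeroDivisors_of_noZeroDivisors (gs0_ne f hf0)

theorem gR_domain (f : M[X]) (hf0 : f ≠ 0) : IsDomain (gR N f) :=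
  IsLocalization.isDomain_localization (gs0_le f hf0)

theorem gφ_inj (f : M[X]) (hf0 : f ≠ 0) : Function.Injective (gφ N f) :=
  IsLocalization.injective _ (gs0_le f hf0)

theorem gφ_gs0_unit (f : M[X]) : IsUnit (gφ N f (gs0 N f)) :=
  IsLocalization.Away.algebraMap_isUnit (gs0 N f)

theorem gφ_prime (f : M[X]) (hf0 : f ≠ 0) (π : gS M N) (hπ : Prime π) :
    IsUnit (gφ N f π) ∨ Prime (gφ N f π) := by
  by_cases h : π ∣ gs0 N f
  · left
    exact isUnit_of_dvd_unit (map_dvd _ h) (gφ_gs0_unit f)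
  · right
    have h1 : (Ideal.span {π}).IsPrime := (Ideal.span_singleton_prime hπ.ne_zero).2 hπ
    have h2 := IsLocalization.isPrime_of_isPrime_disjoint (Submonoid.powers (gs0 N f)) (gR N f)
      (Ideal.span {π}) h1 (by
        rw [Set.disjoint_left]
        rintro _ ⟨k, rfl⟩ hk
        rw [SetLike.mem_coe, Ideal.mem_span_singleton] at hk
        exact h (hπ.dvd_of_dvd_pow hk))
    rw [Ideal.map_span, Set.image_singleton] at h2
    refine (Ideal.span_singleton_prime ?_).1 h2
    intro h3
    exact hπ.ne_zero (gφ_inj f hf0 (by rw [map_zero]; exact h3))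

theorem gcn_y (f : M[X]) (b : M) (hb : b ≠ 0) (σ : M ≃ₐ[F] M) (hσb : σ b = b)
    (hf : f.map (σ : M →+* M) = f) (i) :
    cn (gσ N f b hb σ hf : gR N f →* gR N f) (gy N f b i) (N + 1) =
      gφ N f (MvPolynomial.C (f * C b⁻¹)) := by
  rw [← gy_prod, cn_eq_prod]
  have h1 : ∀ k i, (gσ N f b hb σ hf : gR N f →* gR N f)^[k] (gy N f b i) = gy N f b (i + k • (1 : Fin (N + 1))) := by
    intro k
    induction k with
    | zero => intro i; simp
    | succ k ih => 
      intro i; rw [Function.iterate_succ_apply', ih]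
      refine (gσ_y f b hb σ hσb hf _).trans ?_
      congr 1; rw [succ_nsmul, add_assoc]
  simp only [h1]
  rw [Finset.prod_range]
  have h2 : ∀ j : Fin (N + 1), (j : ℕ) • (1 : Fin (N + 1)) = j := by
    intro j
    have h3 : ∀ k : ℕ, ((k • (1 : Fin (N + 1)) : Fin (N + 1)) : ℕ) = k % (N + 1) := by
      intro k
      induction k with
      | zero => simp
      | succ k ih => rw [succ_nsmul, Fin.val_add, ih, show ((1 : Fin (N+1)) : ℕ) = 1 % (N+1) from rfl, ← Nat.add_mod]
    apply Fin.ext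
    rw [h3, Nat.mod_eq_of_lt j.2]
  simp only [h2]
  exact Fintype.prod_equiv (Equiv.addLeft i) _ _ (fun j => rfl)

theorem gcn_C (f : M[X]) (b : M) (hb : b ≠ 0) (σ : M ≃ₐ[F] M) 
    (hf : f.map (σ : M →+* M) = f) (m : M) (k) :
    cn (gσ N f b hb σ hf : gR N f →* gR N f) (gφ N f (MvPolynomial.C (C m))) k =
      gφ N f (MvPolynomial.C (C (cn (σ : M →* M) m k))) := by
  refine (cn_map (σ : M →* M) (gσ N f b hb σ hf : gR N f →* gR N f)
    (((gφ N f).comp (MvPolynomial.C.comp C) : M →+* gR N f) : M →* gR N f) ?_ m k).symm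
  intro x
  have := gσ_φ (N := N) f b hb σ hf (MvPolynomial.C (C x))
  rw [gσS_C, Polynomial.map_C] at this
  exact this.symm

theorem gnorm_unit (f : M[X]) (b : M) (hb : b ≠ 0) (σ : M ≃ₐ[F] M) (hσb : σ b = b)
    (hf : f.map (σ : M →+* M) = f) (hfp : Prime f) (hdeg : 0 < f.natDegree)
    (ε : M) (w : gR N f) (hw : IsUnit w)
    (h : cn (gσ N f b hb σ hf : gR N f →* gR N f) w (N + 1) = gφ N f (MvPolynomial.C (C ε))) :
    ∃ m, cn (σ : M →* M) m (N + 1) = ε := by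
  have hf0 := hfp.ne_zero
  set τ : gR N f →* gR N f := ((gσ N f b hb σ hf : gR N f →+* gR N f) : gR N f →* gR N f) with hτ
  let P : gS M N → Prop := fun x => ∃ m : M, m ≠ 0 ∧ ∃ k l : ℕ, cn τ (gφ N f x) (N + 1) =
    gφ N f (MvPolynomial.C (C (cn (σ : M →* M) m (N + 1) * b⁻¹ ^ k) * f ^ (k + (N + 1) * l)))
  have Pmul : ∀ x y, P x → P y → P (x * y) := by
    rintro x y ⟨m, hm, k, l, h1⟩ ⟨m', hm', k', l', h2⟩
    refine ⟨m * m', mul_ne_zero hm hm', k + k', l + l', ?_⟩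
    rw [map_mul, cn_mul, h1, h2, ← map_mul, ← map_mul, cn_mul]
    congr 2
    simp only [map_mul, map_pow]
    ring
  have Punit : ∀ x, IsUnit x → P x := by
    intro x hx
    rw [MvPolynomial.isUnit_iff_eq_C_of_isReduced] at hx
    obtain ⟨g, hg, rfl⟩ := hx
    rw [Polynomial.isUnit_iff] at hg
    obtain ⟨m, hm, rfl⟩ := hg
    refine ⟨m, hm.ne_zero, 0, 0, ?_⟩
    rw [gcn_C]; simp
  have Pf : P (MvPolynomial.C f) := by
    refine ⟨1, one_ne_zero, 0, 1, ?_⟩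
    have : τ (gφ N f (MvPolynomial.C f)) = gφ N f (MvPolynomial.C f) := by
      refine (gσ_φ (N := N) f b hb σ hf _).trans ?_
      rw [gσS_C, hf]
    rw [cn_fixed _ _ this, cn_fixed _ _ (map_one _)]
    simp
  have PX : ∀ i, P (MvPolynomial.X i) := by
    intro i
    refine ⟨1, one_ne_zero, 1, 0, ?_⟩
    rw [← gy_castSucc f b, gcn_y f b hb σ hσb hf, cn_fixed _ _ (map_one _)]
    congr 2
    simp [mul_comm]
  have Pdvd : ∀ K x, x ∣ (gs0 N f) ^ K → P x := by
    intro K x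
    induction x using UniqueFactorizationMonoid.induction_on_prime with
    | h₁ => 
      intro h
      rw [zero_dvd_iff] at h
      exact absurd h (pow_ne_zero _ (gs0_ne f hf0))
    | h₂ x hx => intro _; exact Punit x hx
    | h₃ x π hx hπ ih =>
      intro h
      refine Pmul _ _ ?_ (ih (dvd_of_mul_left_dvd h))
      have h1 : π ∣ gs0 N f := hπ.dvd_of_dvd_pow (dvd_of_mul_right_dvd h)
      change π ∣ MvPolynomial.C f * ∏ i, MvPolynomial.X i at h1
      have key : ∀ q, Prime q → P q → π ∣ q → P π := by
        intro q hq hPq hd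
        obtain ⟨v, hv⟩ := (hπ.associated_of_dvd hq hd).symm
        rw [← hv]
        exact Pmul _ _ hPq (Punit _ v.isUnit)
      rcases hπ.dvd_or_dvd h1 with h1 | h1
      · exact key _ ((MvPolynomial.prime_C_iff _).2 hfp) Pf h1
      · rw [hπ.dvd_finsetProd_iff] at h1
        obtain ⟨i, -, hi⟩ := h1
        exact key _ (MvPolynomial.X_prime) (PX i) hi
  obtain ⟨v, rfl⟩ := hw
  obtain ⟨K, s', hs'⟩ := IsLocalization.Away.surj (gs0 N f) v.1
  obtain ⟨K', s'', hs''⟩ := IsLocalization.Away.surj (gs0 N f) v⁻¹.1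
  change v.1 * gφ N f (gs0 N f) ^ K = gφ N f s' at hs'
  change v⁻¹.1 * gφ N f (gs0 N f) ^ K' = gφ N f s'' at hs''
  have h1 : s' * s'' = gs0 N f ^ (K + K') := by
    apply gφ_inj f hf0
    rw [map_mul, ← hs', ← hs'', map_pow]
    calc _ = (v.1 * v⁻¹.1) * (gφ N f (gs0 N f) ^ K * gφ N f (gs0 N f) ^ K') := by ring
      _ = _ := by rw [Units.mul_inv, one_mul, pow_add]
  obtain ⟨m', hm', k', l', h2⟩ := Pdvd _ s' ⟨s'', h1.symm⟩
  obtain ⟨m, hm, k, l, h3⟩ := Pdvd K _ (dvd_refl _)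
  rw [← hs', cn_mul, h, ← map_pow, h3, ← map_mul, ← map_mul] at h2
  have h4 := MvPolynomial.C_injective _ _ (gφ_inj f hf0 h2)
  rw [← mul_assoc, ← map_mul] at h4
  have hne : ∀ z : M, z ≠ 0 → cn (σ : M →* M) z (N + 1) ≠ 0 := by
    intro z hz
    have := cn_isUnit (σ : M →* M) z (IsUnit.mk0 z hz) (N + 1)
    exact this.ne_zero
  have hbi : b⁻¹ ≠ 0 := inv_ne_zero hb
  have hε : ε ≠ 0 := by
    rintro rfl
    have := cn_isUnit τ v.1 v.isUnit (N + 1)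
    have hd := gR_domain (N := N) f hf0
    rw [h] at this
    simp at this
  have h5 := congrArg Polynomial.natDegree h4
  rw [Polynomial.natDegree_C_mul (mul_ne_zero hε (mul_ne_zero (hne _ hm) (pow_ne_zero _ hbi))),
    Polynomial.natDegree_C_mul (mul_ne_zero (hne _ hm') (pow_ne_zero _ hbi)), natDegree_pow, natDegree_pow] at h5
  have h6 := Nat.eq_of_mul_eq_mul_right hdeg h5
  rw [h6] at h4
  have h7 := C_injective (mul_right_cancel₀ (pow_ne_zero _ hf0) h4)
  have hNb : ∀ j : ℕ, cn (σ : M →* M) (b⁻¹ ^ j) (N + 1) = b⁻¹ ^ ((N + 1) * j) := by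
    intro j
    rw [cn_fixed, ← pow_mul, mul_comm]
    change σ (b⁻¹ ^ j) = _
    rw [map_pow, map_inv₀, hσb]
  have hX : m * b⁻¹ ^ l' ≠ 0 := mul_ne_zero hm (pow_ne_zero _ hbi)
  refine ⟨m' * b⁻¹ ^ l * (m * b⁻¹ ^ l')⁻¹, ?_⟩
  have h8 : cn (σ : M →* M) (m * b⁻¹ ^ l')⁻¹ (N + 1) * cn (σ : M →* M) (m * b⁻¹ ^ l') (N + 1) = 1 := by
    rw [← cn_mul, inv_mul_cancel₀ hX, cn_fixed _ _ (map_one _), one_pow]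
  apply mul_right_cancel₀ (hne _ hX)
  rw [cn_mul, mul_assoc, h8, mul_one, cn_mul, cn_mul, hNb, hNb]
  have hk : b⁻¹ ^ k * b⁻¹ ^ ((N + 1) * l) = b⁻¹ ^ k' * b⁻¹ ^ ((N + 1) * l') := by
    rw [← pow_add, ← pow_add, h6]
  apply mul_right_cancel₀ (pow_ne_zero k hbi)
  calc _ = cn (σ : M →* M) m' (N + 1) * (b⁻¹ ^ k * b⁻¹ ^ ((N + 1) * l)) := by ring
    _ = (cn (σ : M →* M) m' (N + 1) * b⁻¹ ^ k') * b⁻¹ ^ ((N + 1) * l') := by rw [hk]; ring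
    _ = _ := by rw [← h7]; ring
end gen2
end GM

namespace GM

section gen3
open Polynomial
variable {F M : Type u} [Field F] [Field M] [Algebra F M] {N : ℕ}

theorem gθ [Infinite M] (f : M[X]) (hf0 : f ≠ 0) (r : gR N f) (hr : r ≠ 0) :
    ∃ θ : gR N f →ₐ[F] M, θ r ≠ 0 := by
  obtain ⟨K, s, hs⟩ := IsLocalization.Away.surj (gs0 N f) r
  have hd := gR_domain (N := N) f hf0
  have hs0 : s ≠ 0 := by
    rintro rfl
    rw [map_zero] at hs
    exact mul_ne_zero hr (pow_ne_zero _ (gφ_gs0_unit f).ne_zero) hs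
  have h1 : s * gs0 N f ≠ 0 := mul_ne_zero hs0 (gs0_ne f hf0)
  obtain ⟨v, hv⟩ : ∃ v, MvPolynomial.eval v (s * gs0 N f) ≠ 0 := by
    by_contra! h
    exact h1 (MvPolynomial.funext (fun x => by rw [h x, map_zero]))
  obtain ⟨t, ht⟩ : ∃ t, Polynomial.eval t (MvPolynomial.eval v (s * gs0 N f)) ≠ 0 := by
    by_contra! h
    exact hv (Polynomial.funext (fun x => by rw [h x, eval_zero]))
  let θ0 : gS M N →ₐ[F] M := ((Polynomial.aeval t : M[X] →ₐ[M] M).restrictScalars F).comp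
    ((MvPolynomial.aeval v : gS M N →ₐ[M[X]] M[X]).restrictScalars F)
  have hθ0 : ∀ x, θ0 x = Polynomial.eval t (MvPolynomial.eval v x) := by
    intro x
    simp [θ0, Polynomial.coe_aeval_eq_eval]
  rw [← hθ0, map_mul] at ht
  let θ : gR N f →ₐ[F] M := IsLocalization.liftAlgHom (M := Submonoid.powers (gs0 N f)) (f := θ0) (by
    rintro ⟨y, k, rfl⟩
    simp only [map_pow]
    exact (IsUnit.mk0 _ (right_ne_zero_of_mul ht)).pow _)
  have hθ : ∀ x, θ (algebraMap _ _ x) = θ0 x := fun x =>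
    IsLocalization.lift_eq (M := Submonoid.powers (gs0 N f)) (S := gR N f) (g := (θ0 : gS M N →+* M)) _ x
  refine ⟨θ, fun h => ?_⟩
  have := congrArg θ hs
  rw [map_mul, h, zero_mul, hθ] at this
  exact left_ne_zero_of_mul ht this.symm

theorem gf_map (σ : M ≃ₐ[F] M) (a c : M) (ha : σ a = a) (hc : σ c = c) (n : ℕ) :
    (C c - C a * X ^ n : M[X]).map (σ : M →+* M) = C c - C a * X ^ n := by
  simp [ha, hc]

theorem gf_prime (a c : M) (ha : a ≠ 0) (n : ℕ) (hn : n.Prime) (h : ∀ z, a * z ^ n ≠ c) :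
    Prime (C c - C a * X ^ n : M[X]) := by
  have h1 : Irreducible (X ^ n - C (c / a) : M[X]) := by
    apply X_pow_sub_C_irreducible_of_prime hn
    intro z hz
    apply h z
    rw [hz]; field_simp
  have h2 : (C c - C a * X ^ n : M[X]) = C (-a) * (X ^ n - C (c / a)) := by
    rw [mul_sub, ← C_mul, neg_mul, mul_div_cancel₀ _ ha, C_neg, C_neg]; ring
  rw [h2]
  refine ((associated_unit_mul_left _ _ ?_).prime_iff).2 h1.prime
  rw [isUnit_C]
  exact IsUnit.mk0 _ (neg_ne_zero.2 ha)

theorem gf_deg (a c : M) (ha : a ≠ 0) (n : ℕ) (hn : n.Prime) :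
    0 < (C c - C a * X ^ n : M[X]).natDegree := by
  rw [natDegree_sub, natDegree_sub_C, natDegree_C_mul_X_pow _ _ ha]
  exact hn.pos

theorem generic [Infinite M] (p : ℕ) (hp : p.Prime) (σ : M ≃ₐ[F] M) (hσ : σ ^ p = 1)
    (a b c : M) (ha : a ≠ 0) (hb : b ≠ 0) (hσa : σ a = a) (hσb : σ b = b)
    (hσc : σ c = c) (hac : ∀ z, a * z ^ p ≠ c) :
    ∃ (Q : Type u) (_ : Field Q) (_ : Algebra F Q) (j : M →ₐ[F] Q) (σ' : Q ≃ₐ[F] Q),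
      σ' ^ p = 1 ∧ (∀ m, σ' (j m) = j (σ m)) ∧
      (∃ e x, σ' e = e ∧ cn (σ' : Q →* Q) x p * j b = j c - j a * e ^ p) ∧
      (∀ ε, ε ≠ 0 → (∃ z, cn (σ' : Q →* Q) z p = j ε) → ∃ m, cn (σ : M →* M) m p = ε) ∧
      (∀ (C : Type u) [Ring C] [Algebra F C] [FiniteDimensional F C] (n : ℕ), Spl F C Q n → Spl F C M n) := by
  obtain ⟨N, rfl⟩ := Nat.exists_eq_succ_of_ne_zero hp.ne_zero
  set f : M[X] := C c - C a * X ^ (N + 1) with hfdef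
  have hf : f.map (σ : M →+* M) = f := gf_map σ a c hσa hσc _
  have hfp : Prime f := gf_prime a c ha _ hp hac
  have hf0 := hfp.ne_zero
  have hdeg : 0 < f.natDegree := gf_deg a c ha _ hp
  have hdom := gR_domain (N := N) f hf0
  let τ := gσ N f b hb σ hf
  have hτ : ∀ x, τ^[N + 1] x = x := gσ_iter f b hb σ hσb hf hσ
  have hpow : ∀ k (x : gR N f), (τ ^ k) x = τ^[k] x := by
    intro k x; rw [RingHom.coe_pow]
  let e0 : gR N f ≃+* gR N f := RingEquiv.ofRingHom τ (τ ^ N)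
    (RingHom.ext fun x => by
      change τ ((τ ^ N) x) = x
      rw [hpow, ← Function.iterate_succ_apply' τ]; exact hτ x)
    (RingHom.ext fun x => by
      change (τ ^ N) (τ x) = x
      rw [hpow, ← Function.iterate_succ_apply τ]; exact hτ x)
  let e1 : gR N f ≃ₐ[F] gR N f := AlgEquiv.ofRingEquiv (f := e0) (by
    intro r
    have h1 : algebraMap F (gR N f) r = gφ N f (MvPolynomial.C (C (algebraMap F M r))) := rfl
    change τ _ = _
    rw [h1]
    refine (gσ_φ (N := N) f b hb σ hf _).trans ?_
    rw [gσS_C, Polynomial.map_C]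
    simp)
  let Q := FractionRing (gR N f)
  let σ' : Q ≃ₐ[F] Q := IsFractionRing.fieldEquivOfAlgEquiv F Q Q e1
  have hσ' : ∀ r : gR N f, σ' (algebraMap _ Q r) = algebraMap _ Q (τ r) := by
    intro r
    exact IsFractionRing.fieldEquivOfAlgEquiv_algebraMap _ _ _ _ _
  let ι : gR N f →+* Q := algebraMap _ Q
  let cc : M → gR N f := fun m => gφ N f (MvPolynomial.C (C m))
  have hτc : ∀ m, τ (cc m) = cc (σ m) := by
    intro m
    refine (gσ_φ (N := N) f b hb σ hf _).trans ?_
    rw [gσS_C, Polynomial.map_C]; rfl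
  have hιinj : Function.Injective ι := IsFractionRing.injective _ _
  let j : M →ₐ[F] Q :=
    { toRingHom := ι.comp ((gφ N f).comp (MvPolynomial.C.comp C))
      commutes' := fun r => rfl }
  have hj : ∀ m, j m = ι (cc m) := fun m => rfl
  have hcn : ∀ x k, ι (cn (τ : gR N f →* gR N f) x k) = cn (σ' : Q →* Q) (ι x) k :=
    cn_map (τ : gR N f →* gR N f) (σ' : Q →* Q) (ι : gR N f →* Q) (fun x => (hσ' x).symm)
  have hpos : 0 < N + 1 := Nat.succ_pos _
  refine ⟨Q, inferInstance, inferInstance, j, σ', ?_, ?_, ?_, ?_, ?_⟩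
  · have h1 : ∀ k (r : gR N f), (σ' ^ k) (ι r) = ι (τ^[k] r) := by
      intro k
      induction k with
      | zero => intro r; rfl
      | succ k ih => 
        intro r
        rw [pow_succ', AlgEquiv.mul_apply, ih, Function.iterate_succ_apply']
        exact hσ' _
    ext x
    obtain ⟨y, z, -, rfl⟩ := IsFractionRing.div_surjective (gR N f) x
    rw [map_div₀]
    change (σ' ^ (N + 1)) (ι y) / (σ' ^ (N + 1)) (ι z) = _
    rw [h1, h1, hτ, hτ]; rfl
  · intro m
    rw [hj, hj, ← hτc]
    exact hσ' _
  · refine ⟨ι (gφ N f (MvPolynomial.C X)), ι (gy N f b 0), ?_, ?_⟩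
    · refine (hσ' _).trans ?_
      congr 1
      refine (gσ_φ (N := N) f b hb σ hf _).trans ?_
      rw [gσS_C, Polynomial.map_X]
    · rw [← hcn]
      have h1 : cn (τ : gR N f →* gR N f) (gy N f b 0) (N + 1) = _ := gcn_y f b hb σ hσb hf 0
      rw [Nat.succ_eq_add_one, h1, hj, hj, hj]
      simp only [cc]
      rw [← map_mul ι, ← map_mul (gφ N f), ← map_mul, mul_assoc, ← C_mul, inv_mul_cancel₀ hb, C_1, mul_one]
      have h9 := congrArg (fun t => ι (gφ N f (MvPolynomial.C t))) hfdef
      simp only [map_sub, map_mul, map_pow] at h9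
      exact h9
  · rintro ε hε ⟨z, hz⟩
    obtain ⟨r, s, hs0, rfl⟩ := IsFractionRing.div_surjective (gR N f) z
    have hs1 : ι s ≠ 0 := by
      rw [Ne, map_eq_zero_iff ι hιinj]; exact nonZeroDivisors.ne_zero hs0
    obtain ⟨K, t, ht⟩ := IsLocalization.Away.surj (gs0 N f) s
    change s * gφ N f (gs0 N f) ^ K = gφ N f t at ht
    have hu := (gφ_gs0_unit (N := N) f).pow K
    have ht0 : t ≠ 0 := by
      rintro rfl
      rw [map_zero] at ht
      exact mul_ne_zero (nonZeroDivisors.ne_zero hs0) hu.ne_zero ht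
    have h1 : cn (τ : gR N f →* gR N f) (r * gφ N f (gs0 N f) ^ K) (N + 1) = 
        cc ε * cn (τ : gR N f →* gR N f) (gφ N f t) (N + 1) := by
      apply hιinj
      rw [map_mul, hcn, hcn, ← hj, ← hz, ← cn_mul, ← ht, map_mul, map_mul]
      congr 1
      change _ = ι r / ι s * _
      rw [← mul_assoc, div_mul_cancel₀ _ hs1]
    have hεu : IsUnit (cc ε) := by
      simp only [cc]
      exact (((IsUnit.mk0 _ hε).map C).map MvPolynomial.C).map _
    obtain ⟨w, hw, hw2⟩ := lemmaU (gφ N f) (gφ_inj f hf0) (gφ_prime f hf0) τ (N + 1) hpos hτ (cc ε) hεu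
      t ht0 _ h1
    exact gnorm_unit f b hb σ hσb hf hfp hdeg ε w hw hw2
  · intro C _ _ _ n h
    exact specialize (R := gR N f) (Q := Q) (fun r hr => gθ f hf0 r hr) n h
end gen3
end GM

namespace GM

section qb
variable {K : Type*} [Field K]

/-- Gaussian binomial coefficients -/
def gq (q : K) : ℕ → ℕ → K
  | 0, 0 => 1
  | 0, _ + 1 => 0
  | n + 1, 0 => gq q n 0
  | n + 1, k + 1 => q ^ (k + 1) * gq q n (k + 1) + gq q n k

theorem gq_zero (q : K) (n) : gq q n 0 = 1 := by
  induction n with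
  | zero => rfl
  | succ n ih => rw [gq, ih]

theorem gq_lt (q : K) (n k) (h : n < k) : gq q n k = 0 := by
  induction n generalizing k with
  | zero => obtain ⟨k, rfl⟩ := Nat.exists_eq_succ_of_ne_zero h.ne'; rfl
  | succ n ih =>
    obtain ⟨k, rfl⟩ := Nat.exists_eq_succ_of_ne_zero (Nat.ne_of_gt (Nat.lt_of_le_of_lt (Nat.zero_le _) h))
    rw [Nat.succ_eq_add_one, gq, ih _ (by omega), ih _ (by omega)]; simp

theorem gq_self (q : K) (n) : gq q n n = 1 := by
  induction n with
  | zero => rfl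
  | succ n ih => rw [gq, ih, gq_lt _ _ _ (by omega)]; simp

theorem gq_rec (q : K) (n k) : 
    (q ^ (k + 1) - 1) * gq q (n + 1) (k + 1) = (q ^ (n + 1) - 1) * gq q n k := by
  induction n generalizing k with
  | zero =>
    rw [gq]
    cases k with
    | zero => simp [gq]
    | succ k => simp [gq]
  | succ n ih =>
    cases k with
    | zero =>
      have := ih 0
      rw [show gq q (n + 1 + 1) (0 + 1) = q ^ (0 + 1) * gq q (n + 1) (0 + 1) + gq q (n + 1) 0 from rfl,
        gq_zero, mul_add, mul_left_comm, this, gq_zero]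
      ring
    | succ k =>
      have h1 := ih (k + 1)
      have h2 := ih k
      have h3 : gq q (n + 1) (k + 1) = q ^ (k + 1) * gq q n (k + 1) + gq q n k := rfl
      rw [show gq q (n + 1 + 1) (k + 1 + 1) = q ^ (k + 1 + 1) * gq q (n + 1) (k + 1 + 1) + gq q (n + 1) (k + 1) from rfl]
      linear_combination (q ^ (k + 2)) * h1 + q * h2 - q * (q ^ (n + 1) - 1) * h3

theorem gq_vanish (ω : K) (p : ℕ) (hω : IsPrimitiveRoot ω p) (k) (h0 : 0 < k) (h : k < p) :
    gq ω p k = 0 := by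
  obtain ⟨k, rfl⟩ := Nat.exists_eq_succ_of_ne_zero h0.ne'
  obtain ⟨n, rfl⟩ := Nat.exists_eq_succ_of_ne_zero (Nat.ne_of_gt (h0.trans h))
  have := gq_rec ω n k
  rw [show ω ^ (n + 1) = 1 from hω.pow_eq_one, sub_self, zero_mul] at this
  refine (mul_eq_zero.1 this).resolve_left ?_
  rw [sub_eq_zero]
  exact hω.pow_ne_one_of_pos_of_lt (by omega) h

variable {A : Type*} [Ring A] [Algebra K A]

theorem q_comm (ω : K) (X Y : A) (h : X * Y = ω • (Y * X)) (k : ℕ) :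
    X * Y ^ k = ω ^ k • (Y ^ k * X) := by
  induction k with
  | zero => simp
  | succ k ih => 
    rw [pow_succ, ← mul_assoc, ih, smul_mul_assoc, mul_assoc, h, mul_smul_comm, smul_smul, mul_assoc, pow_succ]

theorem q_binom (ω : K) (X Y : A) (h : X * Y = ω • (Y * X)) (n : ℕ) :
    (X + Y) ^ n = ∑ k ∈ Finset.range (n + 1), gq ω n k • (Y ^ k * X ^ (n - k)) := by
  induction n with
  | zero => simp [gq]
  | succ n ih =>
    rw [pow_succ', ih, add_mul, Finset.mul_sum, Finset.mul_sum, Finset.sum_range_succ' _ (n + 1)]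
    have h1 : ∀ k ∈ Finset.range (n + 1), gq ω (n + 1) (k + 1) • (Y ^ (k + 1) * X ^ (n + 1 - (k + 1))) =
        (ω ^ (k + 1) * gq ω n (k + 1)) • (Y ^ (k + 1) * X ^ (n - k)) + Y * (gq ω n k • (Y ^ k * X ^ (n - k))) := by
      intro k hk
      rw [gq, add_smul, mul_smul_comm, ← mul_assoc, ← pow_succ', Nat.add_sub_add_right]
    rw [Finset.sum_congr rfl h1, Finset.sum_add_distrib, add_right_comm]
    congr 1
    rw [Finset.sum_range_succ (fun x => (ω ^ (x + 1) * gq ω n (x + 1)) • (Y ^ (x + 1) * X ^ (n - x))),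
      gq_lt ω n (n + 1) (by omega), mul_zero, zero_smul, add_zero,
      Finset.sum_range_succ', gq_zero, gq_zero]
    congr 1
    · refine Finset.sum_congr rfl fun k hk => ?_
      rw [mul_smul_comm, ← mul_assoc, q_comm ω X Y h, smul_mul_assoc, smul_smul, mul_assoc, ← pow_succ', mul_comm]
      rw [Finset.mem_range] at hk
      congr 4
      omega
    · simp [pow_succ']

theorem q_frob (ω : K) (p : ℕ) (hp : 0 < p) (hω : IsPrimitiveRoot ω p) (X Y : A) (h : X * Y = ω • (Y * X)) :
    (X + Y) ^ p = X ^ p + Y ^ p := by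
  obtain ⟨n, rfl⟩ := Nat.exists_eq_succ_of_ne_zero hp.ne'
  rw [q_binom ω X Y h, Finset.sum_range_succ, Finset.sum_range_succ', Finset.sum_eq_zero]
  · simp [gq_zero, gq_self]
  · intro k hk
    rw [Finset.mem_range] at hk
    rw [gq_vanish ω _ hω _ (by omega) (by omega), zero_smul]
end qb

section ar
open Polynomial
variable {K A : Type*} [Field K] [Ring A] [Algebra K A]

noncomputable def arLift (f : K[X]) (x : A) (h : aeval x f = 0) : AdjoinRoot f →ₐ[K] A :=
  Ideal.Quotient.liftₐ (Ideal.span {f}) (aeval x) (fun a ha => by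
    rw [Ideal.mem_span_singleton] at ha
    obtain ⟨b, rfl⟩ := ha
    rw [map_mul, h, zero_mul])

theorem arLift_mk (f : K[X]) (x : A) (h : aeval x f = 0) (g : K[X]) :
    arLift f x h (AdjoinRoot.mk f g) = aeval x g := rfl

theorem arLift_root (f : K[X]) (x : A) (h : aeval x f = 0) :
    arLift f x h (AdjoinRoot.root f) = x := (arLift_mk f x h X).trans (aeval_X _)
end ar

section lemA
variable {K Δ : Type*} [Field K] [DivisionRing Δ] [Algebra K Δ] [Algebra.IsCentral K Δ]
  [FiniteDimensional K Δ]

theorem mem_range_of_central (x : Δ) (h : ∀ y, y * x = x * y) : ∃ k : K, algebraMap K Δ k = x := by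
  have h1 : x ∈ Subalgebra.center K Δ := Subalgebra.mem_center_iff.2 h
  rw [Algebra.IsCentral.center_eq_bot K Δ] at h1
  exact Algebra.mem_bot.1 h1

theorem minpoly_deg (p : ℕ) (hp : p.Prime) (hfr : Module.finrank K Δ = p ^ 2) (x : Δ)
    (hx : ∀ k : K, algebraMap K Δ k ≠ x) : (minpoly K x).natDegree = p := by
  have hint : IsIntegral K x := Algebra.IsIntegral.isIntegral x
  have hirr := minpoly.irreducible hint
  let _ : Fact (Irreducible (minpoly K x)) := ⟨hirr⟩
  let L := AdjoinRoot (minpoly K x)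
  let φ : L →ₐ[K] Δ := arLift (minpoly K x) x (minpoly.aeval K x)
  let _ : Module L Δ := Module.compHom Δ (φ : L →+* Δ)
  have hsm : ∀ (l : L) (d : Δ), l • d = φ l * d := fun _ _ => rfl
  have _ : IsScalarTower K L Δ := ⟨fun k l d => by
    rw [hsm, hsm, map_smul, smul_mul_assoc]⟩
  have h1 := Module.finrank_mul_finrank K L Δ
  have h2 : Module.finrank K L = (minpoly K x).natDegree := by
    rw [(AdjoinRoot.powerBasis (minpoly.ne_zero hint)).finrank, AdjoinRoot.powerBasis_dim]
  rw [hfr, h2] at h1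
  have h3 : (minpoly K x).natDegree ∣ p ^ 2 := ⟨_, h1.symm⟩
  rw [Nat.dvd_prime_pow hp] at h3
  obtain ⟨k, hk, h3⟩ := h3
  interval_cases k
  · exfalso
    rw [pow_zero, minpoly.natDegree_eq_one_iff] at h3
    obtain ⟨k, hk⟩ := h3
    exact hx k hk
  · rw [h3, pow_one]
  · exfalso
    have hinj : Function.Injective φ.toLinearMap := (φ : L →+* Δ).injective
    have _ : FiniteDimensional K L := FiniteDimensional.of_injective φ.toLinearMap hinj
    have hs := (LinearMap.injective_iff_surjective_of_finrank_eq_finrank (f := φ.toLinearMap)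
      (by rw [h2, h3, hfr])).1 hinj
    have hcomm : ∀ y z : Δ, y * z = z * y := by
      intro y z
      obtain ⟨a, rfl⟩ := hs y
      obtain ⟨b, rfl⟩ := hs z
      change φ a * φ b = φ b * φ a
      rw [← map_mul, mul_comm, map_mul]
    obtain ⟨k, hk⟩ := mem_range_of_central (K := K) x (fun y => hcomm y x)
    exact hx k hk
end lemA
end GM

namespace GM
open Polynomial
section lemC
variable {K Δ : Type*} [Field K] [DivisionRing Δ] [Algebra K Δ] [Algebra.IsCentral K Δ]
  [FiniteDimensional K Δ]

theorem exists_v (p : ℕ) (hp : p.Prime) (hfr : Module.finrank K Δ = p ^ 2) (hpK : (p : K) ≠ 0)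
    (ω : K) (hω : IsPrimitiveRoot ω p) (u : Δ) (a : K) (hua : u ^ p = algebraMap K Δ a)
    (hu : ∀ k : K, algebraMap K Δ k ≠ u) :
    ∃ (v : Δ) (b : K), b ≠ 0 ∧ v ^ p = algebraMap K Δ b ∧ u * v = ω • (v * u) := by
  have hu0 : u ≠ 0 := fun h => hu 0 (by rw [h, map_zero])
  have hω0 : ω ≠ 0 := hω.ne_zero hp.ne_zero
  -- first an eigenvector
  let Y : Δ → ℕ → Δ := fun y i => ∑ j ∈ Finset.range p, (ω⁻¹ ^ (i * j)) • (u ^ j * y * u⁻¹ ^ j)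
  have hY : ∀ y i, u * Y y i = ω ^ i • (Y y i * u) := by
    intro y i
    have h1 : u * Y y i * u⁻¹ = ω ^ i • Y y i := by
      simp only [Y, Finset.mul_sum, Finset.sum_mul, Finset.smul_sum]
      let G : ℕ → Δ := fun j => (ω ^ i) • ((ω⁻¹ ^ (i * j)) • (u ^ j * y * u⁻¹ ^ j))
      have h2 : ∀ j, u * ((ω⁻¹ ^ (i * j)) • (u ^ j * y * u⁻¹ ^ j)) * u⁻¹ = G (j + 1) := by
        intro j
        simp only [G, smul_smul]
        rw [mul_smul_comm, smul_mul_assoc]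
        have : ω ^ i * ω⁻¹ ^ (i * (j + 1)) = ω⁻¹ ^ (i * j) := by
          rw [mul_add, mul_one, pow_add, mul_left_comm, ← mul_pow, mul_inv_cancel₀ hω0, one_pow, mul_one]
        rw [this, pow_succ' u, pow_succ u⁻¹]
        simp only [mul_assoc]
      simp only [h2]
      change ∑ j ∈ Finset.range p, G (j + 1) = ∑ j ∈ Finset.range p, G j
      have h3 := Finset.sum_range_succ' G p
      rw [Finset.sum_range_succ] at h3
      have h4 : G p = G 0 := by
        have hinv : u⁻¹ ^ p = (algebraMap K Δ a)⁻¹ := by rw [inv_pow, hua]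
        have ha0 : algebraMap K Δ a ≠ 0 := by rw [← hua]; exact pow_ne_zero _ hu0
        simp only [G]
        rw [mul_comm i p, pow_mul, inv_pow ω, hω.pow_eq_one, hua, hinv, Algebra.commutes, 
          mul_inv_cancel_right₀ ha0]
        simp
      rw [h4] at h3
      exact (add_right_cancel h3).symm
    rw [← smul_mul_assoc, ← h1, inv_mul_cancel_right₀ hu0]
  obtain ⟨w, i, hi0, hip, hw, hwi⟩ : ∃ (w : Δ) (i : ℕ), 0 < i ∧ i < p ∧ w ≠ 0 ∧ u * w = ω ^ i • (w * u) := by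
    by_contra! hcon
    apply absurd (mem_range_of_central (K := K) u ?_)
    · push Not
      exact hu
    · intro y
      have hz : ∀ i, 0 < i → i < p → Y y i = 0 := by
        intro i h1 h2
        by_contra h3
        exact hcon _ i h1 h2 h3 (hY y i)
      have hsum : ∑ i ∈ Finset.range p, Y y i = (p : K) • y := by
        simp only [Y]
        rw [Finset.sum_comm]
        simp only [← Finset.sum_smul]
        obtain ⟨n, rfl⟩ := Nat.exists_eq_succ_of_ne_zero hp.ne_zero
        rw [Finset.sum_range_succ', Finset.sum_eq_zero]
        · simp
        · intro j hj
          rw [Finset.mem_range] at hj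
          have h1 : ω⁻¹ ^ (j + 1) ≠ 1 := by
            rw [inv_pow, Ne, inv_eq_one]
            exact hω.pow_ne_one_of_pos_of_lt (by omega) (by omega)
          have h2 : ∑ i ∈ Finset.range (n + 1), ω⁻¹ ^ (i * (j + 1)) = 0 := by
            simp only [mul_comm _ (j + 1), pow_mul]
            rw [geom_sum_eq h1, ← pow_mul, mul_comm, pow_mul, inv_pow, hω.pow_eq_one]
            simp
          rw [Nat.succ_eq_add_one, h2, zero_smul]
      have h0 : ∑ i ∈ Finset.range p, Y y i = Y y 0 := by
        rw [Finset.sum_eq_single_of_mem 0 (Finset.mem_range.2 hp.pos)]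
        intro i hi hi0
        exact hz i (Nat.pos_of_ne_zero hi0) (Finset.mem_range.1 hi)
      have h1 := hY y 0
      rw [← h0, hsum, pow_zero, one_smul, mul_smul_comm, smul_mul_assoc] at h1
      exact ((smul_right_injective Δ hpK) h1).symm
  obtain ⟨k, hk⟩ : ∃ k, ω ^ (i * k) = ω := by
    have hc : Nat.Coprime i p := (hp.coprime_iff_not_dvd.2 (Nat.not_dvd_of_pos_of_lt hi0 hip)).symm
    obtain ⟨m, hm⟩ := Nat.exists_mul_mod_eq_one_of_coprime hc hp.one_lt
    refine ⟨m, ?_⟩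
    rw [← Nat.div_add_mod (i * m) p, pow_add, pow_mul, hω.pow_eq_one, one_pow, one_mul]
    rw [hm.2, pow_one]
  have hv := q_comm (ω ^ i) u w hwi k
  rw [← pow_mul, hk] at hv
  set v := w ^ k with hvdef
  have hv0 : v ≠ 0 := pow_ne_zero _ hw
  have hvK : ∀ t : K, algebraMap K Δ t ≠ v := by
    intro t ht
    rw [← ht, ← Algebra.commutes, ← sub_eq_zero] at hv
    have h1 : (1 - ω) • (algebraMap K Δ t * u) = 0 := by rw [sub_smul, one_smul, hv]
    rw [smul_eq_zero, sub_eq_zero, ht] at h1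
    rcases h1 with h1 | h1
    · exact hω.ne_one hp.one_lt h1.symm
    · exact mul_ne_zero hv0 hu0 h1
  have hint : IsIntegral K v := Algebra.IsIntegral.isIntegral v
  set m := minpoly K v with hm
  have hdeg : m.natDegree = p := minpoly_deg p hp hfr v hvK
  have hmon : m.Monic := minpoly.monic hint
  have hconj : ∀ q : K[X], u * aeval v q = aeval v (q.comp (C ω * X)) * u := by
    intro q
    induction q using Polynomial.induction_on' with
    | add q r hq hr => rw [map_add, mul_add, hq, hr, add_comp, map_add, add_mul]
    | monomial n c =>
      rw [← C_mul_X_pow_eq_monomial]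
      simp only [mul_comp, C_comp, pow_comp, X_comp, map_mul, map_pow, aeval_C, aeval_X]
      rw [← mul_assoc, ← Algebra.commutes, mul_assoc, q_comm ω u v hv, ← Algebra.smul_def, ← Algebra.smul_def,
        ← Algebra.smul_def, _root_.smul_pow, smul_mul_assoc, smul_mul_assoc]
  have hcomp : m.comp (C ω * X) = m := by
    by_contra hne
    have h1 : m.comp (C ω * X) - m ≠ 0 := sub_ne_zero.2 hne
    have h2 : aeval v (m.comp (C ω * X) - m) = 0 := by
      have h3 := hconj m
      rw [minpoly.aeval, mul_zero] at h3
      rw [map_sub, minpoly.aeval, sub_zero]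
      exact (mul_eq_zero.1 h3.symm).resolve_right hu0
    have h3 := minpoly.degree_le_of_ne_zero K v h1 h2
    rw [← hm, degree_eq_natDegree hmon.ne_zero, hdeg] at h3
    refine absurd ((degree_lt_iff_coeff_zero _ _).2 ?_) (not_lt.2 h3)
    intro i hi
    rw [coeff_sub, comp_C_mul_X_coeff]
    rcases hi.eq_or_lt with rfl | hi
    · rw [hω.pow_eq_one]; ring
    · rw [coeff_eq_zero_of_natDegree_lt (by omega)]; ring
  have hco : ∀ i, 0 < i → i < p → m.coeff i = 0 := by
    intro i hi hip
    have h1 := congrArg (fun q => q.coeff i) hcomp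
    simp only [comp_C_mul_X_coeff] at h1
    have h2 := hω.pow_ne_one_of_pos_of_lt hi.ne' hip
    have h3 : m.coeff i * (ω ^ i - 1) = 0 := by rw [mul_sub, h1]; ring
    exact (mul_eq_zero.1 h3).resolve_right (sub_ne_zero.2 h2)
  have hm2 : m = X ^ p + C (m.coeff 0) := by
    ext i
    rw [coeff_add, coeff_X_pow, coeff_C]
    rcases Nat.eq_zero_or_pos i with rfl | hi
    · simp [hp.ne_zero.symm]
    · rcases lt_trichotomy i p with h | h | h
      · rw [hco i hi h]; simp [h.ne, hi.ne']
      · subst h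
        have : m.coeff i = 1 := by rw [← hdeg]; exact hmon
        rw [this]; simp [hi.ne']
      · rw [coeff_eq_zero_of_natDegree_lt (by omega)]; simp [h.ne', hi.ne']
  have hfin := minpoly.aeval K v
  rw [← hm, hm2, map_add, map_pow, aeval_X, aeval_C, ← eq_neg_iff_add_eq_zero, ← map_neg] at hfin
  refine ⟨v, -m.coeff 0, ?_, hfin, hv⟩
  intro h
  rw [h, map_zero] at hfin
  exact pow_ne_zero _ hv0 hfin
end lemC
end GM

namespace GM
open Polynomial

def Keep (F : Type u) [Field F] (p : ℕ) (K K' : Type u) [Field K] [Algebra F K] [Field K']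
    [Algebra F K'] : Prop :=
  ∀ (C : Type u) [Ring C] [Algebra F C] (n : ℕ), Nice F C p n → Spl F C K' n → Spl F C K n

section lemD
variable {K Q A : Type*} [Field K] [Field Q] [Algebra K Q] [Ring A] [Algebra K A]

theorem lemD (p : ℕ) (hp : 0 < p) (ω : K) (hω : IsPrimitiveRoot ω p) (a b c e : K)
    (hirr : Irreducible (X ^ p - C a : K[X])) (σ : Q →ₐ[K] Q) (r : Q) (hr : r ^ p = algebraMap K Q a)
    (hσr : σ r = ω • r) (hfr : Module.finrank K Q = p)
    (u v : A) (hu : u ^ p = algebraMap K A a) (hv : v ^ p = algebraMap K A b)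
    (huv : u * v = ω • (v * u)) (x : Q)
    (hx : cn (σ : Q →* Q) x p * algebraMap K Q b = algebraMap K Q c - algebraMap K Q a * algebraMap K Q e ^ p) :
    ∃ d : A, d ^ p = algebraMap K A c := by
  let _ : Fact (Irreducible (X ^ p - C a : K[X])) := ⟨hirr⟩
  let f1 : AdjoinRoot (X ^ p - C a : K[X]) →ₐ[K] Q := arLift _ r (by simp [hr])
  have _ : FiniteDimensional K Q := Module.finite_of_finrank_pos (by omega)
  have hinj : Function.Injective f1.toLinearMap := (f1 : AdjoinRoot (X ^ p - C a : K[X]) →+* Q).injective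
  have _ : FiniteDimensional K (AdjoinRoot (X ^ p - C a : K[X])) :=
    FiniteDimensional.of_injective f1.toLinearMap hinj
  have hs := (LinearMap.injective_iff_surjective_of_finrank_eq_finrank (f := f1.toLinearMap) (by
    rw [(AdjoinRoot.powerBasis hirr.ne_zero).finrank, AdjoinRoot.powerBasis_dim, natDegree_X_pow_sub_C, hfr])).1 hinj
  let e1 := AlgEquiv.ofBijective f1 ⟨hinj, hs⟩
  let φ : Q →ₐ[K] A := (arLift (X ^ p - C a : K[X]) u (by simp [hu])).comp (e1.symm : Q →ₐ[K] AdjoinRoot (X ^ p - C a : K[X]))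
  have hφP : ∀ P : K[X], φ (aeval r P) = aeval u P := by
    intro P
    have h1 : e1.symm (aeval r P) = AdjoinRoot.mk _ P := by
      rw [AlgEquiv.symm_apply_eq]; rfl
    change arLift (X ^ p - C a : K[X]) u (by simp [hu]) (e1.symm (aeval r P)) = _
    rw [h1, arLift_mk]
  have hrep : ∀ x, ∃ P : K[X], aeval r P = x := by
    intro x
    obtain ⟨y, hy⟩ := hs x
    obtain ⟨P, rfl⟩ := AdjoinRoot.mk_surjective y
    exact ⟨P, hy⟩
  have hφr : φ r = u := by simpa using hφP X
  have hcomm : ∀ x, φ x * v = v * φ (σ x) := by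
    intro x
    obtain ⟨P, rfl⟩ := hrep x
    induction P using Polynomial.induction_on' with
    | add P R hP hR => simp only [map_add, add_mul, mul_add, hP, hR]
    | monomial n c =>
      have h1 : ∀ n, u ^ n * v = v * (ω • u) ^ n := by
        intro n
        induction n with
        | zero => simp
        | succ n ih => 
          rw [pow_succ, mul_assoc, huv, mul_smul_comm, ← mul_assoc, ih, pow_succ, mul_assoc, mul_smul_comm, mul_smul_comm]
      simp only [aeval_monomial, map_mul, map_pow, AlgHom.commutes, hσr, hφr, map_smul]
      rw [mul_assoc, h1, ← mul_assoc, Algebra.commutes, mul_assoc]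
  have hpow : ∀ k, (v * φ x) ^ k = v ^ k * φ (cn (σ : Q →* Q) x k) := by
    intro k
    induction k with
    | zero => simp
    | succ k ih =>
      rw [pow_succ, ih, cn_succ, pow_succ]
      have h1 := hcomm (cn (σ : Q →* Q) x k)
      calc _ = v ^ k * (φ (cn (σ : Q →* Q) x k) * v) * φ x := by simp only [mul_assoc]
        _ = v ^ k * v * (φ (σ (cn (σ : Q →* Q) x k)) * φ x) := by rw [h1]; simp only [mul_assoc]
        _ = _ := by rw [← map_mul, mul_comm x]; rfl
  refine ⟨e • u + v * φ x, ?_⟩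
  rw [q_frob ω p hp hω, hpow, _root_.smul_pow, hu, hv]
  · have h1 := congrArg φ hx
    simp only [map_mul, map_sub, map_pow, AlgHom.commutes] at h1
    rw [Algebra.commutes, h1, Algebra.smul_def, map_pow, Algebra.commutes]
    abel
  · have h1 := hcomm x
    have h2 : u * φ x = φ x * u := by rw [← hφr, ← map_mul, mul_comm, map_mul]
    rw [smul_mul_assoc, ← mul_assoc, huv, smul_mul_assoc, mul_assoc, h2, mul_smul_comm, ← mul_assoc,
      smul_comm]
end lemD

section keep
theorem keep_cyc {F K M Q : Type u} [Field F] [Field K] [Algebra F K] [Field M] [Algebra F M]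
    [Field Q] [Algebra F Q] (p : ℕ) (hp : 0 < p) (i : K →ₐ[F] M) (σ : M ≃ₐ[F] M) (hσ : σ ^ p = 1)
    (hd : ∀ i < p, ∀ j < p, σ ^ i = σ ^ j → i = j) (hfix : ∀ m, σ m = m → ∃ k, i k = m)
    (j : M →ₐ[F] Q) (σ' : Q ≃ₐ[F] Q) (hσ' : σ' ^ p = 1) (hj : ∀ m, σ' (j m) = j (σ m))
    (hnorm : ∀ ε, ε ≠ 0 → (∃ z, cn (σ' : Q →* Q) z p = j ε) → ∃ m, cn (σ : M →* M) m p = ε)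
    (hspl : ∀ (C : Type u) [Ring C] [Algebra F C] [FiniteDimensional F C] (n : ℕ), Spl F C Q n → Spl F C M n)
    (K' : IntermediateField F Q) (hK' : ∀ x ∈ K', σ' x = x) : Keep F p K K' := by
  intro C _ _ n hN ⟨ρ⟩
  obtain ⟨h1, h2, h3⟩ := hN.csa
  let ρQ : C →ₐ[F] Matrix (Fin n) (Fin n) Q := K'.val.mapMatrix.comp ρ
  have hρQ : ∀ c, tw σ' (ρQ c) = ρQ c := by
    intro c
    ext a b
    exact hK' _ (ρ c a b).2
  obtain ⟨ρM⟩ := hspl C n ⟨ρQ⟩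
  have hC : Module.finrank F C = Fintype.card (Fin n) ^ 2 := by rw [Fintype.card_fin]; exact hN.fr
  have : Nonempty (Fin n) := ⟨⟨0, hN.npos⟩⟩
  obtain ⟨g, hg⟩ := desc_data hC ρM σ
  obtain ⟨e, he0, hσe, he⟩ := desc_scalar hC ρM σ p hσ g hg
  let J : Matrix (Fin n) (Fin n) M →ₐ[F] Matrix (Fin n) (Fin n) Q := j.mapMatrix
  have hJ : ∀ X, J (tw σ X) = tw σ' (J X) := by
    intro X
    ext a b
    exact (hj _).symm
  let g' : GL (Fin n) Q := Units.map (J : Matrix (Fin n) (Fin n) M →* Matrix (Fin n) (Fin n) Q) g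
  have hg' : ∀ c, g'.1 * tw σ' (J.comp ρM c) = J.comp ρM c * g'.1 := by
    intro c
    have := congrArg J (hg c)
    rw [map_mul, map_mul, hJ] at this
    exact this
  obtain ⟨k, hk⟩ := desc_norm hC (J.comp ρM) ρQ σ' p hσ' g' hg' hρQ (j e) (by
    have h4 := cn_map (tw σ) (tw σ') (φ := (J : Matrix (Fin n) (Fin n) M →* Matrix (Fin n) (Fin n) Q)) hJ g.1 p
    erw [he] at h4
    refine h4.symm.trans ?_
    ext a b
    change j (algebraMap M (Matrix _ _ M) e a b) = _
    simp only [Matrix.algebraMap_matrix_apply]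
    split_ifs <;> simp)
  obtain ⟨h, hh⟩ := hnorm e he0 ⟨k, hk⟩
  obtain ⟨ρ', hρ'⟩ := desc_descend ρM σ p hp hσ hd g hg e h he0 he hh
  obtain ⟨ρ0, -⟩ := rep_factor i (i : K →+* M).injective ρ' (fun c a b => hfix _ (by
    have := congrFun (congrFun (hρ' c) a) b
    exact this))
  exact ⟨ρ0⟩
end keep
end GM

namespace GM
open Polynomial

section kum
variable {K : Type*} [Field K]

theorem kum_sigma (p : ℕ) (hp : p.Prime) (ω : K) (hω : IsPrimitiveRoot ω p) (a : K)
    (hirr : Irreducible (X ^ p - C a : K[X])) [Fact (Irreducible (X ^ p - C a : K[X]))] :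
    ∃ σ : AdjoinRoot (X ^ p - C a : K[X]) ≃ₐ[K] AdjoinRoot (X ^ p - C a : K[X]),
      σ ^ p = 1 ∧ σ (AdjoinRoot.root _) = ω • AdjoinRoot.root _ ∧
      (∀ i < p, ∀ j < p, σ ^ i = σ ^ j → i = j) ∧ (∀ m, σ m = m → ∃ k, algebraMap K _ k = m) := by
  have _ : NeZero p := ⟨hp.ne_zero⟩
  have hpr : (primitiveRoots p K).Nonempty := ⟨ω, (mem_primitiveRoots hp.pos).2 hω⟩
  let η : rootsOfUnity p K := hω.toRootsOfUnity
  let Ψ := autAdjoinRootXPowSubCEquiv hpr hirr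
  have hη : IsPrimitiveRoot η p := by
    refine IsPrimitiveRoot.coe_submonoidClass_iff.1 (IsPrimitiveRoot.coe_units_iff.1 ?_)
    exact hω
  have hr : Ψ η (AdjoinRoot.root _) = ω • AdjoinRoot.root _ := autAdjoinRootXPowSubC_root a η
  have hpow : (Ψ η) ^ p = 1 := by rw [← map_pow, hη.pow_eq_one, map_one]
  refine ⟨Ψ η, hpow, hr, ?_, ?_⟩
  · intro i hi j hj h
    rw [← map_pow, ← map_pow] at h
    exact hη.pow_inj hi hj (Ψ.injective h)
  · intro m hm
    have _ : IsSplittingField K (AdjoinRoot (X ^ p - C a : K[X])) (X ^ p - C a) :=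
      isSplittingField_AdjoinRoot_X_pow_sub_C hpr hirr
    have _ : IsGalois K (AdjoinRoot (X ^ p - C a : K[X])) :=
      isGalois_of_isSplittingField_X_pow_sub_C hpr hirr _
    have _ : FiniteDimensional K (AdjoinRoot (X ^ p - C a : K[X])) :=
      (AdjoinRoot.powerBasis hirr.ne_zero).finite
    have h1 := (IsGalois.mem_bot_iff_fixed (F := K) m).2 (by
      intro τ
      obtain ⟨ζ, rfl⟩ := Ψ.surjective τ
      have hz : (ζ.1 : K) ^ p = 1 := by
        have := (mem_rootsOfUnity' p ζ.1).1 ζ.2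
        exact this
      obtain ⟨i, hi, hi2⟩ := hω.eq_pow_of_pow_eq_one hz
      have : ζ = η ^ i := by
        ext
        simp [η, ← hi2]
      rw [this, map_pow]
      clear this hi2 hi
      induction i with
      | zero => rfl
      | succ i ih => rw [pow_succ, AlgEquiv.mul_apply, hm, ih])
    exact h1
end kum

section tmap
variable {F K K' : Type*} [Field F] [CommRing K] [Algebra F K] [CommRing K'] [Algebra F K']

noncomputable def tmap (φ : K →ₐ[F] K') (D : Type*) [Ring D] [Algebra F D] :
    K ⊗[F] D →ₐ[F] K' ⊗[F] D := Algebra.TensorProduct.map φ (AlgHom.id F D)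

variable (φ : K →ₐ[F] K') {D : Type*} [Ring D] [Algebra F D]

theorem tmap_alg (k : K) :
    tmap φ D (algebraMap K (K ⊗[F] D) k) = algebraMap K' (K' ⊗[F] D) (φ k) := by
  rw [Algebra.TensorProduct.algebraMap_apply, Algebra.TensorProduct.algebraMap_apply]
  simp [tmap]

theorem tmap_smul (k : K) (y : K ⊗[F] D) : tmap φ D (k • y) = φ k • tmap φ D y := by
  rw [Algebra.smul_def, map_mul, tmap_alg, ← Algebra.smul_def]

theorem tmap_aeval (f : K[X]) (y : K ⊗[F] D) :
    tmap φ D (aeval y f) = aeval (tmap φ D y) (f.map (φ : K →+* K')) := by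
  induction f using Polynomial.induction_on' with
  | add P R hP hR => simp only [map_add, Polynomial.map_add, hP, hR]
  | monomial n c => 
    rw [Polynomial.map_monomial, aeval_monomial, aeval_monomial, map_mul, tmap_alg, map_pow]
    rfl
end tmap

theorem cyc_step {F K1 : Type u} [Field F] [Field K1] [Algebra F K1] [Infinite K1] (p : ℕ)
    (hp : p.Prime) (ω : K1) (hω : IsPrimitiveRoot ω p) (D : Type u) [Ring D] [Algebra F D]
    (a b c : K1) (hb : b ≠ 0) (hirr : Irreducible (X ^ p - C a : K1[X])) (u v : K1 ⊗[F] D)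
    (hu : u ^ p = algebraMap K1 _ a) (hv : v ^ p = algebraMap K1 _ b) (huv : u * v = ω • (v * u)) :
    ∃ (K' : Type u) (_ : Field K') (_ : Algebra F K') (φ : K1 →ₐ[F] K'), Keep F p K1 K' ∧
      ∃ d : K' ⊗[F] D, d ^ p = algebraMap K' _ (φ c) := by
  have _ : Fact (Irreducible (X ^ p - C a : K1[X])) := ⟨hirr⟩
  obtain ⟨σ, hσp, hσr, hσd, hσf⟩ := kum_sigma p hp ω hω a hirr
  let M := AdjoinRoot (X ^ p - C a : K1[X])
  have hrp : (AdjoinRoot.root (X ^ p - C a : K1[X])) ^ p = algebraMap K1 M a := by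
    have := AdjoinRoot.eval₂_root (X ^ p - C a : K1[X])
    simp only [eval₂_sub, eval₂_X_pow, eval₂_C] at this
    exact sub_eq_zero.1 this
  by_cases hac : ∃ z : M, algebraMap K1 M a * z ^ p = algebraMap K1 M c
  · obtain ⟨z, hz⟩ := hac
    refine ⟨K1, _, _, AlgHom.id F K1, fun C _ _ n _ h => h, 
      arLift (X ^ p - C a : K1[X]) u (by simp [hu]) (AdjoinRoot.root _ * z), ?_⟩
    rw [← map_pow, mul_pow, hrp, hz, AlgHom.commutes]
    rfl
  push Not at hac
  have _ : Infinite M := Infinite.of_injective _ (algebraMap K1 M).injective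
  have ha : a ≠ 0 := by
    rintro rfl
    rw [map_zero, sub_zero] at hirr
    exact not_irreducible_pow hp.ne_one hirr
  let σF : M ≃ₐ[F] M := σ.restrictScalars F
  have hσFpow : ∀ i x, (σF ^ i) x = (σ ^ i) x := by
    intro i
    induction i with
    | zero => intro x; rfl
    | succ i ih => intro x; rw [pow_succ, pow_succ, AlgEquiv.mul_apply, AlgEquiv.mul_apply]; exact ih _
  have hσFp : σF ^ p = 1 := by
    ext x
    rw [hσFpow, hσp]; rfl
  obtain ⟨Q, _, _, j, σ', hσ'p, hj, ⟨e, x, he, hx⟩, hnorm, hspl⟩ := generic p hp σF hσFp (algebraMap K1 M a)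
    (algebraMap K1 M b) (algebraMap K1 M c) (by simpa using ha) (by simpa using hb)
    (σ.commutes a) (σ.commutes b) (σ.commutes c) hac
  let K' : IntermediateField F Q := IntermediateField.fixedField (Subgroup.zpowers σ')
  have hK'1 : ∀ x ∈ K', σ' x = x := fun x hx =>
    (IntermediateField.mem_fixedField_iff _ _).1 hx σ' (Subgroup.mem_zpowers _)
  have hK'2 : ∀ x, σ' x = x → x ∈ K' := by
    intro x hx
    refine (IntermediateField.mem_fixedField_iff _ _).2 ?_
    rintro f ⟨i, rfl⟩
    have : σ' ∈ MulAction.stabilizer (Q ≃ₐ[F] Q) x := hx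
    exact Subgroup.zpow_mem _ this i
  let φ : K1 →ₐ[F] K' := 
    { toFun := fun k => ⟨j (algebraMap K1 M k), hK'2 _ (by rw [hj]; exact congrArg j (σ.commutes k))⟩
      map_one' := by ext; simp
      map_mul' := by intro x y; ext; simp
      map_zero' := by ext; simp
      map_add' := by intro x y; ext; simp
      commutes' := by intro x; ext; simp [← IsScalarTower.algebraMap_apply] }
  have hφ : ∀ k, algebraMap K' Q (φ k) = j (algebraMap K1 M k) := fun k => rfl
  refine ⟨K', inferInstance, inferInstance, φ, ?_, ?_⟩
  · refine keep_cyc p hp.pos (IsScalarTower.toAlgHom F K1 M) σF hσFp ?_ hσf j σ' hσ'p hj hnorm hspl K' hK'1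
    intro i hi k hk h
    refine hσd i hi k hk ?_
    ext x
    rw [← hσFpow, ← hσFpow, h]
  let r : Q := j (AdjoinRoot.root _)
  have hr : r ^ p = algebraMap K' Q (φ a) := by rw [hφ, ← map_pow, hrp]
  have hσ'r : σ' r = algebraMap K' Q (φ ω) * r := by
    rw [hφ, hj, ← map_mul, ← Algebra.smul_def]
    exact congrArg j hσr
  have hr0 : r ≠ 0 := by
    intro h
    rw [h, zero_pow hp.ne_zero, eq_comm, map_eq_zero, map_eq_zero] at hr
    exact ha hr
  have hω' : IsPrimitiveRoot (φ ω) p := hω.map_of_injective (φ : K1 →+* K').injective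
  have hω1 : φ ω ≠ 1 := hω'.ne_one hp.one_lt
  have hirr' : Irreducible (X ^ p - C (φ a) : K'[X]) := by
    refine X_pow_sub_C_irreducible_of_prime hp ?_
    intro b' hb'
    have h1 : (r / algebraMap K' Q b') ^ p = 1 := by
      rw [div_pow, hr, ← map_pow, hb', div_self]
      rw [Ne, map_eq_zero, map_eq_zero]; exact ha
    have hω'' : IsPrimitiveRoot (algebraMap K' Q (φ ω)) p := hω'.map_of_injective (algebraMap K' Q).injective
    have hb0 : algebraMap K' Q b' ≠ 0 := by
      rw [Ne, map_eq_zero]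
      rintro rfl
      rw [zero_pow hp.ne_zero, eq_comm, map_eq_zero] at hb'
      exact ha hb'
    have _ : NeZero p := ⟨hp.ne_zero⟩
    obtain ⟨i, -, hi⟩ := hω''.eq_pow_of_pow_eq_one h1
    rw [eq_div_iff hb0, ← map_pow, ← map_mul] at hi
    have h2 := hK'1 _ (φ ω ^ i * b').2
    change σ' (algebraMap K' Q (φ ω ^ i * b')) = algebraMap K' Q (φ ω ^ i * b') at h2
    rw [hi, hσ'r] at h2
    have h3 : algebraMap K' Q (φ ω) = 1 := mul_right_cancel₀ hr0 (by rw [h2, one_mul])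
    rw [← (algebraMap K' Q).map_one] at h3
    exact hω1 ((algebraMap K' Q).injective h3)
  have hord : orderOf σ' = p := by
    have _ : Fact p.Prime := ⟨hp⟩
    refine orderOf_eq_prime hσ'p ?_
    intro h
    rw [h] at hσ'r
    have h3 : algebraMap K' Q (φ ω) = 1 := mul_right_cancel₀ hr0 (by rw [← hσ'r, one_mul]; rfl)
    rw [← (algebraMap K' Q).map_one] at h3
    exact hω1 ((algebraMap K' Q).injective h3)
  have hcard : Nat.card (Subgroup.zpowers σ') = p := by rw [Nat.card_zpowers, hord]
  have hfr : Module.finrank K' Q = p := by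
    have _ : Finite (Subgroup.zpowers σ') := Nat.finite_of_card_ne_zero (by rw [hcard]; exact hp.ne_zero)
    let _ := Fintype.ofFinite (Subgroup.zpowers σ')
    have := FixedPoints.finrank_eq_card (Subgroup.zpowers σ') Q
    rw [← Nat.card_eq_fintype_card, hcard] at this
    exact this
  let σK : Q →ₐ[K'] Q := { (σ' : Q →+* Q) with commutes' := fun k => hK'1 _ k.2 }
  exact lemD p hp.pos (φ ω) hω' (φ a) (φ b) (φ c) ⟨e, hK'2 e he⟩ hirr' σK r hr
    (by rw [Algebra.smul_def]; exact hσ'r) hfr (tmap φ D u) (tmap φ D v)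
    (by rw [← map_pow, hu, tmap_alg]) (by rw [← map_pow, hv, tmap_alg])
    (by rw [← map_mul, huv, tmap_smul, map_mul]) x hx
end GM

namespace GM
open Polynomial

section central
variable {F A B : Type*} [Field F] [Ring A] [Algebra F A] [Ring B] [Algebra F B]

theorem comm_right [Algebra.IsCentral F B] (x : A ⊗[F] B)
    (h : ∀ y : B, ((1 : A) ⊗ₜ[F] y) * x = x * ((1 : A) ⊗ₜ[F] y)) : ∃ a : A, a ⊗ₜ[F] (1 : B) = x := by
  have h1 : x ∈ Subalgebra.centralizer F
      (Algebra.TensorProduct.includeRight : B →ₐ[F] A ⊗[F] B).range := by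
    rw [Subalgebra.mem_centralizer_iff]
    rintro _ ⟨y, rfl⟩
    exact h y
  rw [Subalgebra.centralizer_range_includeRight_eq_center_tensorProduct] at h1
  obtain ⟨z, rfl⟩ := h1
  clear h
  induction z using TensorProduct.induction_on with
  | zero => exact ⟨0, by simp⟩
  | tmul a c =>
    obtain ⟨k, hk⟩ := (Algebra.IsCentral.mem_center_iff F).1 c.2
    refine ⟨k • a, ?_⟩
    change _ = a ⊗ₜ[F] c.1
    rw [hk, Algebra.algebraMap_eq_smul_one, TensorProduct.smul_tmul]
  | add x y hx hy =>
    obtain ⟨a, ha⟩ := hx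
    obtain ⟨b, hb⟩ := hy
    exact ⟨a + b, by rw [TensorProduct.add_tmul, ha, hb, map_add]⟩

theorem isCentral_tensor [Algebra.IsCentral F A] [Algebra.IsCentral F B] [Nontrivial B] :
    Algebra.IsCentral F (A ⊗[F] B) := by
  refine ⟨fun x hx => ?_⟩
  rw [Subalgebra.mem_center_iff] at hx
  obtain ⟨a, rfl⟩ := comm_right x (fun y => hx _)
  have ha : a ∈ Subalgebra.center F A := by
    rw [Subalgebra.mem_center_iff]
    intro b
    have := hx (b ⊗ₜ 1)
    rw [Algebra.TensorProduct.tmul_mul_tmul, Algebra.TensorProduct.tmul_mul_tmul] at this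
    exact Algebra.TensorProduct.includeLeft_injective (R := F) (S := F) (A := A) (B := B)
      (algebraMap F B).injective (by simpa using this)
  obtain ⟨k, rfl⟩ := (Algebra.IsCentral.mem_center_iff F).1 ha
  exact ⟨k, rfl⟩

theorem isCentral_baseChange {K : Type*} [Field K] [Algebra F K] [Algebra.IsCentral F B] :
    Algebra.IsCentral K (K ⊗[F] B) := by
  refine ⟨fun x hx => ?_⟩
  rw [Subalgebra.mem_center_iff] at hx
  obtain ⟨a, rfl⟩ := comm_right x (fun y => hx _)
  exact ⟨a, rfl⟩
end central

section lemB
variable {L N : Type*} [Field L] [Field N] [Algebra L N] [FiniteDimensional L N]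

theorem prim_in (p k : ℕ) (hp : p.Prime) (hk : Module.finrank L N = p ^ k) (ω : N)
    (hω : IsPrimitiveRoot ω p) : ∃ w : L, IsPrimitiveRoot w p ∧ algebraMap L N w = ω := by
  have hint := Algebra.IsIntegral.isIntegral (R := L) ω
  have h1 : (minpoly L ω).natDegree ∣ p ^ k := by rw [← hk]; exact minpoly.degree_dvd hint
  have h2 : (minpoly L ω).natDegree ≤ p - 1 := by
    have h3 : minpoly L ω ∣ cyclotomic p L := by
      refine minpoly.dvd _ _ ?_
      have := (hω.isRoot_cyclotomic hp.pos)
      rw [aeval_def, ← eval_map, map_cyclotomic]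
      exact this
    have := natDegree_le_of_dvd h3 (cyclotomic_ne_zero p L)
    rwa [natDegree_cyclotomic, Nat.totient_prime hp] at this
  obtain ⟨j, -, hj⟩ := (Nat.dvd_prime_pow hp).1 h1
  have hj0 : j = 0 := by
    by_contra hj0
    have := Nat.le_self_pow hj0 p
    have := hp.pos
    omega
  rw [hj0, pow_zero, minpoly.natDegree_eq_one_iff] at hj
  obtain ⟨w, hw⟩ := hj
  exact ⟨w, IsPrimitiveRoot.of_map_of_injective (f := algebraMap L N) (hw ▸ hω) (algebraMap L N).injective, hw⟩

set_option maxHeartbeats 1000000 in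
theorem lemB [IsGalois L N] (p k : ℕ) (hp : p.Prime) (hk : Module.finrank L N = p ^ k) (ω : L)
    (hω : IsPrimitiveRoot ω p) (h : L[X]) (hirr : Irreducible h) (hdeg : h.natDegree = p)
    (θ : N) (hθ : aeval θ h = 0) :
    ∃ c : L, Irreducible (X ^ p - C c : L[X]) ∧ ∃ q r : L[X], (X ^ p - C c) ∣ h.comp q ∧ h ∣ r ^ p - C c := by
  have _ : Fact p.Prime := ⟨hp⟩
  have hint := Algebra.IsIntegral.isIntegral (R := L) θ
  have hass : Associated h (minpoly L θ) :=
    ((minpoly.irreducible hint).associated_of_dvd hirr (minpoly.dvd _ _ hθ)).symm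
  let E := IntermediateField.adjoin L {θ}
  have hE : Module.finrank L E = p := by
    rw [IntermediateField.adjoin.finrank hint, ← hdeg]
    exact (natDegree_eq_of_degree_eq (degree_eq_degree_of_associated hass)).symm
  have hmul := Module.finrank_mul_finrank L E N
  have hG := IsGalois.card_aut_eq_finrank L N
  have hind : E.fixingSubgroup.index = p := by
    have h1 := E.fixingSubgroup.card_mul_index
    rw [IsGalois.card_fixingSubgroup_eq_finrank, hG, ← hmul, hE, mul_comm] at h1
    exact Nat.eq_of_mul_eq_mul_right Module.finrank_pos h1
  have hk0 : k ≠ 0 := by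
    rintro rfl
    rw [hk, hE, pow_zero] at hmul
    exact hp.one_lt.ne' (Nat.eq_one_of_mul_eq_one_right hmul)
  have hn : E.fixingSubgroup.Normal := by
    refine Subgroup.normal_of_index_eq_minFac_card ?_
    rw [hind, hG, hk, hp.pow_minFac hk0]
  have hgal : IsGalois L E := by
    have := IsGalois.of_fixedField_normal_subgroup (K := L) (L := N) E.fixingSubgroup
    rwa [IsGalois.fixedField_fixingSubgroup] at this
  have hcyc : IsCyclic (E ≃ₐ[L] E) := isCyclic_of_prime_card (p := p) (by
    rw [IsGalois.card_aut_eq_finrank, hE])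
  obtain ⟨α, ⟨c, hc⟩, hα⟩ := exists_root_adjoin_eq_top_of_isCyclic L E
    ⟨ω, by rw [hE]; exact (mem_primitiveRoots hp.pos).2 hω⟩
  rw [hE] at hc
  have hintα := Algebra.IsIntegral.isIntegral (R := L) α
  have hmd : (minpoly L α).natDegree = p := by
    rw [← IntermediateField.adjoin.finrank hintα, hα, IntermediateField.finrank_top', hE]
  have hm : minpoly L α = X ^ p - C c := by
    refine (eq_of_monic_of_dvd_of_natDegree_le (minpoly.monic hintα) (monic_X_pow_sub_C c hp.ne_zero)
      (minpoly.dvd _ _ (by simp [hc])) ?_).symm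
    rw [hmd, natDegree_X_pow_sub_C]
  refine ⟨c, hm ▸ minpoly.irreducible hintα, ?_⟩
  let θ' : E := IntermediateField.AdjoinSimple.gen L θ
  have hθ' : aeval θ' h = 0 := by
    apply (algebraMap E N).injective
    rw [map_zero, ← aeval_algebraMap_apply]
    exact hθ
  have hmem : ∀ y : E, ∃ q : L[X], aeval α q = y := by
    intro y
    have : y ∈ IntermediateField.adjoin L {α} := by rw [hα]; trivial
    obtain ⟨q, hq⟩ := (IntermediateField.adjoin.powerBasis hintα).exists_eq_aeval' ⟨y, this⟩
    refine ⟨q, ?_⟩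
    have h2 := congrArg (algebraMap (IntermediateField.adjoin L {α}) E) hq
    rw [← aeval_algebraMap_apply] at h2
    exact h2.symm
  obtain ⟨q, hq⟩ := hmem θ'
  obtain ⟨r, hr⟩ := (IntermediateField.adjoin.powerBasis hint).exists_eq_aeval' α
  have hr' : α = aeval θ' r := hr
  refine ⟨q, r, ?_, ?_⟩
  · rw [← hm]
    refine minpoly.dvd _ _ ?_
    rw [aeval_comp, hq, hθ']
  · refine hass.dvd.trans (minpoly.dvd _ _ ?_)
    have h3 : aeval θ' (r ^ p - C c) = 0 := by
      rw [map_sub, map_pow, ← hr', aeval_C, hc, sub_self]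
    have := congrArg (algebraMap E N) h3
    rw [map_zero, ← aeval_algebraMap_apply] at this
    exact this
end lemB
end GM

namespace GM
open Polynomial

section mat
variable {K : Type*} [Field K]

/-- companion matrix root -/
theorem matrix_root (p : ℕ) (f : K[X]) (hf : Irreducible f) (hd : f.natDegree = p) :
    ∃ m : Matrix (Fin p) (Fin p) K, aeval m f = 0 := by
  subst hd
  let pb := AdjoinRoot.powerBasis hf.ne_zero
  let e : Fin pb.dim ≃ Fin f.natDegree := finCongr (AdjoinRoot.powerBasis_dim hf.ne_zero)
  refine ⟨Algebra.leftMulMatrix (pb.basis.reindex e) (AdjoinRoot.root f), ?_⟩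
  rw [aeval_algHom_apply, AdjoinRoot.aeval_eq, AdjoinRoot.mk_self, map_zero]

theorem dich (p : ℕ) (hp : p.Prime) (B : Type u) [Ring B] [Algebra K B] [IsSimpleRing B]
    [FiniteDimensional K B] (hfr : Module.finrank K B = p ^ 2) (f : K[X]) (hf : Irreducible f)
    (hd : f.natDegree = p) :
    (∃ d : B, aeval d f = 0) ∨ ∃ (Δ : Type u) (_ : DivisionRing Δ) (_ : Algebra K Δ), Nonempty (B ≃ₐ[K] Δ) := by
  have _ : IsArtinianRing B := IsArtinianRing.of_finite K B
  obtain ⟨n, hn, Δ, _, _, hΔ, ⟨e⟩⟩ := IsSimpleRing.exists_algEquiv_matrix_divisionRing_finite K B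
  have h1 := e.toLinearEquiv.finrank_eq
  rw [hfr, Module.finrank_matrix, Fintype.card_fin] at h1
  have h2 : n * n ∣ p ^ 2 := ⟨_, h1⟩
  rw [← sq, Nat.pow_dvd_pow_iff two_ne_zero, Nat.dvd_prime hp] at h2
  rcases h2 with rfl | rfl
  · right
    refine ⟨Δ, _, _, ⟨e.trans ?_⟩⟩
    convert Matrix.uniqueAlgEquiv (R := K) (A := Δ) (m := Fin 1)
  · left
    obtain ⟨m, hm⟩ := matrix_root n f hf hd
    refine ⟨e.symm ((AlgHom.mapMatrix (Algebra.ofId K Δ)) m), ?_⟩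
    rw [aeval_algHom_apply, aeval_algHom_apply, hm]
    simp
end mat

theorem step2 {F K N : Type u} [Field F] [Field K] [Field N] [Algebra F K] [Algebra K N]
    [FiniteDimensional K N] [IsGalois K N] [Infinite K] (p k : ℕ) (hp : p.Prime) (hpK : (p : K) ≠ 0)
    (hk : Module.finrank K N = p ^ k) (ω : N) (hω : IsPrimitiveRoot ω p)
    (D : Type u) [DivisionRing D] [Algebra F D] [Algebra.IsCentral F D] [FiniteDimensional F D]
    (hD : Module.finrank F D = p ^ 2)
    (x0 : D) (hx0 : ∀ k : F, algebraMap F D k ≠ x0)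
    (hg : ((minpoly F x0).map ((algebraMap K N).comp (algebraMap F K))).Splits)
    (f : K[X]) (hf : Irreducible f) (hd : f.natDegree = p) (hfN : (f.map (algebraMap K N)).Splits) :
    ∃ (K' : Type u) (_ : Field K') (_ : Algebra F K') (φ : K →ₐ[F] K'), Keep F p K K' ∧
      ∃ d : K' ⊗[F] D, aeval d (f.map (φ : K →+* K')) = 0 := by
  obtain ⟨w, hw, -⟩ := prim_in p k hp hk ω hω
  have _ : IsSimpleRing (K ⊗[F] D) := isSimpleRing_tensor
  have _ : Algebra.IsCentral K (K ⊗[F] D) := isCentral_baseChange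
  have hfr : Module.finrank K (K ⊗[F] D) = p ^ 2 := by rw [Module.finrank_baseChange, hD]
  rcases dich p hp (K ⊗[F] D) hfr f hf hd with ⟨d, hd⟩ | ⟨Δ, _, _, ⟨e⟩⟩
  · refine ⟨K, _, _, AlgHom.id F K, fun C _ _ n _ h => h, d, ?_⟩
    have : f.map ((AlgHom.id F K : K →ₐ[F] K) : K →+* K) = f := Polynomial.map_id
    rw [this, hd]
  have _ : Algebra.IsCentral K Δ := Algebra.IsCentral.of_algEquiv K _ _ e
  have _ : FiniteDimensional K Δ := e.toLinearEquiv.finiteDimensional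
  have hfrΔ : Module.finrank K Δ = p ^ 2 := by rw [← e.toLinearEquiv.finrank_eq, hfr]
  let x1 : Δ := e (1 ⊗ₜ x0)
  have hx1 : ∀ k : K, algebraMap K Δ k ≠ x1 := by
    intro k hk
    have h1 : algebraMap K (K ⊗[F] D) k = 1 ⊗ₜ x0 := by
      apply e.injective
      rw [e.commutes]; exact hk
    obtain ⟨y, hy⟩ := mem_range_of_central (K := F) x0 (fun y => by
      have h2 := Algebra.commutes k ((1 : K) ⊗ₜ[F] y)
      rw [h1, Algebra.TensorProduct.tmul_mul_tmul, Algebra.TensorProduct.tmul_mul_tmul] at h2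
      exact (Algebra.TensorProduct.includeRight_injective (R := F) (A := K) (B := D)
        (algebraMap F K).injective (by simpa using h2)).symm)
    exact hx0 y hy
  have hdeg := minpoly_deg p hp hfrΔ x1 hx1
  have hint : IsIntegral K x1 := Algebra.IsIntegral.isIntegral x1
  have hdvd : minpoly K x1 ∣ (minpoly F x0).map (algebraMap F K) := by
    refine minpoly.dvd _ _ ?_
    have h1 : aeval ((1 : K) ⊗ₜ[F] x0) ((minpoly F x0).map (algebraMap F K)) = 0 := by
      rw [aeval_map_algebraMap]
      have := aeval_algHom_apply (Algebra.TensorProduct.includeRight : D →ₐ[F] K ⊗[F] D) x0 (minpoly F x0)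
      rw [minpoly.aeval, map_zero] at this
      exact this
    change aeval (e (1 ⊗ₜ x0)) _ = 0
    rw [aeval_algHom_apply, h1, map_zero]
  have hintF : IsIntegral F x0 := Algebra.IsIntegral.isIntegral x0
  obtain ⟨θ, hθ⟩ := (hg.of_dvd ((minpoly.monic hintF).map _).ne_zero (f := (minpoly K x1).map (algebraMap K N)) (by
    rw [← Polynomial.map_map]
    exact Polynomial.map_dvd _ hdvd)).exists_eval_eq_zero (by
      rw [degree_map]
      exact (minpoly.degree_pos hint).ne')
  rw [eval_map_algebraMap] at hθ
  obtain ⟨a, ha, -, r, -, hr⟩ := lemB p k hp hk w hw _ (minpoly.irreducible hint) hdeg θ hθ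
  let u := aeval x1 r
  have hu : u ^ p = algebraMap K Δ a := by
    obtain ⟨q, hq⟩ := hr
    have := congrArg (aeval x1) hq
    rw [map_mul, minpoly.aeval, zero_mul, map_sub, map_pow, aeval_C] at this
    exact sub_eq_zero.1 this
  obtain ⟨v, b, hb, hv, huv⟩ := exists_v p hp hfrΔ hpK w hw u a hu (by
    intro k hk
    rw [← hk, ← map_pow] at hu
    exact pow_ne_of_irreducible_X_pow_sub_C ha dvd_rfl hp.ne_one k ((algebraMap K Δ).injective hu))
  obtain ⟨θ', hθ'⟩ := hfN.exists_eval_eq_zero (by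
      rw [degree_map]
      exact (degree_pos_of_irreducible hf).ne')
  rw [eval_map_algebraMap] at hθ'
  obtain ⟨c, -, q, -, hq, -⟩ := lemB p k hp hk w hw _ hf hd θ' hθ'
  obtain ⟨K', _, _, φ, hkeep, d, hdp⟩ := cyc_step p hp w hw D a b c hb ha (e.symm u) (e.symm v)
    (by rw [← map_pow, hu, e.symm.commutes]) (by rw [← map_pow, hv, e.symm.commutes])
    (by rw [← map_mul, huv, map_smul, map_mul])
  refine ⟨K', _, _, φ, hkeep, aeval d (q.map (φ : K →+* K')), ?_⟩
  obtain ⟨s, hs⟩ := hq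
  have h2 := congrArg (Polynomial.map (φ : K →+* K')) hs
  rw [Polynomial.map_comp, Polynomial.map_mul] at h2
  rw [← aeval_comp, h2, map_mul]
  simp [hdp]
end GM

namespace GM
open Polynomial

theorem exists_gal {K : Type u} [Field K] (f g h : K[X]) (hf : f.Separable) (hg : g.Separable)
    (hh : h.Separable) : ∃ (N : Type u) (_ : Field N) (_ : Algebra K N), FiniteDimensional K N ∧
      IsGalois K N ∧ (f.map (algebraMap K N)).Splits ∧ (g.map (algebraMap K N)).Splits ∧
      (h.map (algebraMap K N)).Splits := by
  let s := f * g * h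
  have hs0 : s ≠ 0 := mul_ne_zero (mul_ne_zero hf.ne_zero hg.ne_zero) hh.ne_zero
  let N := SplittingField s
  have hs : (s.map (algebraMap K N)).Splits := SplittingField.splits s
  have hs0' : s.map (algebraMap K N) ≠ 0 := by simpa [Polynomial.map_eq_zero] using hs0
  have _ : Normal K N := Normal.of_isSplittingField s
  have hsep : Algebra.IsSeparable K (IntermediateField.adjoin K (s.rootSet N)) := by
    rw [IntermediateField.isSeparable_adjoin_iff_isSeparable]
    intro x hx
    have h1 : aeval x s = 0 := aeval_eq_zero_of_mem_rootSet hx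
    simp only [s, map_mul, mul_eq_zero] at h1
    rcases h1 with (h1 | h1) | h1
    · exact hf.of_dvd (minpoly.dvd _ _ h1)
    · exact hg.of_dvd (minpoly.dvd _ _ h1)
    · exact hh.of_dvd (minpoly.dvd _ _ h1)
  have htop : IntermediateField.adjoin K (s.rootSet N) = ⊤ := by
    apply IntermediateField.toSubalgebra_injective
    refine top_unique ?_
    rw [← IsSplittingField.adjoin_rootSet N s]
    exact IntermediateField.algebra_adjoin_le_adjoin K _
  rw [htop] at hsep
  have _ : Algebra.IsSeparable K N := by
    exact Algebra.IsSeparable.of_algHom K (⊤ : IntermediateField K N) ((IntermediateField.topEquiv (F := K) (E := N)).symm : N →ₐ[K] (⊤ : IntermediateField K N))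
  refine ⟨N, inferInstance, inferInstance, inferInstance, ⟨⟩, hs.of_dvd hs0' ?_, hs.of_dvd hs0' ?_, hs.of_dvd hs0' ?_⟩
  · exact Polynomial.map_dvd _ ⟨g * h, by simp only [s]; ring⟩
  · exact Polynomial.map_dvd _ ⟨f * h, by simp only [s]; ring⟩
  · exact Polynomial.map_dvd _ ⟨f * g, by simp only [s]; ring⟩

theorem sep_deg {K : Type*} [Field K] (p : ℕ) (hp : p.Prime) (hpK : (p : K) ≠ 0) (f : K[X])
    (hf : Irreducible f) (hd : f.natDegree = p) : f.Separable := by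
  rw [separable_iff_derivative_ne_zero hf]
  intro h
  have h1 := congrArg (fun g => coeff g (p - 1)) h
  simp only [coeff_derivative, coeff_zero, mul_eq_zero] at h1
  have h2 : p - 1 + 1 = p := Nat.sub_add_cancel hp.pos
  rw [h2] at h1
  rcases h1 with h1 | h1
  · rw [← hd] at h1
    exact hf.ne_zero (leadingCoeff_eq_zero.1 h1)
  · apply hpK
    rw [← h1]
    exact_mod_cast congrArg (Nat.cast : ℕ → K) h2.symm

/-- `K'` handles the polynomial `f` for the algebra `D`. -/
def Handled {F K : Type u} [Field F] [Field K] [Algebra F K] (D : Type u) [Ring D] [Algebra F D]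
    (f : K[X]) : Prop := ¬ Irreducible f ∨ ∃ d : K ⊗[F] D, aeval d f = 0

theorem step1 {F K : Type u} [Field F] [Field K] [Algebra F K] [Infinite K] (p : ℕ) (hp : p.Prime)
    (hpF : (p : F) ≠ 0)
    (D : Type u) [DivisionRing D] [Algebra F D] [Algebra.IsCentral F D] [FiniteDimensional F D]
    (hD : Module.finrank F D = p ^ 2) (f : K[X]) (hd : f.natDegree = p) :
    ∃ (K' : Type u) (_ : Field K') (_ : Algebra F K') (φ : K →ₐ[F] K'), Keep F p K K' ∧
      Handled (F := F) D (f.map (φ : K →+* K')) := by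
  by_cases hf : Irreducible f
  swap
  · refine ⟨K, _, _, AlgHom.id F K, fun C _ _ n _ h => h, Or.inl ?_⟩
    have : f.map ((AlgHom.id F K : K →ₐ[F] K) : K →+* K) = f := Polynomial.map_id
    rwa [this]
  have _ : Fact p.Prime := ⟨hp⟩
  have hpK : (p : K) ≠ 0 := by
    have := (map_ne_zero (algebraMap F K)).2 hpF
    rwa [map_natCast] at this
  obtain ⟨x0, hx0⟩ : ∃ x0 : D, ∀ k : F, algebraMap F D k ≠ x0 := by
    by_contra hcon
    push Not at hcon
    have h1 : Module.finrank F D ≤ 1 := finrank_le_one (1 : D) (fun w => by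
      obtain ⟨k, hk⟩ := hcon w
      exact ⟨k, by rw [← hk, Algebra.algebraMap_eq_smul_one]⟩)
    rw [hD] at h1
    have := hp.one_lt
    nlinarith
  have hint : IsIntegral F x0 := Algebra.IsIntegral.isIntegral x0
  have hgsep : (minpoly F x0).Separable := sep_deg p hp hpF _ (minpoly.irreducible hint)
    (minpoly_deg p hp hD x0 hx0)
  have _ : NeZero (p : K) := ⟨hpK⟩
  have hcsep : (cyclotomic p K).Separable := separable_cyclotomic p K
  obtain ⟨N, _, _, hfd, hgal, hfs, hgs, hcs⟩ := exists_gal f ((minpoly F x0).map (algebraMap F K)) (cyclotomic p K)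
    (sep_deg p hp hpK f hf hd) hgsep.map hcsep
  have hpN : (p : N) ≠ 0 := by
    have := (map_ne_zero (algebraMap K N)).2 hpK
    rwa [map_natCast] at this
  obtain ⟨ω, hω⟩ : ∃ ω : N, IsPrimitiveRoot ω p := by
    obtain ⟨ω, hω⟩ := hcs.exists_eval_eq_zero (by
      rw [degree_map, degree_cyclotomic, Nat.totient_prime hp]
      have := hp.one_lt
      exact_mod_cast (show p - 1 ≠ 0 by omega))
    have _ : NeZero (p : N) := ⟨hpN⟩
    rw [map_cyclotomic] at hω
    exact ⟨ω, isRoot_cyclotomic_iff.1 hω⟩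
  let _ : Algebra F N := ((algebraMap K N).comp (algebraMap F K)).toAlgebra
  have _ : IsScalarTower F K N := IsScalarTower.of_algebraMap_eq' rfl
  obtain ⟨P⟩ : Nonempty (Sylow p (N ≃ₐ[K] N)) := inferInstance
  let K1 := IntermediateField.fixedField P.1
  have hkeep1 : Keep F p K K1 := fun C _ _ n hN hS => prime_to_p hN hp P hS
  have hfr : Module.finrank K1 N = Nat.card P := IntermediateField.finrank_fixedField_eq_card P.1
  obtain ⟨k, hk⟩ := P.2.exists_card_eq
  let φ1 : K →ₐ[F] K1 := IsScalarTower.toAlgHom F K K1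
  have hmm : ∀ q : K[X], (q.map (φ1 : K →+* K1)).map (algebraMap K1 N) = q.map (algebraMap K N) := by
    intro q
    rw [Polynomial.map_map]; rfl
  by_cases hf1 : Irreducible (f.map (φ1 : K →+* K1))
  swap
  · exact ⟨K1, inferInstance, inferInstance, φ1, hkeep1, Or.inl hf1⟩
  have _ : Infinite K1 := Infinite.of_injective _ (φ1 : K →+* K1).injective
  obtain ⟨K', _, _, φ, hkeep, d, hd⟩ := step2 (F := F) (K := K1) (N := N) p k hp (by
      have := (map_ne_zero (algebraMap F K1)).2 hpF
      rwa [map_natCast] at this) (hfr.trans hk) ω hω D hD x0 hx0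
    (by rw [Polynomial.map_map] at hgs; exact hgs)
    (f.map (φ1 : K →+* K1)) hf1 (by rw [natDegree_map, hd]) (by rw [hmm]; exact hfs)
  refine ⟨K', _, _, φ.comp φ1, fun C _ _ n hN hS => hkeep1 C n hN (hkeep C n hN hS), Or.inr ⟨d, ?_⟩⟩
  rw [Polynomial.map_map] at hd
  exact hd
end GM

namespace GM
open Polynomial

section up
variable {F : Type u} [Field F] {J : Type u} (U : Ultrafilter J) (E : J → Type u)
  [∀ S, Field (E S)] [∀ S, Algebra F (E S)]

def upI : Ideal (∀ S, E S) where
  carrier := {x | ∀ᶠ S in U, x S = 0}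
  add_mem' := by
    intro a b ha hb
    filter_upwards [ha, hb] with S h1 h2
    rw [Pi.add_apply, h1, h2, add_zero]
  zero_mem' := by simp
  smul_mem' := by
    intro c x hx
    filter_upwards [hx] with S h1
    rw [smul_eq_mul, Pi.mul_apply, h1, mul_zero]

theorem mem_upI (x : ∀ S, E S) : x ∈ upI U E ↔ ∀ᶠ S in U, x S = 0 := Iff.rfl

theorem upI_max : (upI U E).IsMaximal := by
  rw [Ideal.isMaximal_iff]
  constructor
  · intro h
    rw [mem_upI] at h
    obtain ⟨S, hS⟩ := h.exists
    exact one_ne_zero hS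
  · intro I x hI hx hxI
    rw [mem_upI, ← Ultrafilter.eventually_not] at hx
    have h1 : x * (fun S => (x S)⁻¹) - 1 ∈ I := hI (by
      rw [mem_upI]
      filter_upwards [hx] with S hS
      simp [mul_inv_cancel₀ hS])
    have h2 : x * (fun S => (x S)⁻¹) ∈ I := I.mul_mem_right _ hxI
    have := I.sub_mem h2 h1
    rwa [sub_sub_cancel] at this

abbrev UP : Type u := (∀ S, E S) ⧸ upI U E

noncomputable instance : Field (UP U E) := 
  have := upI_max U E
  Ideal.Quotient.field _

variable (F) in
noncomputable def upπ : (∀ S, E S) →ₐ[F] UP U E := Ideal.Quotient.mkₐ F _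

theorem upπ_eq (x y : ∀ S, E S) : upπ F U E x = upπ F U E y ↔ ∀ᶠ S in U, x S = y S := by
  change Ideal.Quotient.mk _ x = Ideal.Quotient.mk _ y ↔ _
  rw [Ideal.Quotient.eq, mem_upI]
  simp [sub_eq_zero]

theorem upπ_surj : Function.Surjective (upπ F U E) := Ideal.Quotient.mk_surjective

theorem up_spl (C : Type u) [Ring C] [Algebra F C] [FiniteDimensional F C] (n : ℕ)
    (h : Spl F C (UP U E) n) : ∃ S, Spl F C (E S) n := by
  obtain ⟨ρ⟩ := h
  let bs := Module.finBasis F C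
  choose y hy using fun (a : Fin (Module.finrank F C)) (i k : Fin n) => upπ_surj (F := F) U E (ρ (bs a) i k)
  let T : C →ₗ[F] Matrix (Fin n) (Fin n) (∀ S, E S) := bs.constr F (fun a => Matrix.of (y a))
  let Pm : Matrix (Fin n) (Fin n) (∀ S, E S) →ₐ[F] Matrix (Fin n) (Fin n) (UP U E) := (upπ F U E).mapMatrix
  have hT : ∀ c, Pm (T c) = ρ c := by
    have : Pm.toLinearMap ∘ₗ T = ρ.toLinearMap := by
      refine bs.ext fun a => ?_
      simp only [LinearMap.comp_apply, AlgHom.toLinearMap_apply, T, Module.Basis.constr_basis]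
      ext i k
      exact hy a i k
    exact fun c => LinearMap.congr_fun this c
  let ev : ∀ S, Matrix (Fin n) (Fin n) (∀ S, E S) →ₐ[F] Matrix (Fin n) (Fin n) (E S) := fun S =>
    (Pi.evalAlgHom F E S).mapMatrix
  have key : ∀ A B, Pm A = Pm B → ∀ᶠ S in U, ev S A = ev S B := by
    intro A B h
    have h1 : ∀ i k, ∀ᶠ S in U, A i k S = B i k S := fun i k => 
      (upπ_eq (F := F) U E _ _).1 (congrFun (congrFun h i) k)
    simp only [← Filter.eventually_all] at h1
    filter_upwards [h1] with S hS
    ext i k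
    exact hS i k
  have h1 := key (T 1) 1 (by rw [hT, map_one, map_one])
  have h2 : ∀ a b, ∀ᶠ S in U, ev S (T (bs a * bs b)) = ev S (T (bs a) * T (bs b)) := fun a b =>
    key _ _ (by rw [hT, map_mul ρ, map_mul Pm, hT, hT])
  simp only [← Filter.eventually_all] at h2
  obtain ⟨S, hS1, hS2⟩ := (h1.and h2).exists
  refine ⟨S, ⟨AlgHom.ofLinearMap ((ev S).toLinearMap ∘ₗ T) (by simpa using hS1) ?_⟩⟩
  let L := (ev S).toLinearMap ∘ₗ T
  have h3 : (LinearMap.mul F C).compr₂ L = (LinearMap.mul F (Matrix (Fin n) (Fin n) (E S))).compl₁₂ L L := by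
    refine bs.ext fun a => bs.ext fun b => ?_
    have := hS2 a b
    rw [map_mul (ev S)] at this
    exact this
  exact fun x y => LinearMap.congr_fun (LinearMap.congr_fun h3 x) y

variable {K : Type u} [Field K] [Algebra F K]

theorem up_tensor (D : Type u) [Ring D] [Algebra F D] [FiniteDimensional F D] (x : (∀ S, E S) ⊗[F] D)
    (h : ∀ᶠ S in U, tmap (Pi.evalAlgHom F E S) D x = 0) : tmap (upπ F U E) D x = 0 := by
  let bs := Module.finBasis F D
  let b1 := bs.baseChange (∀ S, E S)
  have hx : x = ∑ a, (b1.repr x a) ⊗ₜ[F] (bs a) := by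
    conv_lhs => rw [← b1.sum_repr x]
    refine Finset.sum_congr rfl fun a _ => ?_
    rw [Module.Basis.baseChange_apply, TensorProduct.smul_tmul', smul_eq_mul, mul_one]
  have h1 : ∀ a, ∀ᶠ S in U, b1.repr x a S = 0 := by
    intro a
    filter_upwards [h] with S hS
    let b2 := bs.baseChange (E S)
    have h2 : ∑ a, (b1.repr x a S) • b2 a = 0 := by
      rw [← hS]
      conv_rhs => rw [hx]
      rw [map_sum]
      refine Finset.sum_congr rfl fun a _ => ?_
      rw [Module.Basis.baseChange_apply, TensorProduct.smul_tmul', smul_eq_mul, mul_one]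
      rfl
    exact Fintype.linearIndependent_iff.1 b2.linearIndependent _ h2 a
  rw [hx, map_sum]
  refine Finset.sum_eq_zero fun a _ => ?_
  have h3 : upπ F U E (b1.repr x a) = 0 := by
    rw [← map_zero (upπ F U E), upπ_eq]
    exact h1 a
  change upπ F U E (b1.repr x a) ⊗ₜ[F] (bs a) = 0
  rw [h3, TensorProduct.zero_tmul]

theorem up_lift (D : Type u) [Ring D] [Algebra F D] [FiniteDimensional F D] (d : ∀ S, E S ⊗[F] D) :
    ∃ x : (∀ S, E S) ⊗[F] D, ∀ S, tmap (Pi.evalAlgHom F E S) D x = d S := by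
  let bs := Module.finBasis F D
  refine ⟨∑ a, (fun S => (bs.baseChange (E S)).repr (d S) a) ⊗ₜ[F] (bs a), fun S => ?_⟩
  rw [map_sum]
  conv_rhs => rw [← (bs.baseChange (E S)).sum_repr (d S)]
  refine Finset.sum_congr rfl fun a _ => ?_
  rw [Module.Basis.baseChange_apply, TensorProduct.smul_tmul', smul_eq_mul, mul_one]
  rfl

theorem not_irr_iff (p : ℕ) (hp : 0 < p) (f : K[X]) (hf : f.natDegree = p) :
    ¬ Irreducible f ↔ ∃ g h : K[X], g.natDegree < p ∧ h.natDegree < p ∧ f = g * h := by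
  have hf0 : f ≠ 0 := by rintro rfl; simp at hf; omega
  constructor
  · intro hirr
    rw [irreducible_iff] at hirr
    push Not at hirr
    have hu : ¬ IsUnit f := by
      intro h
      rw [natDegree_eq_zero_of_isUnit h] at hf
      omega
    obtain ⟨g, h, rfl, hg, hh⟩ := hirr hu
    have hg0 := left_ne_zero_of_mul hf0
    have hh0 := right_ne_zero_of_mul hf0
    have hg1 : 0 < g.natDegree := natDegree_pos_iff_degree_pos.2 (degree_pos_of_ne_zero_of_nonunit hg0 hg)
    have hh1 : 0 < h.natDegree := natDegree_pos_iff_degree_pos.2 (degree_pos_of_ne_zero_of_nonunit hh0 hh)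
    rw [natDegree_mul hg0 hh0] at hf
    exact ⟨g, h, by omega, by omega, rfl⟩
  · rintro ⟨g, h, hg, hh, rfl⟩ hirr
    have hg0 := left_ne_zero_of_mul hf0
    have hh0 := right_ne_zero_of_mul hf0
    rw [natDegree_mul hg0 hh0] at hf
    rcases hirr.isUnit_or_isUnit rfl with hu | hu
    · have := natDegree_eq_zero_of_isUnit hu
      omega
    · have := natDegree_eq_zero_of_isUnit hu
      omega

theorem handled_map (p : ℕ) (hp : 0 < p) {K' : Type u} [Field K'] [Algebra F K'] (φ : K →ₐ[F] K') (D : Type u) [Ring D]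
    [Algebra F D] (f : K[X]) (hf : f.natDegree = p) (h : Handled (F := F) D f) :
    Handled (F := F) D (f.map (φ : K →+* K')) := by
  rcases h with h | ⟨d, hd⟩
  · left
    rw [not_irr_iff p hp f hf] at h
    obtain ⟨g, h, h1, h2, rfl⟩ := h
    rw [not_irr_iff p hp _ (by rw [natDegree_map, hf])]
    exact ⟨g.map (φ : K →+* K'), h.map (φ : K →+* K'), by rwa [natDegree_map], by rwa [natDegree_map],
      Polynomial.map_mul _⟩
  · right
    exact ⟨tmap φ D d, by rw [← tmap_aeval, hd, map_zero]⟩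

theorem up_handled (p : ℕ) (hp : 0 < p) (φ : ∀ S, K →ₐ[F] E S) (D : Type u) [Ring D] [Algebra F D]
    [FiniteDimensional F D] (f : K[X]) (hf : f.natDegree = p)
    (h : ∀ᶠ S in U, Handled (F := F) D (f.map (φ S : K →+* E S))) :
    Handled (F := F) D (f.map (((upπ F U E).comp (AlgHom.pi φ) : K →ₐ[F] UP U E) : K →+* UP U E)) := by
  have hmm : f.map (((upπ F U E).comp (AlgHom.pi φ) : K →ₐ[F] UP U E) : K →+* UP U E) =
      (f.map ((AlgHom.pi φ : K →ₐ[F] ∀ S, E S) : K →+* ∀ S, E S)).map (upπ F U E : (∀ S, E S) →+* UP U E) := by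
    rw [Polynomial.map_map]; rfl
  have hme : ∀ S, (f.map ((AlgHom.pi φ : K →ₐ[F] ∀ S, E S) : K →+* ∀ S, E S)).map 
      (Pi.evalAlgHom F E S : (∀ S, E S) →+* E S) = f.map (φ S : K →+* E S) := by
    intro S
    rw [Polynomial.map_map]; rfl
  unfold Handled at h
  rw [Ultrafilter.eventually_or] at h
  rcases h with h | h
  · left
    rw [not_irr_iff p hp _ (by rw [natDegree_map, hf])]
    have h1 : ∀ S, ∃ g h : (E S)[X], (¬ Irreducible (f.map (φ S : K →+* E S))) → 
        (g.natDegree < p ∧ h.natDegree < p ∧ f.map (φ S : K →+* E S) = g * h) := by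
      intro S
      by_cases hS : Irreducible (f.map (φ S : K →+* E S))
      · exact ⟨0, 0, fun h => (h hS).elim⟩
      · obtain ⟨g, h, h1⟩ := (not_irr_iff p hp _ (by rw [natDegree_map, hf])).1 hS
        exact ⟨g, h, fun _ => h1⟩
    choose g k hgk using h1
    let lift : (∀ S, (E S)[X]) → (∀ S, E S)[X] := fun g => ∑ i ∈ Finset.range p, C (fun S => (g S).coeff i) * X ^ i
    have hlift : ∀ g S, (g S).natDegree < p → (lift g).map (Pi.evalAlgHom F E S : (∀ S, E S) →+* E S) = g S := by
      intro g S hS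
      rw [(g S).as_sum_range' p hS]
      simp only [lift, Polynomial.map_sum, Polynomial.map_mul, Polynomial.map_C, Polynomial.map_pow, Polynomial.map_X]
      refine Finset.sum_congr rfl fun i _ => ?_
      rw [← C_mul_X_pow_eq_monomial]
      rfl
    have hdeg : ∀ g, ((lift g).map (upπ F U E : (∀ S, E S) →+* UP U E)).natDegree < p := by
      intro g
      refine lt_of_le_of_lt natDegree_map_le ?_
      refine lt_of_le_of_lt (natDegree_sum_le_of_forall_le (n := p - 1) _ _ ?_) (by omega)
      intro i hi
      have := Finset.mem_range.1 hi
      exact (natDegree_C_mul_X_pow_le _ _).trans (by omega)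
    refine ⟨_, _, hdeg g, hdeg k, ?_⟩
    rw [hmm, ← Polynomial.map_mul]
    ext i
    rw [coeff_map (upπ F U E : (∀ S, E S) →+* UP U E), coeff_map (upπ F U E : (∀ S, E S) →+* UP U E)]
    refine (upπ_eq (F := F) U E _ _).2 ?_
    filter_upwards [h] with S hS
    obtain ⟨h1, h2, h3⟩ := hgk S hS
    have h4 := congrArg (fun q => coeff q i) (hme S)
    rw [coeff_map (Pi.evalAlgHom F E S : (∀ S, E S) →+* E S)] at h4
    refine h4.trans ?_
    have h5 : (lift g * lift k).map (Pi.evalAlgHom F E S : (∀ S, E S) →+* E S) = g S * k S := by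
      rw [Polynomial.map_mul, hlift g S h1, hlift k S h2]
    rw [h3, ← h5, coeff_map (Pi.evalAlgHom F E S : (∀ S, E S) →+* E S)]
    rfl
  · right
    have h1 : ∀ S, ∃ d : E S ⊗[F] D, (∃ d : E S ⊗[F] D, aeval d (f.map (φ S : K →+* E S)) = 0) → 
        aeval d (f.map (φ S : K →+* E S)) = 0 := by
      intro S
      by_cases hS : ∃ d : E S ⊗[F] D, aeval d (f.map (φ S : K →+* E S)) = 0
      · obtain ⟨d, hd⟩ := hS
        exact ⟨d, fun _ => hd⟩
      · exact ⟨0, fun h => (hS h).elim⟩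
    choose d hd using h1
    obtain ⟨x, hx⟩ := up_lift E D d
    refine ⟨tmap (upπ F U E) D x, ?_⟩
    rw [hmm, ← tmap_aeval]
    apply up_tensor
    filter_upwards [h] with S hS
    rw [tmap_aeval, hx, hme]
    exact hd S hS
end up
end GM

namespace GM
open Polynomial

section chain
variable {F : Type u} [Field F] (K : ℕ → Type u) [∀ n, Field (K n)] [∀ n, Algebra F (K n)]
  (φ : ∀ n, K n →ₐ[F] K (n+1))

def chm (i j : ℕ) (h : i ≤ j) : K i →ₐ[F] K j :=
  Nat.leRec (motive := fun j _ => K i →ₐ[F] K j) (AlgHom.id F _) (fun k _ g => (φ k).comp g) h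

theorem chm_self (i : ℕ) : chm K φ i i le_rfl = AlgHom.id F _ := Nat.leRec_self _ _

theorem chm_succ (i j : ℕ) (h : i ≤ j) : chm K φ i (j+1) (h.trans (Nat.le_succ j)) = (φ j).comp (chm K φ i j h) := 
  Nat.leRec_succ _ _ h

theorem chm_trans (i j k : ℕ) (h : i ≤ j) (h' : j ≤ k) (x : K i) :
    chm K φ j k h' (chm K φ i j h x) = chm K φ i k (h.trans h') x := by
  induction k, h' using Nat.le_induction with
  | base => rw [chm_self]; rfl
  | succ k hk ih =>
    rw [chm_succ K φ j k hk, chm_succ K φ i k (h.trans hk)]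
    exact congrArg (φ k) ih

theorem exists_colim : ∃ (E : Type u) (_ : Field E) (_ : Algebra F E) (ψ : ∀ n, K n →ₐ[F] E),
    (∀ n x, ψ (n+1) (φ n x) = ψ n x) ∧ (∀ z : E, ∃ n x, ψ n x = z) := by
  let f' : ∀ i j, i ≤ j → K i →+* K j := fun i j h => (chm K φ i j h : K i →+* K j)
  have : DirectedSystem K (fun i j h => f' i j h) := 
    { map_self := fun i x => by
        change chm K φ i i le_rfl x = x
        rw [chm_self]; rfl
      map_map := fun _ _ _ _ _ x => chm_trans K φ _ _ _ _ _ x }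
  let E := Ring.DirectLimit K (fun i j h => f' i j h)
  let _ : Field E := Field.DirectLimit.field K f'
  let o : ∀ n, K n →+* E := fun n => Ring.DirectLimit.of K (fun i j h => f' i j h) n
  have ho : ∀ i j h x, o j (chm K φ i j h x) = o i x := fun i j h x => Ring.DirectLimit.of_f (f := fun i j h => f' i j h) h x
  let _ : Algebra F E := ((o 0).comp (algebraMap F (K 0))).toAlgebra
  refine ⟨E, inferInstance, inferInstance, fun n => ⟨o n, fun r => ?_⟩, fun n x => ?_, fun z => ?_⟩
  · change o n (algebraMap F (K n) r) = o 0 (algebraMap F (K 0) r)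
    rw [← ho 0 n (Nat.zero_le n), AlgHom.commutes]
  · change o (n+1) (φ n x) = o n x
    rw [← ho n (n+1) (Nat.le_succ n) x, chm_succ K φ n n le_rfl, chm_self]
    rfl
  · exact Ring.DirectLimit.exists_of z
end chain

section
variable {F : Type u} [Field F] 

theorem Keep.trans {p : ℕ} {K K' K'' : Type u} [Field K] [Algebra F K] [Field K'] [Algebra F K'] [Field K''] [Algebra F K'']
   (h : Keep F p K K') (h' : Keep F p K' K'') : Keep F p K K'' := 
  fun C _ _ n hN hs => h C n hN (h' C n hN hs)

variable (p : ℕ) (hp : p.Prime) (hpF : (p : F) ≠ 0) {ι : Type u} (D : ι → Type u) [∀ i, DivisionRing (D i)]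
  [∀ i, Algebra F (D i)] (hD : ∀ i, IsCentralDivisionOfDeg F (D i) p)

include hp hpF hD in
theorem fin_step {K : Type u} [Field K] [Algebra F K] [Infinite K] (S : Finset ({f : K[X] // f.natDegree = p} × ι)) :
    ∃ (K' : Type u) (_ : Field K') (_ : Algebra F K') (φ : K →ₐ[F] K'), Keep F p K K' ∧
      ∀ s ∈ S, Handled (F := F) (D s.2) (s.1.1.map (φ : K →+* K')) := by
  classical
  induction S using Finset.induction_on with
  | empty => exact ⟨K, inferInstance, inferInstance, AlgHom.id F K, fun C _ _ n _ h => h, by simp⟩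
  | insert s S hs ih =>
    obtain ⟨K1, _, _, φ1, hk1, h1⟩ := ih
    have : Infinite K1 := Infinite.of_injective φ1 φ1.toRingHom.injective
    have := (hD s.2).1
    have := (hD s.2).2.1
    obtain ⟨K2, _, _, φ2, hk2, h2⟩ := step1 p hp hpF (D s.2) (hD s.2).2.2 (s.1.1.map (φ1 : K →+* K1))
      (by rw [natDegree_map, s.1.2])
    refine ⟨K2, inferInstance, inferInstance, φ2.comp φ1, hk1.trans hk2, ?_⟩
    intro t ht
    have hm : t.1.1.map ((φ2.comp φ1 : K →ₐ[F] K2) : K →+* K2) = (t.1.1.map (φ1 : K →+* K1)).map (φ2 : K1 →+* K2) := by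
      rw [Polynomial.map_map]; rfl
    rw [hm]
    rcases Finset.mem_insert.1 ht with rfl | ht
    · exact h2
    · exact handled_map p hp.pos φ2 (D t.2) _ (by rw [natDegree_map, t.1.2]) (h1 t ht)

include hp hpF hD in
theorem all_step (K : Type u) [Field K] [Algebra F K] [Infinite K] :
    ∃ (K' : Type u) (_ : Field K') (_ : Algebra F K') (φ : K →ₐ[F] K'), Keep F p K K' ∧
      ∀ (f : K[X]) (_ : f.natDegree = p) (i : ι), Handled (F := F) (D i) (f.map (φ : K →+* K')) := by
  classical
  choose E fE aE φ hk hh using fin_step p hp hpF D hD (K := K)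
  let U : Ultrafilter (Finset ({f : K[X] // f.natDegree = p} × ι)) := Ultrafilter.of Filter.atTop
  refine ⟨UP U E, inferInstance, inferInstance, (upπ F U E).comp (AlgHom.pi φ), ?_, ?_⟩
  · intro C _ _ n hN hs
    have := hN.csa.2.2
    obtain ⟨S, hS⟩ := up_spl U E C n hs
    exact hk S C n hN hS
  · intro f hf i
    have := (hD i).2.1
    refine up_handled U E p hp.pos φ (D i) f hf ?_
    have h1 : ∀ᶠ S in (U : Filter (Finset ({f : K[X] // f.natDegree = p} × ι))), ({(⟨f, hf⟩, i)} : Finset ({f : K[X] // f.natDegree = p} × ι)) ≤ S := Filter.Eventually.filter_mono (Ultrafilter.of_le _) 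
      (Filter.eventually_ge_atTop _)
    filter_upwards [h1] with S hS
    exact hh S _ (Finset.singleton_subset_iff.1 hS)

variable (F) in
structure Bun : Type (u+1) where
  K : Type u
  [f : Field K]
  [a : Algebra F K]
  [i : Infinite K]
attribute [instance] Bun.f Bun.a Bun.i

include hp hpF hD in
theorem big_step [Infinite F] :
    ∃ (E : Type u) (_ : Field E) (_ : Algebra F E), Keep F p F E ∧
      ∀ (f : E[X]) (_ : f.natDegree = p) (_ : Irreducible f) (i : ι), ∃ d : E ⊗[F] D i, aeval d f = 0 := by
  have hst : ∀ B : Bun F, ∃ (B' : Bun F) (φ : B.K →ₐ[F] B'.K), Keep F p B.K B'.K ∧ 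
      ∀ (f : B.K[X]) (_ : f.natDegree = p) (i : ι), Handled (F := F) (D i) (f.map (φ : B.K →+* B'.K)) := by
    intro B
    obtain ⟨K', _, _, φ, h1, h2⟩ := all_step p hp hpF D hD B.K
    have : Infinite K' := Infinite.of_injective φ φ.toRingHom.injective
    exact ⟨⟨K'⟩, φ, h1, h2⟩
  choose nx φ hk hh using hst
  let B0 : Bun F := { K := F, f := inferInstance, a := inferInstance, i := inferInstance }
  let B : ℕ → Bun F := fun n => Nat.rec (motive := fun _ => Bun F) B0 (fun _ b => nx b) n
  let φ' : ∀ n, (B n).K →ₐ[F] (B (n+1)).K := fun n => φ (B n)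
  obtain ⟨E, _, _, ψ, h1, h2⟩ := exists_colim (F := F) (fun n => (B n).K) φ'
  refine ⟨E, inferInstance, inferInstance, ?_, ?_⟩
  · intro C _ _ n hN hs
    have hdown : ∀ m, Spl F C (B m).K n → Spl F C F n := by
      intro m
      induction m with
      | zero => exact fun h => h
      | succ m ih => exact fun h => ih (hk (B m) C n hN h)
    obtain ⟨ρ⟩ := hs
    have := hN.csa.2.2
    let bs := Module.finBasis F C
    have hmono : ∀ i j, i ≤ j → ∀ x, ∃ y, ψ j y = ψ i x := by
      intro i j h
      induction j, h using Nat.le_induction with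
      | base => exact fun x => ⟨x, rfl⟩
      | succ j hj ih =>
        intro x
        obtain ⟨y, hy⟩ := ih x
        exact ⟨φ (B j) y, by rw [h1, hy]⟩
    choose m x hm using fun (t : Fin (Module.finrank F C) × Fin n × Fin n) => h2 (ρ (bs t.1) t.2.1 t.2.2)
    obtain ⟨N, hN'⟩ : ∃ N, ∀ t, m t ≤ N := ⟨Finset.univ.sup m, fun t => Finset.le_sup (Finset.mem_univ t)⟩
    apply hdown N
    obtain ⟨ρ0, _⟩ := rep_factor (ψ N) (ψ N).toRingHom.injective ρ (by
      intro c i k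
      rw [← bs.sum_repr c, map_sum, Matrix.sum_apply]
      choose y hy using fun a => hmono (m (a, i, k)) N (hN' _) (x (a, i, k))
      refine ⟨∑ a, bs.repr c a • y a, ?_⟩
      rw [map_sum]
      refine Finset.sum_congr rfl fun a _ => ?_
      rw [map_smul, map_smul, hy, hm]
      rfl)
    exact ⟨ρ0⟩
  · intro f hf hirr i
    obtain ⟨n, g, hg⟩ : ∃ n, ∃ g : (B n).K[X], g.map (ψ n : (B n).K →+* E) = f := by
      have hmono : ∀ i j, i ≤ j → ∀ x, ∃ y, ψ j y = ψ i x := by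
        intro i j h
        induction j, h using Nat.le_induction with
        | base => exact fun x => ⟨x, rfl⟩
        | succ j hj ih =>
          intro x
          obtain ⟨y, hy⟩ := ih x
          exact ⟨φ (B j) y, by rw [h1, hy]⟩
      choose m x hm using fun t => h2 (f.coeff t)
      refine ⟨(Finset.range (p+1)).sup m, ?_⟩
      have : ∀ t, ∃ y, t < p + 1 → ψ ((Finset.range (p+1)).sup m) y = f.coeff t := by
        intro t
        by_cases ht : t < p + 1
        · obtain ⟨y, hy⟩ := hmono (m t) _ (Finset.le_sup (f := m) (Finset.mem_range.2 ht)) (x t)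
          exact ⟨y, fun _ => hy.trans (hm t)⟩
        · exact ⟨0, fun h => (ht h).elim⟩
      choose y hy using this
      refine ⟨∑ t ∈ Finset.range (p+1), monomial t (y t), ?_⟩
      rw [Polynomial.map_sum]
      conv_rhs => rw [f.as_sum_range' (p+1) (by omega)]
      refine Finset.sum_congr rfl fun t ht => ?_
      rw [map_monomial]
      exact congrArg _ (hy t (Finset.mem_range.1 ht))
    have hgd : g.natDegree = p := by rw [← hf, ← hg, natDegree_map]
    have hh1 := handled_map p hp.pos (ψ (n+1)) (D i) _ (by rw [natDegree_map, hgd]) (hh (B n) g hgd i)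
    have hm : (g.map (φ (B n) : (B n).K →+* (nx (B n)).K)).map ((ψ (n+1) : (B (n+1)).K →ₐ[F] E) : (B (n+1)).K →+* E) = f := by
      rw [← hg]
      have : (ψ n : (B n).K →+* E) = ((ψ (n+1) : (B (n+1)).K →ₐ[F] E) : (B (n+1)).K →+* E).comp (φ (B n) : (B n).K →+* (nx (B n)).K) := 
        RingHom.ext fun x => (h1 n x).symm
      rw [this]
      exact Polynomial.map_map _ _ _
    have hh2 : Handled (F := F) (D i) f := hm ▸ hh1
    rcases hh2 with h | h
    · exact (h hirr).elim
    · exact h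
end
end GM

namespace GM

theorem brauer_of_bimod {F : Type u} [Field F] {A B : Type u} [Ring A] [Algebra F A] [Ring B] [Algebra F B]
    (hA : IsCSA F A) (hB : IsCSA F B) (V : Type u) [AddCommGroup V] [Module F V] [FiniteDimensional F V]
    [Module Bᵐᵒᵖ V] [IsScalarTower F Bᵐᵒᵖ V] [SMulCommClass F Bᵐᵒᵖ V] [SMulCommClass Bᵐᵒᵖ F V] (ρA : A →ₐ[F] Module.End Bᵐᵒᵖ V) (n : ℕ) (hn : 0 < n)
    (hV : Module.finrank F V = n)
    (h : n ^ 2 = Module.finrank F A * Module.finrank F B) : BrauerEquiv F A B := by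
  have := hA.2.1
  have := hA.2.2
  have := hB.2.1
  have := hB.2.2
  have hFB : FiniteDimensional F Bᵐᵒᵖ := (MulOpposite.opLinearEquiv F : B ≃ₗ[F] Bᵐᵒᵖ).finiteDimensional
  set dB := Module.finrank F B with hdB
  have hdB0 : 0 < dB := Module.finrank_pos
  obtain ⟨e⟩ := equiv_of_finrank_eq (K := F) (A := Bᵐᵒᵖ) (Fin dB → V) (Fin n → B) (by
    rw [Module.finrank_pi_fintype, Module.finrank_pi_fintype]
    simp [hV, ← hdB, mul_comm])
  let e1 : Matrix (Fin dB) (Fin dB) (Module.End Bᵐᵒᵖ V) ≃ₐ[F] Matrix (Fin n) (Fin n) B := 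
    ((endVecAlgEquivMatrixEnd (Fin dB) F Bᵐᵒᵖ V).symm.trans (e.conjAlgEquiv F)).trans
      ((endVecAlgEquivMatrixEnd (Fin n) F Bᵐᵒᵖ B).trans (AlgEquiv.mapMatrix (AlgEquiv.moduleEndSelfOp F).symm))
  have h1 := e1.toLinearEquiv.finrank_eq
  have : NeZero dB := ⟨hdB0.ne'⟩
  have : FiniteDimensional F (Module.End Bᵐᵒᵖ V) := by
    let l : Module.End Bᵐᵒᵖ V →ₗ[F] Module.End F V := 
      { toFun := fun f => f.restrictScalars F, map_add' := fun _ _ => rfl, map_smul' := fun _ _ => rfl }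
    exact FiniteDimensional.of_injective l (fun f g h => LinearMap.ext fun x => LinearMap.congr_fun h x)
  rw [Module.finrank_matrix, Module.finrank_matrix] at h1
  simp only [Fintype.card_fin] at h1
  have h2 : Module.finrank F A = Module.finrank F (Module.End Bᵐᵒᵖ V) := by
    rw [← hdB] at h1
    have : (dB * dB) * Module.finrank F A = (dB * dB) * Module.finrank F (Module.End Bᵐᵒᵖ V) := by
      rw [h1, ← pow_two n, h]; ring
    exact Nat.eq_of_mul_eq_mul_left (by positivity) this
  have : Nontrivial V := Module.nontrivial_of_finrank_pos (R := F) (by omega)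
  have hinj : Function.Injective ρA := ρA.toRingHom.injective
  have hbij : Function.Bijective ρA := 
    ⟨hinj, (LinearMap.injective_iff_surjective_of_finrank_eq_finrank (f := ρA.toLinearMap) h2).1 hinj⟩
  exact ⟨dB, n, hdB0, hn, ⟨(AlgEquiv.mapMatrix (AlgEquiv.ofBijective ρA hbij)).trans e1⟩⟩

theorem brauer_of_spl {F : Type u} [Field F] {A B : Type u} [Ring A] [Algebra F A] [Ring B] [Algebra F B]
    (hA : IsCSA F A) (hB : IsCSA F B) (n : ℕ) (hn : 0 < n)
    (h : n ^ 2 = Module.finrank F A * Module.finrank F B) (hs : Spl F (A ⊗[F] Bᵐᵒᵖ) F n) : BrauerEquiv F A B := by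
  obtain ⟨ρ⟩ := hs
  let T : Matrix (Fin n) (Fin n) F →ₐ[F] Module.End F (Fin n → F) := (Matrix.toLinAlgEquiv' : Matrix (Fin n) (Fin n) F ≃ₐ[F] Module.End F (Fin n → F)).toAlgHom
  obtain ⟨V, _, _, e⟩ : ∃ (V : Type u) (_ : AddCommGroup V) (_ : Module F V), Nonempty (V ≃ₗ[F] (Fin n → F)) :=
    ⟨Fin n → F, inferInstance, inferInstance, ⟨LinearEquiv.refl F _⟩⟩
  obtain ⟨e⟩ := e
  let T' : A ⊗[F] Bᵐᵒᵖ →ₐ[F] Module.End F V := ((e.symm.conjAlgEquiv F : _ →ₐ[F] _).comp T).comp ρ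
  let rB : Bᵐᵒᵖ →ₐ[F] Module.End F V := T'.comp Algebra.TensorProduct.includeRight
  let rA : A →ₐ[F] Module.End F V := T'.comp Algebra.TensorProduct.includeLeft
  have hcomm : ∀ a b, rA a * rB b = rB b * rA a := by
    intro a b
    change T' (a ⊗ₜ 1) * T' (1 ⊗ₜ b) = T' (1 ⊗ₜ b) * T' (a ⊗ₜ 1)
    rw [← map_mul, ← map_mul]
    simp
  have : FiniteDimensional F V := e.symm.finiteDimensional
  let _ : Module Bᵐᵒᵖ V := Module.compHom V (rB : Bᵐᵒᵖ →+* Module.End F V)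
  have hsm : ∀ (b : Bᵐᵒᵖ) (v : V), b • v = rB b v := fun _ _ => rfl
  have : IsScalarTower F Bᵐᵒᵖ V := ⟨fun r b v => by rw [hsm, hsm, map_smul]; rfl⟩
  have : SMulCommClass F Bᵐᵒᵖ V := ⟨fun r b v => by rw [hsm, hsm, map_smul]⟩
  have : SMulCommClass Bᵐᵒᵖ F V := ⟨fun r b v => by rw [hsm, hsm, map_smul]⟩
  let ρA : A →ₐ[F] Module.End Bᵐᵒᵖ V := 
    { toFun := fun a => { toFun := rA a, map_add' := map_add _, map_smul' := fun b v => by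
                            have := LinearMap.congr_fun (hcomm a b) v
                            exact this }
      map_one' := by ext v; change rA 1 v = v; rw [map_one]; rfl
      map_mul' := fun a b => by ext v; change rA (a * b) v = rA a (rA b v); rw [map_mul]; rfl
      map_zero' := by ext v; change rA 0 v = 0; rw [map_zero]; rfl
      map_add' := fun a b => by ext v; change rA (a + b) v = rA a v + rA b v; rw [map_add]; rfl
      commutes' := fun r => by
        ext v
        change rA (algebraMap F A r) v = r • v
        rw [AlgHom.commutes]; rfl }
  exact brauer_of_bimod hA hB V ρA n hn (by rw [e.finrank_eq]; simp) h
end GM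

namespace GM

theorem comp_end {E : Type u} [Field E] {W : Type u} [AddCommGroup W] [Module E W] (e : Module.End E W)
    (he : e * e = e) {F A : Type u} [Field F] [Algebra F E] [Ring A] [Algebra F A] [Module F W] [IsScalarTower F E W]
    (r : A →ₐ[F] Module.End E W) (hr : ∀ a, r a * e = e * r a) :
    ∃ r' : A →ₐ[F] Module.End E (LinearMap.range e), ∀ a u, ((r' a u : LinearMap.range e) : W) = r a u := by
  have hu : ∀ u : LinearMap.range e, e u = u := by
    rintro ⟨_, ⟨w, rfl⟩⟩
    exact LinearMap.congr_fun he w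
  have hmem : ∀ a (u : LinearMap.range e), r a u ∈ LinearMap.range e := by
    intro a u
    rw [← hu u]
    exact ⟨r a u, (LinearMap.congr_fun (hr a) u).symm⟩
  refine ⟨{ toFun := fun a => { toFun := fun u => ⟨r a u, hmem a u⟩, map_add' := ?_, map_smul' := ?_ }
            map_one' := ?_, map_mul' := ?_, map_zero' := ?_, map_add' := ?_, commutes' := ?_ }, fun a u => rfl⟩
  · intro x y; ext; simp
  · intro x y; ext; simp
  · ext u; simp
  · intro x y; ext u; simp
  · ext u; simp
  · intro x y; ext u; simp
  · intro x; ext u; simp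

theorem finrank_corner {E : Type u} [Field E] {W : Type u} [AddCommGroup W] [Module E W] [FiniteDimensional E W]
    {A : Type u} [Ring A] [Algebra E A] (r : ℕ) (hr : 0 < r) (T : Matrix (Fin r) (Fin r) A →ₐ[E] Module.End E W) :
    Module.finrank E W = r * Module.finrank E (LinearMap.range (T (Matrix.single ⟨0, hr⟩ ⟨0, hr⟩ 1))) := by
  set z : Fin r := ⟨0, hr⟩
  set e := T (Matrix.single z z 1) with he
  have hm : ∀ (i j k l) (w), T (Matrix.single i j 1) (T (Matrix.single k l 1) w) = 
      if j = k then T (Matrix.single i l 1) w else 0 := by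
    intro i j k l w
    rw [← Module.End.mul_apply, ← map_mul]
    split_ifs with h
    · subst h; simp
    · rw [Matrix.single_mul_single_of_ne (h := h)]; simp
  have hu : ∀ u : LinearMap.range e, e u = u := by
    rintro ⟨_, ⟨w, rfl⟩⟩
    change e (e w) = e w
    rw [he, hm, if_pos rfl]
  have hone : ∀ w, ∑ i, T (Matrix.single i i 1) w = w := by
    intro w
    rw [← LinearMap.sum_apply, ← map_sum]
    have : ∑ i : Fin r, Matrix.single i i (1:A) = 1 := by
      ext a b
      rw [Matrix.sum_apply, Finset.sum_eq_single a]
      · simp [Matrix.single_apply, Matrix.one_apply]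
      · intro i _ hi
        simp [Matrix.single_apply, hi]
      · simp
    rw [this, map_one]; rfl
  let L : W ≃ₗ[E] (Fin r → LinearMap.range e) := 
    { toFun := fun w i => ⟨T (Matrix.single z i 1) w, ⟨T (Matrix.single z i 1) w, by rw [he, hm, if_pos rfl]⟩⟩
      map_add' := fun x y => by ext; simp
      map_smul' := fun x y => by ext; simp
      invFun := fun u => ∑ i, T (Matrix.single i z 1) (u i)
      left_inv := fun w => by simp only [hm, if_true, hone]
      right_inv := fun u => by
        ext i
        simp only [map_sum, hm]
        simp
        exact hu (u i) }
  rw [L.finrank_eq, Module.finrank_pi_fintype]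
  simp

section
variable (E : Type u) [Field E] (B : Type u) [Ring B] [Algebra E B] (s : ℕ)
def colQ : Matrix (Fin s) (Fin s) B →ₐ[E] Module.End E (Fin s → B) where
  toFun M := { toFun := fun w => M.mulVec w, map_add' := Matrix.mulVec_add M, map_smul' := fun c v => Matrix.mulVec_smul M c v }
  map_one' := LinearMap.ext fun v => Matrix.one_mulVec v
  map_mul' M N := LinearMap.ext fun v => (Matrix.mulVec_mulVec v M N).symm
  map_zero' := LinearMap.ext fun v => Matrix.zero_mulVec v
  map_add' M N := LinearMap.ext fun v => Matrix.add_mulVec M N v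
  commutes' c := LinearMap.ext fun v => by
        rw [Algebra.algebraMap_eq_smul_one]
        change (c • (1 : Matrix _ _ _)).mulVec v = c • v
        rw [Matrix.smul_mulVec, Matrix.one_mulVec]

def colR : Bᵐᵒᵖ →ₐ[E] Module.End E (Fin s → B) where
  toFun b := { toFun := fun w i => w i * b.unop, map_add' := fun x y => funext fun i => add_mul _ _ _, 
               map_smul' := fun c v => funext fun i => smul_mul_assoc _ _ _ }
  map_one' := LinearMap.ext fun v => funext fun i => mul_one _
  map_mul' M N := LinearMap.ext fun v => funext fun i => (mul_assoc _ _ _).symm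
  map_zero' := LinearMap.ext fun v => funext fun i => mul_zero _
  map_add' M N := LinearMap.ext fun v => funext fun i => mul_add _ _ _
  commutes' c := LinearMap.ext fun v => funext fun i => by
        change v i * algebraMap E B c = c • v i
        rw [Algebra.smul_def, Algebra.commutes]

theorem colQR (M b) : colQ E B s M * colR E B s b = colR E B s b * colQ E B s M := by
  refine LinearMap.ext fun v => funext fun i => ?_
  change ∑ j, M i j * (v j * b.unop) = (∑ j, M i j * v j) * b.unop
  rw [Finset.sum_mul]
  simp [mul_assoc]
end

theorem spl_of_brauer {F E : Type u} [Field F] [Field E] [Algebra F E] {A B : Type u} [Ring A] [Algebra F A] [Ring B]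
    [Algebra F B] (hA : IsCSA F A) (hB : IsCSA F B) (h : BrauerEquiv E (E ⊗[F] A) (E ⊗[F] B)) :
    ∃ n, 0 < n ∧ n ^ 2 = Module.finrank F A * Module.finrank F B ∧ Spl F (A ⊗[F] Bᵐᵒᵖ) E n := by
  have := hA.2.1
  have := hA.2.2
  have := hB.2.1
  have := hB.2.2
  obtain ⟨r, s, hr, hs, ⟨e⟩⟩ := h
  let T : Matrix (Fin r) (Fin r) (E ⊗[F] A) →ₐ[E] Module.End E (Fin s → E ⊗[F] B) := (colQ E (E ⊗[F] B) s).comp e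
  have hT : ∀ x b, T x * colR E (E ⊗[F] B) s b = colR E (E ⊗[F] B) s b * T x := fun x b => colQR _ _ _ _ _
  let z : Fin r := ⟨0, hr⟩
  let ee := T (Matrix.single z z 1)
  have hee : ee * ee = ee := by
    change T _ * T _ = T _
    rw [← map_mul]; simp
  have hfr := finrank_corner r hr T
  let iA : A →ₐ[F] Matrix (Fin r) (Fin r) (E ⊗[F] A) := 
    { Matrix.scalar (Fin r) |>.comp (Algebra.TensorProduct.includeRight : A →ₐ[F] E ⊗[F] A).toRingHom with
      commutes' := fun c => by
        change Matrix.scalar (Fin r) ((1 : E) ⊗ₜ[F] algebraMap F A c) = _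
        have h1 : (1 : E) ⊗ₜ[F] algebraMap F A c = algebraMap F (E ⊗[F] A) c := 
          AlgHom.commutes (Algebra.TensorProduct.includeRight : A →ₐ[F] E ⊗[F] A) c
        rw [h1]
        rfl }
  have hiA : ∀ a, iA a = Matrix.scalar (Fin r) ((1 : E) ⊗ₜ[F] a) := fun a => rfl
  have hiAs : ∀ a, iA a * Matrix.single z z 1 = Matrix.single z z 1 * iA a := by
    intro a
    rw [hiA]
    ext i j
    simp [Matrix.single_apply]
  let iB : Bᵐᵒᵖ →ₐ[F] (E ⊗[F] B)ᵐᵒᵖ := AlgHom.op (Algebra.TensorProduct.includeRight : B →ₐ[F] E ⊗[F] B)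
  obtain ⟨rA, hrA⟩ := comp_end ee hee ((T.restrictScalars F).comp iA) (fun a => by
    change T _ * T _ = T _ * T _
    rw [← map_mul, ← map_mul]
    exact congrArg T (hiAs a))
  obtain ⟨rB, hrB⟩ := comp_end ee hee (((colR E (E ⊗[F] B) s).restrictScalars F).comp iB) (fun b => (hT _ _).symm)
  have hc : ∀ a b, Commute (rA a) (rB b) := by
    intro a b
    refine LinearMap.ext fun u => Subtype.ext ?_
    rw [Module.End.mul_apply, Module.End.mul_apply, hrA, hrB, hrB, hrA]
    exact LinearMap.congr_fun (hT (iA a) (iB b)) u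
  set n := Module.finrank E (LinearMap.range ee) with hn
  have h1 : r * n = s * Module.finrank F B := by
    rw [hn, ← hfr, Module.finrank_pi_fintype]
    simp
  have h2 : r * r * Module.finrank F A = s * s * Module.finrank F B := by
    have := e.toLinearEquiv.finrank_eq
    rw [Module.finrank_matrix, Module.finrank_matrix] at this
    simpa using this
  have hdB : 0 < Module.finrank F B := Module.finrank_pos
  refine ⟨n, ?_, ?_, ?_⟩
  · rw [Nat.pos_iff_ne_zero]
    intro h
    rw [h, mul_zero] at h1
    have := mul_pos hs hdB
    omega
  · have : (r * r) * n ^ 2 = (r * r) * (Module.finrank F A * Module.finrank F B) := by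
      rw [← mul_assoc, h2]
      calc _ = (r * n) * (r * n) := by ring
        _ = _ := by rw [h1]; ring
    exact Nat.eq_of_mul_eq_mul_left (by positivity) this
  · let bs := Module.finBasis E (LinearMap.range ee)
    exact ⟨((LinearMap.toMatrixAlgEquiv bs).toAlgHom.restrictScalars F).comp (Algebra.TensorProduct.lift rA rB hc)⟩
end GM

namespace GM

section kr
variable {F M : Type*} [Field F] [Field M] [Algebra F M] {m : Type*} [Fintype m] [DecidableEq m] {p : ℕ}

def kr (X : Fin p → Matrix m m M) : Matrix (Fin p → m) (Fin p → m) M := Matrix.of fun i j => ∏ k, X k (i k) (j k)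

theorem kr_mul (X Y : Fin p → Matrix m m M) : kr X * kr Y = kr (fun k => X k * Y k) := by
  ext i j
  simp only [kr, Matrix.of_apply, Matrix.mul_apply, ← Finset.prod_mul_distrib]
  exact Eq.symm ((Finset.prod_univ_sum (fun _ => Finset.univ) _).trans (by simp))

theorem kr_one : kr (fun _ : Fin p => (1 : Matrix m m M)) = 1 := map_one (kp p)

theorem kp_eq_kr (g : Matrix m m M) : kp p g = kr (fun _ => g) := rfl

theorem tw_kr (σ : M ≃ₐ[F] M) (X : Fin p → Matrix m m M) : tw σ (kr X) = kr (fun k => tw σ (X k)) := by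
  ext i j
  simp [kr]

theorem kr_tr (X : Fin p → Matrix m m M) : (kr X).transpose = kr (fun k => (X k).transpose) := rfl

variable (p) in
def krL {A : Type*} [AddCommGroup A] [Module F A] (ρ : A →ₗ[F] Matrix m m M) :
    MultilinearMap F (fun _ : Fin p => A) (Matrix (Fin p → m) (Fin p → m) M) :=
  (MultilinearMap.pi fun i => MultilinearMap.pi fun j =>
    (MultilinearMap.mkPiAlgebra F (Fin p) M).compLinearMap (fun k => (Matrix.entryLinearMap F M (i k) (j k)) ∘ₗ ρ) :
    MultilinearMap F (fun _ : Fin p => A) ((Fin p → m) → (Fin p → m) → M))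

theorem krL_apply {A : Type*} [AddCommGroup A] [Module F A] (ρ : A →ₗ[F] Matrix m m M) (a : Fin p → A) :
    krL p ρ a = kr (fun k => ρ (a k)) := by
  ext i j
  simp [krL, kr, MultilinearMap.pi]
  rfl

variable (p) in
noncomputable def kpow {A : Type*} [Ring A] [Algebra F A] (ρ : A →ₐ[F] Matrix m m M) :
    (⨂[F] _ : Fin p, A) →ₐ[F] Matrix (Fin p → m) (Fin p → m) M :=
  PiTensorProduct.liftAlgHom (krL p ρ.toLinearMap) (by rw [krL_apply]; simpa using kr_one) (by
    intro x y
    rw [krL_apply, krL_apply, krL_apply, kr_mul]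
    simp)

theorem kpow_tprod {A : Type*} [Ring A] [Algebra F A] (ρ : A →ₐ[F] Matrix m m M) (a : Fin p → A) :
    kpow p ρ (PiTensorProduct.tprod F a) = kr (fun k => ρ (a k)) := by
  change PiTensorProduct.lift (krL p ρ.toLinearMap) (PiTensorProduct.tprod F a) = _
  rw [PiTensorProduct.lift.tprod, krL_apply]
  rfl

variable (F) in
/-- matrix-transposed algebra hom -/
def trHom {k l : Type*} [Fintype k] [DecidableEq k] [Fintype l] [DecidableEq l]
    (φ : Matrix k k F →ₐ[F] Matrix l l M) : Matrix k k F →ₐ[F] Matrix l l M where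
  toFun x := (φ x.transpose).transpose
  map_one' := by simp
  map_mul' x y := by simp
  map_zero' := by simp
  map_add' x y := by simp
  commutes' r := by 
    rw [Matrix.algebraMap_eq_diagonal, Matrix.diagonal_transpose, ← Matrix.algebraMap_eq_diagonal, AlgHom.commutes, 
      Matrix.algebraMap_eq_diagonal, Matrix.diagonal_transpose, ← Matrix.algebraMap_eq_diagonal]

end kr

theorem finrank_tpow {F A : Type u} [Field F] [Ring A] [Algebra F A] [FiniteDimensional F A] (p : ℕ) :
    Module.finrank F (tpow F A p) = Module.finrank F A ^ p := by
  rw [Module.finrank_eq_card_basis (Basis.piTensorProduct (fun _ : Fin p => Module.finBasis F A))]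
  simp

theorem nice_of {F A B : Type u} [Field F] [Ring A] [Algebra F A] [Ring B]
    [Algebra F B] (hA : IsCSA F A) (hB : IsCSA F B) (p n : ℕ) (hpA : IsPTorsion F A p) (hpB : IsPTorsion F B p)
    (hn : 0 < n) (h : n ^ 2 = Module.finrank F A * Module.finrank F B) : Nice F (A ⊗[F] Bᵐᵒᵖ) p n := by
  obtain ⟨hA1, hA2, hA3⟩ := hA
  obtain ⟨hB1, hB2, hB3⟩ := hB
  have hB3' : FiniteDimensional F Bᵐᵒᵖ := (MulOpposite.opLinearEquiv F : B ≃ₗ[F] Bᵐᵒᵖ).finiteDimensional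
  have hB1' : Algebra.IsCentral F Bᵐᵒᵖ := ⟨by
    intro x hx
    rw [Subalgebra.mem_center_iff] at hx
    have h1 : x.unop ∈ Subalgebra.center F B := by
      rw [Subalgebra.mem_center_iff]
      intro b
      have := congrArg MulOpposite.unop (hx (MulOpposite.op b))
      exact this.symm
    obtain ⟨r, hr⟩ := Algebra.mem_bot.1 (hB1.out h1)
    exact Algebra.mem_bot.2 ⟨r, by rw [MulOpposite.algebraMap_apply, hr, MulOpposite.op_unop]⟩⟩
  refine ⟨⟨isCentral_tensor, isSimpleRing_tensor, inferInstance⟩, hn, ?_, ?_⟩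
  · rw [Module.finrank_tensorProduct, h, ← (MulOpposite.opLinearEquiv F : B ≃ₗ[F] Bᵐᵒᵖ).finrank_eq]
  intro M _ _ ρ
  obtain ⟨NA, hNA, ⟨eA⟩⟩ := hpA
  obtain ⟨NB, hNB, ⟨eB⟩⟩ := hpB
  let ρA : A →ₐ[F] Matrix (Fin n) (Fin n) M := ρ.comp Algebra.TensorProduct.includeLeft
  let ρB : Bᵐᵒᵖ →ₐ[F] Matrix (Fin n) (Fin n) M := ρ.comp Algebra.TensorProduct.includeRight
  have hcomm : ∀ a b, ρA a * ρB b = ρB b * ρA a := by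
    intro a b
    change ρ (a ⊗ₜ 1) * ρ (1 ⊗ₜ b) = ρ (1 ⊗ₜ b) * ρ (a ⊗ₜ 1)
    rw [← map_mul, ← map_mul]
    simp
  let ρBt : B →ₐ[F] Matrix (Fin n) (Fin n) M := 
    { toFun := fun b => (ρB (MulOpposite.op b)).transpose
      map_one' := by simp
      map_mul' := fun x y => by simp
      map_zero' := by simp
      map_add' := fun x y => by simp
      commutes' := fun r => by
        rw [← MulOpposite.algebraMap_apply, AlgHom.commutes, 
      Matrix.algebraMap_eq_diagonal, Matrix.diagonal_transpose] }
  let ΦA : Matrix (Fin NA) (Fin NA) F →ₐ[F] Matrix (Fin p → Fin n) (Fin p → Fin n) M := 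
    (kpow p ρA).comp eA.symm.toAlgHom
  let ΦB : Matrix (Fin NB) (Fin NB) F →ₐ[F] Matrix (Fin p → Fin n) (Fin p → Fin n) M := 
    trHom F ((kpow p ρBt).comp eB.symm.toAlgHom)
  have hA : ∀ x, ∃ t, ΦA x = kpow p ρA t := fun x => ⟨eA.symm x, rfl⟩
  have hB : ∀ x, ∃ t, ΦB x = (kpow p ρBt t).transpose := fun x => ⟨eB.symm x.transpose, rfl⟩
  have htB : ∀ b : Fin p → B, (kpow p ρBt (PiTensorProduct.tprod F b)).transpose = kr (fun k => ρB (MulOpposite.op (b k))) := by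
    intro b
    rw [kpow_tprod]; rfl
  have hc : ∀ x y, Commute (ΦA x) (ΦB y) := by
    intro x y
    obtain ⟨t, ht⟩ := hA x
    obtain ⟨s, hs⟩ := hB y
    rw [ht, hs]
    clear ht hs
    induction t using PiTensorProduct.induction_on with
    | add x y hx hy => rw [map_add]; exact hx.add_left hy
    | smul_tprod r a =>
      rw [map_smul]
      refine Commute.smul_left ?_ r
      induction s using PiTensorProduct.induction_on with
      | add x y hx hy => rw [map_add, Matrix.transpose_add]; exact hx.add_right hy
      | smul_tprod r b =>
        rw [map_smul, Matrix.transpose_smul]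
        refine Commute.smul_right ?_ r
        rw [htB, kpow_tprod]
        change _ * _ = _ * _
        rw [kr_mul, kr_mul]
        congr 1
        funext k
        exact hcomm _ _
  have hcard : NA * NB = n ^ p := by
    have h1 := eA.toLinearEquiv.finrank_eq
    have h2 := eB.toLinearEquiv.finrank_eq
    rw [finrank_tpow, Module.finrank_matrix] at h1 h2
    simp only [Fintype.card_fin, Module.finrank_self, mul_one] at h1 h2
    refine Nat.pow_left_injective (n := 2) two_ne_zero ?_
    change (NA * NB) ^ 2 = (n ^ p) ^ 2
    rw [← pow_mul, mul_comm p 2, pow_mul, h, mul_pow, mul_pow, h1, h2]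
    ring
  let eidx : (Fin p → Fin n) ≃ Fin NA × Fin NB := Fintype.equivOfCardEq (by simp [hcard])
  let eM : Matrix (Fin NA) (Fin NA) F ⊗[F] Matrix (Fin NB) (Fin NB) F ≃ₐ[F] Matrix (Fin NA × Fin NB) (Fin NA × Fin NB) F := 
    (Matrix.kroneckerTMulAlgEquiv (Fin NA) (Fin NB) F F F F).trans (AlgEquiv.mapMatrix (Algebra.TensorProduct.lid F F))
  let Φ0 := Algebra.TensorProduct.lift ΦA ΦB hc
  let e1 : Matrix (Fin p → Fin n) (Fin p → Fin n) F ≃ₐ[F] _ := (Matrix.reindexAlgEquiv F F eidx).trans eM.symm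
  refine ⟨Φ0.comp e1.toAlgHom, fun σ g hg x => ?_⟩
  change kp p g * tw σ (Φ0 (e1 x)) = Φ0 (e1 x) * kp p g
  have tadd : ∀ X Y : Matrix (Fin p → Fin n) (Fin p → Fin n) M, tw σ (X + Y) = tw σ X + tw σ Y := by
    intro X Y; ext; simp
  have tsmul : ∀ (r : F) (X : Matrix (Fin p → Fin n) (Fin p → Fin n) M), tw σ (r • X) = r • tw σ X := by
    intro r X; ext; simp
  have hgA : ∀ x, kp p g * tw σ (ΦA x) = ΦA x * kp p g := by
    intro x
    obtain ⟨t, ht⟩ := hA x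
    rw [ht]
    clear ht
    induction t using PiTensorProduct.induction_on with
    | add x y hx hy => rw [map_add, tadd, mul_add, add_mul, hx, hy]
    | smul_tprod r a =>
      rw [map_smul, tsmul, mul_smul_comm, smul_mul_assoc, kpow_tprod, tw_kr, kp_eq_kr, kr_mul, kr_mul]
      congr 2
      funext k
      exact hg _
  have hgB : ∀ x, kp p g * tw σ (ΦB x) = ΦB x * kp p g := by
    intro x
    obtain ⟨t, ht⟩ := hB x
    rw [ht]
    clear ht
    induction t using PiTensorProduct.induction_on with
    | add x y hx hy => rw [map_add, Matrix.transpose_add, tadd, mul_add, add_mul, hx, hy]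
    | smul_tprod r a =>
      rw [map_smul, Matrix.transpose_smul, tsmul, mul_smul_comm, smul_mul_assoc, htB, tw_kr, kp_eq_kr, kr_mul, kr_mul]
      congr 2
      funext k
      exact hg _
  generalize e1 x = y
  induction y using TensorProduct.induction_on with
  | zero => 
    have : tw σ (0 : Matrix (Fin p → Fin n) (Fin p → Fin n) M) = 0 := by ext; simp
    rw [map_zero, this, mul_zero, zero_mul]
  | tmul x y => 
    rw [Algebra.TensorProduct.lift_tmul, map_mul, ← mul_assoc, hgA, mul_assoc, hgB, mul_assoc]
  | add x y hx hy => rw [map_add, tadd, mul_add, add_mul, hx, hy]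

theorem resInj_aux {F E : Type u} [Field F] [Field E] [Algebra F E] (p : ℕ) (h : Keep F p F E) (A B : Type u) [Ring A]
    [Algebra F A] [Ring B] [Algebra F B] (hA : IsCSA F A) (hB : IsCSA F B) (pA : IsPTorsion F A p) (pB : IsPTorsion F B p)
    (hAB : BrauerEquiv E (E ⊗[F] A) (E ⊗[F] B)) : BrauerEquiv F A B := by
  obtain ⟨n, hn, hn2, hs⟩ := spl_of_brauer hA hB hAB
  exact brauer_of_spl hA hB n hn hn2 (h _ n (nice_of hA hB p n pA pB hn hn2) hs)

theorem resInj_of_keep {F E : Type u} [Field F] [Field E] [alg : Algebra F E] (p : ℕ) (h : Keep F p F E) :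
    ResInjP p F E (algebraMap F E) := by
  have halg : alg = (algebraMap F E).toAlgebra := Algebra.algebra_ext _ _ fun _ => rfl
  have h' : @Keep F _ p F E _ _ _ (algebraMap F E).toAlgebra := halg ▸ h
  exact @resInj_aux F E _ _ (algebraMap F E).toAlgebra p h'
end GM

namespace GM
open Polynomial

theorem embeds {E : Type u} [Field E] (p : ℕ) (hp : p.Prime) {L R : Type u} [Field L] [Algebra E L] [Ring R] [Algebra E R]
    (hL : Module.finrank E L = p)
    (h : ∀ f : E[X], f.natDegree = p → Irreducible f → ∃ d : R, aeval d f = 0) : Nonempty (L →ₐ[E] R) := by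
  have hfd : FiniteDimensional E L := Module.finite_of_finrank_pos (by rw [hL]; exact hp.pos)
  obtain ⟨θ, hθ⟩ : ∃ θ : L, θ ∉ (⊥ : Subalgebra E L) := by
    by_contra! hcon
    have : (⊥ : Subalgebra E L) = ⊤ := by
      ext x; simp [hcon x]
    have h1 := Subalgebra.finrank_bot (F := E) (E := L)
    rw [this, subalgebra_top_finrank_eq_submodule_top_finrank, finrank_top, hL] at h1
    exact hp.one_lt.ne' h1
  have hint : IsIntegral E θ := Algebra.IsIntegral.isIntegral θ
  have hdeg : (minpoly E θ).natDegree = p := by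
    have hd := minpoly.degree_dvd (K := E) (x := θ) hint
    rw [hL] at hd
    rcases (Nat.dvd_prime hp).1 hd with h1 | h1
    · rw [minpoly.natDegree_eq_one_iff] at h1
      exact (hθ (Algebra.mem_bot.2 h1)).elim
    · exact h1
  have hirr := minpoly.irreducible hint
  obtain ⟨d, hd⟩ := h _ hdeg hirr
  let _ : Fact (Irreducible (minpoly E θ)) := ⟨hirr⟩
  let φ : AdjoinRoot (minpoly E θ) →ₐ[E] L := arLift (minpoly E θ) θ (minpoly.aeval E θ)
  have hinj : Function.Injective φ := φ.toRingHom.injective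
  let pb := AdjoinRoot.powerBasis (f := minpoly E θ) (minpoly.ne_zero hint)
  have hfr : Module.finrank E (AdjoinRoot (minpoly E θ)) = Module.finrank E L := by
    rw [pb.finrank, AdjoinRoot.powerBasis_dim, hdeg, hL]
  have : FiniteDimensional E (AdjoinRoot (minpoly E θ)) := pb.finite
  have hbij : Function.Bijective φ := 
    ⟨hinj, (LinearMap.injective_iff_surjective_of_finrank_eq_finrank (f := φ.toLinearMap) hfr).1 hinj⟩
  exact ⟨(arLift (minpoly E θ) d hd).comp (AlgEquiv.ofBijective φ hbij).symm.toAlgHom⟩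

theorem main (p : ℕ) (hp : p.Prime)
    (F : Type u) [Field F] (hchar : ringChar F ≠ p) {ι : Type u}
    (D : ι → Type u) [∀ i, DivisionRing (D i)] [∀ i, Algebra F (D i)]
    (hD : ∀ i, IsCentralDivisionOfDeg F (D i) p) :
    Nonempty (GenusMergingExtension p F D) := by
  have hpF : (p : F) ≠ 0 := by
    intro h
    have h1 := (ringChar.spec F p).1 h
    rcases (Nat.dvd_prime hp).1 h1 with h2 | h2
    · exact (CharP.ringChar_ne_one (R := F)) h2
    · exact hchar h2
  rcases finite_or_infinite F with hfin | hinf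
  · have hι : IsEmpty ι := by
      refine ⟨fun i => ?_⟩
      obtain ⟨h1, h2, h3⟩ := hD i
      have : Finite (D i) := Module.finite_of_finite F
      let _ : Field (D i) := littleWedderburn (D i)
      have hc : ∀ x y : D i, x * y = y * x := fun x y => mul_comm (G := D i) x y
      have h4 : (⊥ : Subalgebra F (D i)) = ⊤ := by
        rw [← Algebra.IsCentral.center_eq_bot F (D i)]
        ext x
        simp only [Subalgebra.mem_center_iff, Algebra.mem_top, iff_true]
        exact fun y => hc y x
      have h5 := Subalgebra.finrank_bot (F := F) (E := D i)
      rw [h4, subalgebra_top_finrank_eq_submodule_top_finrank, finrank_top, h3] at h5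
      have := hp.one_lt
      nlinarith
    exact ⟨{ E := F, resInj := resInj_of_keep p (fun C _ _ n _ h => h), sameMaxSubfields := fun i => hι.elim i }⟩
  · obtain ⟨E, _, _, hk, hr⟩ := big_step p hp hpF D hD
    refine ⟨{ E := E, resInj := resInj_of_keep p hk, sameMaxSubfields := fun i i' L _ _ hL => ?_ }⟩
    exact ⟨fun _ => embeds p hp hL (fun f hf hi => hr f hf hi i'), fun _ => embeds p hp hL (fun f hf hi => hr f hf hi i)⟩
end GM

/-- for a set `A = {D i}` of central division `F`-algebras of degree `p`
(char `F ≠ p`), there is a field extension `F_A/F` with `Br(F)[p] → Br(F_A)[p]` injective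
such that any two algebras of `A` acquire the same genus (the same maximal subfields)
over `F_A`. -/
theorem exists_genus_merging_extension (p : ℕ) (hp : p.Prime)
    (F : Type u) [Field F] (hchar : ringChar F ≠ p) {ι : Type u}
    (D : ι → Type u) [∀ i, DivisionRing (D i)] [∀ i, Algebra F (D i)]
    (hD : ∀ i, IsCentralDivisionOfDeg F (D i) p) :
    Nonempty (GenusMergingExtension p F D) := by
  exact GM.main p hp F hchar D hD
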